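/- arXiv:2112.04458 — 2 statements merged into one kernel-verified Lean document; each statement's English description precedes it below -/
import Mathlib

section
/- Let ρ be a quasi-periodic labelling and let G_ρ be the associated group. Then every quasimorphism on G_ρ is bounded: if φ : G_ρ → ℝ satisfies sup_{g,h ∈ G_ρ} |φ(gh) − φ(g) − φ(h)| < ∞, then φ is a bounded function. -/
/-! ### Letters, labellings and quasi-periodicity -/

/-- The four letters `a, b, a⁻¹, b⁻¹`. -/
inductive Letter : Type
  | a : Letter
  | b : Letter
  | A : Letter  -- `a⁻¹`
  | B : Letter  -- `b⁻¹`
  deriving DecidableEq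

/-- The formal inverse of a letter. -/
def Letter.inv : Letter → Letter
  | .a => .A
  | .A => .a
  | .b => .B
  | .B => .b

/-- We encode the set of half-integers `½ℤ` by `ℤ` via `m ↦ m / 2`; integer points
correspond to even indices and proper half-integer points to odd indices.
A labelling assigns `a^{±1}` to integer points and `b^{±1}` to half-integer points. -/
def IsLabelling (ρ : ℤ → Letter) : Prop :=
  ∀ m : ℤ, (Even m → ρ m = Letter.a ∨ ρ m = Letter.A) ∧
    (Odd m → ρ m = Letter.b ∨ ρ m = Letter.B)

/-- The word of the labelling `ρ` along the block `{k, k+1, …, k+n}` (in the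
half-integer encoding, the block of size `n+1` starting at `k/2`). -/
def blockWord (ρ : ℤ → Letter) (k : ℤ) (n : ℕ) : List Letter :=
  (List.range (n + 1)).map fun i => ρ (k + i)

/-- The formal inverse of a word: reverse the word and invert each letter. -/
def wordInv (w : List Letter) : List Letter :=
  (w.map Letter.inv).reverse

/-- A labelling is quasi-periodic if (1) every subword of the labelling appears as a
subword (string of consecutive letters) of every sufficiently large block, and (2) the
formal inverse of every subword of the labelling is again a subword of the labelling. -/
def IsQuasiPeriodic (ρ : ℤ → Letter) : Prop :=
  IsLabelling ρ ∧
    (∀ (k : ℤ) (n : ℕ), ∃ N : ℕ, ∀ (k' : ℤ) (n' : ℕ), N ≤ n' + 1 →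
      (blockWord ρ k n) <:+: (blockWord ρ k' n')) ∧
    (∀ (k : ℤ) (n : ℕ), ∃ k' : ℤ, blockWord ρ k' n = wordInv (blockWord ρ k n))

/-! ### Thompson's group `F` and the subgroup `H`

Orientation-preserving homeomorphisms of `[0,1]` are realised as order-automorphisms
of `ℝ` that are the identity outside `[0,1]`; orientation-preserving homeomorphisms of
the line are order-automorphisms of `ℝ`. -/

/-- A dyadic rational real number, i.e. an element of `ℤ[1/2]`. -/
def IsDyadic (x : ℝ) : Prop :=
  ∃ (a : ℤ) (b : ℕ), x = (a : ℝ) / 2 ^ b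

/-- Membership in Thompson's group `F`: the identity outside `[0,1]`, and on `[0,1]`
piecewise linear with breakpoints in `ℤ[1/2]` and slopes integer powers of `2`. -/
def InThompsonF (f : ℝ ≃o ℝ) : Prop :=
  (∀ x : ℝ, x ∉ Set.Icc (0 : ℝ) 1 → f x = x) ∧
    ∃ (m : ℕ) (x : Fin (m + 1) → ℝ), x 0 = 0 ∧ x (Fin.last m) = 1 ∧ StrictMono x ∧
      (∀ i, IsDyadic (x i)) ∧
      ∀ i : Fin m, ∃ (k : ℤ) (c : ℝ),
        ∀ t ∈ Set.Icc (x i.castSucc) (x i.succ), f t = 2 ^ k * t + c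

/-- Membership in the subgroup `H ≤ F` of elements whose slopes at `0` and `1`
coincide. -/
def InH (f : ℝ ≃o ℝ) : Prop :=
  InThompsonF f ∧
    ∃ (k : ℤ) (ε : ℝ), 0 < ε ∧ (∀ t ∈ Set.Icc (0 : ℝ) ε, f t = 2 ^ k * t) ∧
      ∀ t ∈ Set.Icc (1 - ε) (1 : ℝ), f t = 1 + 2 ^ k * (t - 1)

/-! ### The generators of `G_ρ` -/

/-- `ζ` is the homeomorphism of `ℝ` which on each `[n, n+1]` is the conjugate of `ν`
(a homeomorphism of `[0,1]`) by the orientation-preserving isometry `[n,n+1] → [0,1]`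
if `ρ(n + ½) = b`, and by the orientation-reversing isometry if `ρ(n + ½) = b⁻¹`.
(In the encoding of `½ℤ` by `ℤ`, the point `n + ½` has index `2n + 1`.) -/
def IsZeta (ρ : ℤ → Letter) (ν ζ : ℝ ≃o ℝ) : Prop :=
  ∀ n : ℤ, ∀ x ∈ Set.Icc (n : ℝ) (n + 1),
    (ρ (2 * n + 1) = Letter.b → ζ x = n + ν (x - n)) ∧
    (ρ (2 * n + 1) = Letter.B → ζ x = (n + 1) - ν ((n + 1) - x))

/-- `χ` is the homeomorphism of `ℝ` which on each `[n-½, n+½]` is the conjugate of `ν`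
by the orientation-preserving isometry `[n-½, n+½] → [0,1]` if `ρ(n) = a`, and by the
orientation-reversing isometry if `ρ(n) = a⁻¹`. -/
def IsChi (ρ : ℤ → Letter) (ν χ : ℝ ≃o ℝ) : Prop :=
  ∀ n : ℤ, ∀ x ∈ Set.Icc ((n : ℝ) - 1/2) ((n : ℝ) + 1/2),
    (ρ (2 * n) = Letter.a → χ x = ((n : ℝ) - 1/2) + ν (x - ((n : ℝ) - 1/2))) ∧
    (ρ (2 * n) = Letter.A → χ x = ((n : ℝ) + 1/2) - ν (((n : ℝ) + 1/2) - x))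

/-! ### Bounded cohomology in degree two -/

/-- A bounded 2-cocycle on `G` with trivial real coefficients. -/
def IsBounded2Cocycle {G : Type*} [Group G] (ω : G → G → ℝ) : Prop :=
  (∃ C : ℝ, ∀ g h : G, |ω g h| ≤ C) ∧
    ∀ g₁ g₂ g₃ : G, ω g₂ g₃ - ω (g₁ * g₂) g₃ + ω g₁ (g₂ * g₃) - ω g₁ g₂ = 0

/-- `ω` is the coboundary of a bounded real-valued function. -/
def IsCoboundaryOfBounded {G : Type*} [Group G] (ω : G → G → ℝ) : Prop :=
  ∃ φ : G → ℝ, (∃ C : ℝ, ∀ g : G, |φ g| ≤ C) ∧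
    ∀ g h : G, ω g h = φ h - φ (g * h) + φ g

/-- A group is 2-boundedly acyclic if `H²_b(G; ℝ) = 0`, i.e. every bounded 2-cocycle is
the coboundary of a bounded function. -/
def Is2BoundedlyAcyclic (G : Type*) [Group G] : Prop :=
  ∀ ω : G → G → ℝ, IsBounded2Cocycle ω → IsCoboundaryOfBounded ω

/-- A 2-cocycle is homogeneous if it vanishes on powers of a single element. -/
def IsHomogeneous {G : Type*} [Group G] (ω : G → G → ℝ) : Prop :=
  ∀ (g : G) (i j : ℤ), ω (g ^ i) (g ^ j) = 0

/-!
Cells are the intervals of length one centred at the half-integers, and a *copy* of a homeomorphism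
of a cell over a set `E` of indices acts on all cells of one parity with index in `E`, reflected
where the letter is an inverse. Commuting copies on adjacent cells with one another shows that
`G_ρ` contains the copies over `E` of a large perfect group as soon as membership in `E` only
depends on the word read, in the direction of the letter, within a bounded distance.

If `E` also has bounded gaps, the local group of such copies is perfect, and the cells of `E` can
be pushed by an element of `G_ρ` along each run of `E` towards its end, a direction being chosen by
the letter in the middle of the run. This push displaces the support of any element of the local
group off itself under all powers, so homogeneous quasimorphisms vanish on the local group.

A labelling which is uniformly recurrent and not periodic has markers: the indices at which a long
word around `0` recurs are far apart, yet have bounded gaps. Each element of `G_ρ` is a product of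
an element supported near the markers and one supported away from them, the complement of either
support being syndetic. A homogeneous quasimorphism vanishes on both factors, hence is bounded.
-/

/-! ### Dyadic numbers -/

namespace IsDyadic

variable {x y : ℝ}

lemma intCast (n : ℤ) : IsDyadic n := ⟨n, 0, by simp⟩

lemma zero : IsDyadic 0 := by simpa using intCast 0

lemma one : IsDyadic 1 := by simpa using intCast 1

lemma add (hx : IsDyadic x) (hy : IsDyadic y) : IsDyadic (x + y) := by
  obtain ⟨a, b, rfl⟩ := hx
  obtain ⟨c, d, rfl⟩ := hy
  refine ⟨a * 2 ^ d + c * 2 ^ b, b + d, ?_⟩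
  push_cast
  field_simp
  ring

lemma neg (hx : IsDyadic x) : IsDyadic (-x) := by
  obtain ⟨a, b, rfl⟩ := hx
  exact ⟨-a, b, by push_cast; ring⟩

lemma sub (hx : IsDyadic x) (hy : IsDyadic y) : IsDyadic (x - y) :=
  sub_eq_add_neg x y ▸ hx.add hy.neg

lemma mul (hx : IsDyadic x) (hy : IsDyadic y) : IsDyadic (x * y) := by
  obtain ⟨a, b, rfl⟩ := hx
  obtain ⟨c, d, rfl⟩ := hy
  refine ⟨a * c, b + d, ?_⟩
  push_cast
  field_simp
  ring

lemma two_zpow (k : ℤ) : IsDyadic (2 ^ k) := by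
  obtain ⟨n, rfl | rfl⟩ := k.eq_nat_or_neg
  · exact ⟨2 ^ n, 0, by simp⟩
  · exact ⟨1, n, by simp⟩

lemma div_two (hx : IsDyadic x) : IsDyadic (x / 2) := by
  simpa [div_eq_mul_inv] using hx.mul (two_zpow (-1))

lemma two_zpow_mul_iff (k : ℤ) : IsDyadic (2 ^ k * x) ↔ IsDyadic x := by
  refine ⟨fun h => ?_, (two_zpow k).mul⟩
  rw [← inv_mul_cancel_left₀ (zpow_ne_zero k two_ne_zero) x, ← zpow_neg]
  exact (two_zpow (-k)).mul h

lemma add_iff_right (hx : IsDyadic x) : IsDyadic (x + y) ↔ IsDyadic y :=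
  ⟨fun h => by simpa using h.sub hx, hx.add⟩

lemma sign_mul_iff (ε : ℤˣ) : IsDyadic (ε * x) ↔ IsDyadic x := by
  rcases Int.units_eq_one_or ε with rfl | rfl
  · simp
  · exact ⟨fun h => by simpa using h.neg, fun h => by simpa using h.neg⟩

lemma exists_between (h : x < y) : ∃ z, IsDyadic z ∧ x < z ∧ z < y := by
  obtain ⟨n, hn⟩ := pow_unbounded_of_one_lt (1 / (y - x)) (one_lt_two (α := ℝ))
  have hgap : 1 < (y - x) * 2 ^ n := by
    rw [div_lt_iff₀ (sub_pos.2 h)] at hn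
    linarith
  have hpow : (0 : ℝ) < 2 ^ n := by positivity
  refine ⟨(⌊x * 2 ^ n⌋ + 1 : ℤ) / 2 ^ n, ⟨_, n, rfl⟩, ?_, ?_⟩
  · rw [lt_div_iff₀ hpow]
    push_cast
    exact Int.lt_floor_add_one _
  · rw [div_lt_iff₀ hpow]
    push_cast
    linarith [Int.floor_le (x * 2 ^ n)]

end IsDyadic

namespace LabelledLine

/-! ### Homeomorphisms of the line -/

lemma sign_mul_self (ε : ℤˣ) : (ε : ℝ) * ε = 1 := by
  rcases Int.units_eq_one_or ε with rfl | rfl <;> simp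

lemma sign_mul_sign_mul (ε : ℤˣ) (x : ℝ) : (ε : ℝ) * (ε * x) = x := by
  rw [← mul_assoc, sign_mul_self, one_mul]

lemma abs_sign_mul (ε : ℤˣ) (x : ℝ) : |(ε : ℝ) * x| = |x| := by
  rcases Int.units_eq_one_or ε with rfl | rfl <;> simp

lemma sign_mul_sign_mul_int (ε : ℤˣ) (x : ℤ) : (ε : ℤ) * (ε * x) = x := by
  rcases Int.units_eq_one_or ε with rfl | rfl <;> simp

lemma abs_sign_mul_int (ε : ℤˣ) (x : ℤ) : |(ε : ℤ) * x| = |x| := by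
  rcases Int.units_eq_one_or ε with rfl | rfl <;> simp

lemma inv_apply_of_apply_eq {α : Type*} [Preorder α] {f : α ≃o α} {x y : α} (h : f x = y) :
    f⁻¹ y = x := by
  rw [← h, RelIso.inv_apply_self]

/-- The conjugate of a homeomorphism of the line by the isometry `x ↦ c + ε x`. -/
noncomputable def isomConj (c : ℝ) (ε : ℤˣ) : (ℝ ≃o ℝ) →* (ℝ ≃o ℝ) where
  toFun f := StrictMono.orderIsoOfRightInverse (fun x => c + ε * f (ε * (x - c)))
    (by
      intro x y h
      rcases Int.units_eq_one_or ε with rfl | rfl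
      · simpa using h
      · have := f.strictMono (sub_lt_sub_left h c)
        simp only [Units.val_neg, Units.val_one, Int.cast_neg, Int.cast_one, neg_one_mul, neg_sub]
        linarith)
    (fun x => c + ε * f⁻¹ (ε * (x - c)))
    (fun x => by simp [sign_mul_sign_mul])
  map_one' := by
    ext x
    simp [sign_mul_sign_mul]
  map_mul' f g := by
    ext x
    change _ = c + ε * f (ε * (c + ε * g (ε * (x - c)) - c))
    rw [add_sub_cancel_left, sign_mul_sign_mul]
    rfl

lemma isomConj_apply (c : ℝ) (ε : ℤˣ) (f : ℝ ≃o ℝ) (x : ℝ) :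
    isomConj c ε f x = c + ε * f (ε * (x - c)) := rfl

lemma isomConj_isomConj (c d : ℝ) (ε η : ℤˣ) (f : ℝ ≃o ℝ) :
    isomConj c ε (isomConj d η f) = isomConj (c + ε * d) (ε * η) f := by
  ext x
  have h : (ε : ℝ) * (x - c) - d = ε * (x - (c + ε * d)) := by
    linear_combination d * sign_mul_self ε
  simp only [isomConj_apply, h, Units.val_mul, Int.cast_mul]
  rw [mul_left_comm (η : ℝ), ← mul_assoc (ε : ℝ) η]
  ring

lemma isomConj_zero_one (f : ℝ ≃o ℝ) : isomConj 0 1 f = f := by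
  ext x
  simp [isomConj_apply]

/-! ### Elementary maps -/

/-- The homeomorphism which is the identity up to `p` and has slope `2 ^ n` beyond `p`. -/
noncomputable def elementary (p : ℝ) (n : ℤ) : ℝ ≃o ℝ :=
  StrictMono.orderIsoOfRightInverse (fun x => if x ≤ p then x else p + 2 ^ n * (x - p))
    (by
      intro x y h
      have hpow : (0 : ℝ) < 2 ^ n := by positivity
      dsimp only
      split_ifs with hx hy hy
      · exact h
      · linarith [mul_pos hpow (sub_pos.2 (not_le.1 hy))]
      · linarith
      · linarith [mul_lt_mul_of_pos_left (sub_lt_sub_right h p) hpow])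
    (fun x => if x ≤ p then x else p + 2 ^ (-n) * (x - p))
    (by
      intro x
      dsimp only
      by_cases hx : x ≤ p
      · simp [hx]
      · have : 0 < (2 : ℝ) ^ (-n) * (x - p) := mul_pos (by positivity) (sub_pos.2 (not_le.1 hx))
        rw [if_neg hx, if_neg (by linarith), add_sub_cancel_left, zpow_neg,
          mul_inv_cancel_left₀ (zpow_ne_zero n two_ne_zero), add_sub_cancel])

section Elementary

variable {p x : ℝ}

lemma elementary_of_le (n : ℤ) (h : x ≤ p) : elementary p n x = x := if_pos h

lemma elementary_of_ge (n : ℤ) (h : p ≤ x) : elementary p n x = p + 2 ^ n * (x - p) := by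
  rcases h.eq_or_lt with rfl | h
  · simp [elementary_of_le n le_rfl]
  · exact if_neg h.not_ge

lemma elementary_mul (p : ℝ) (m n : ℤ) :
    elementary p m * elementary p n = elementary p (m + n) := by
  ext x
  rw [RelIso.mul_apply]
  rcases le_total x p with h | h
  · rw [elementary_of_le n h, elementary_of_le m h, elementary_of_le _ h]
  · have : 0 ≤ (2 : ℝ) ^ n * (x - p) := mul_nonneg (by positivity) (sub_nonneg.2 h)
    rw [elementary_of_ge n h, elementary_of_ge m (by linarith), elementary_of_ge _ h,
      zpow_add₀ two_ne_zero]
    ring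

lemma elementary_zero (p : ℝ) : elementary p 0 = 1 := by
  simpa using elementary_mul p 0 0

lemma elementary_inv (p : ℝ) (n : ℤ) : (elementary p n)⁻¹ = elementary p (-n) := by
  rw [inv_eq_iff_mul_eq_one, elementary_mul, add_neg_cancel, elementary_zero]

lemma elementary_eq_zpow (p : ℝ) (n : ℤ) : elementary p n = elementary p 1 ^ n := by
  induction n using Int.induction_on with
  | zero => simp [elementary_zero]
  | succ i ih => rw [zpow_add_one, ← ih, elementary_mul]
  | pred i ih => rw [zpow_sub_one, ← ih, elementary_inv, elementary_mul, sub_eq_add_neg]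

end Elementary

/-! ### The dyadic piecewise linear group -/

/-- No point of `S` lies strictly between two points of `J`. Using arbitrary sets `J` instead of
intervals spares an enumeration of the breakpoints. -/
def Unseparated (S : Finset ℝ) (J : Set ℝ) : Prop :=
  ∀ x ∈ J, ∀ y ∈ J, ∀ z ∈ S, x < z → ¬ z < y

/-- On `J` the homeomorphism `f` is affine, with slope a power of `2`. -/
def IsAffineOn (f : ℝ ≃o ℝ) (J : Set ℝ) : Prop :=
  ∃ (k : ℤ) (c : ℝ), ∀ t ∈ J, f t = 2 ^ k * t + c

/-- `f` is piecewise affine, with slopes powers of `2` and breakpoints in `S`. -/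
def IsPiecewiseAffine (f : ℝ ≃o ℝ) (S : Finset ℝ) : Prop :=
  ∀ J, Unseparated S J → IsAffineOn f J

lemma IsPiecewiseAffine.mul {f g : ℝ ≃o ℝ} {S T : Finset ℝ} (hf : IsPiecewiseAffine f S)
    (hg : IsPiecewiseAffine g T) : IsPiecewiseAffine (f * g) (T ∪ S.image ⇑g⁻¹) := by
  intro J hJ
  obtain ⟨k, c, hgJ⟩ := hg J fun x hx y hy z hz =>
    hJ x hx y hy z (Finset.mem_union_left _ hz)
  obtain ⟨l, d, hfJ⟩ := hf (g '' J) <| by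
    rintro _ ⟨x, hx, rfl⟩ _ ⟨y, hy, rfl⟩ z hz hxz hzy
    refine hJ x hx y hy (g⁻¹ z) (Finset.mem_union_right _ (Finset.mem_image_of_mem _ hz)) ?_ ?_
    all_goals rwa [← g.lt_iff_lt, RelIso.apply_inv_self]
  refine ⟨l + k, 2 ^ l * c + d, fun t ht => ?_⟩
  rw [RelIso.mul_apply, hfJ _ ⟨t, ht, rfl⟩, hgJ t ht, zpow_add₀ two_ne_zero]
  ring

lemma IsPiecewiseAffine.inv {f : ℝ ≃o ℝ} {S : Finset ℝ} (hf : IsPiecewiseAffine f S) :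
    IsPiecewiseAffine f⁻¹ (S.image f) := by
  intro J hJ
  obtain ⟨k, c, hfJ⟩ := hf (⇑f⁻¹ '' J) <| by
    rintro _ ⟨x, hx, rfl⟩ _ ⟨y, hy, rfl⟩ z hz hxz hzy
    refine hJ x hx y hy (f z) (Finset.mem_image_of_mem _ hz) ?_ ?_
    · simpa using f.lt_iff_lt.2 hxz
    · simpa using f.lt_iff_lt.2 hzy
  refine ⟨-k, -(2 ^ (-k) * c), fun t ht => ?_⟩
  have ht' := hfJ _ ⟨t, ht, rfl⟩
  rw [RelIso.apply_inv_self] at ht'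
  conv_rhs => rw [ht']
  rw [mul_add, zpow_neg, inv_mul_cancel_left₀ (zpow_ne_zero k two_ne_zero)]
  ring

lemma IsPiecewiseAffine.isomConj {f : ℝ ≃o ℝ} {S : Finset ℝ} (hf : IsPiecewiseAffine f S)
    (c : ℝ) (ε : ℤˣ) :
    IsPiecewiseAffine (isomConj c ε f) (S.image fun z => c + ε * z) := by
  intro J hJ
  obtain ⟨k, d, hfJ⟩ := hf ((fun x => (ε : ℝ) * (x - c)) '' J) <| by
    rintro _ ⟨x, hx, rfl⟩ _ ⟨y, hy, rfl⟩ z hz hxz hzy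
    have hz' : c + ε * z ∈ S.image fun z => c + ε * z := Finset.mem_image_of_mem _ hz
    rcases Int.units_eq_one_or ε with rfl | rfl <;>
      simp only [Units.val_one, Units.val_neg, Int.cast_one, Int.cast_neg] at hxz hzy hz' hJ
    · exact hJ x hx y hy (c + 1 * z) hz' (by linarith) (by linarith)
    · exact hJ y hy x hx (c + -1 * z) hz' (by linarith) (by linarith)
  refine ⟨k, c + ε * d - 2 ^ k * c, fun t ht => ?_⟩
  rw [isomConj_apply, hfJ _ ⟨t, ht, rfl⟩]
  linear_combination 2 ^ k * (t - c) * sign_mul_self ε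

lemma elementary_isPiecewiseAffine (p : ℝ) (n : ℤ) : IsPiecewiseAffine (elementary p n) {p} := by
  intro J hJ
  by_cases h : ∃ x ∈ J, x < p
  · obtain ⟨x, hx, hxp⟩ := h
    refine ⟨0, 0, fun t ht => ?_⟩
    rw [elementary_of_le n (not_lt.1 (hJ x hx t ht p (by simp) hxp))]
    simp
  · push Not at h
    refine ⟨n, p - 2 ^ n * p, fun t ht => ?_⟩
    rw [elementary_of_ge n (h t ht)]
    ring

/-- The group of piecewise linear homeomorphisms of the line with finitely many breakpoints, all
dyadic, with slopes powers of `2`, and which map the dyadic numbers onto themselves. -/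
def dyadicPL : Subgroup (ℝ ≃o ℝ) where
  carrier := {f | (∀ x, IsDyadic (f x) ↔ IsDyadic x) ∧
    ∃ S : Finset ℝ, (∀ z ∈ S, IsDyadic z) ∧ IsPiecewiseAffine f S}
  one_mem' := ⟨fun _ => Iff.rfl, ∅, by simp, fun J _ => ⟨0, 0, by simp⟩⟩
  mul_mem' := by
    rintro f g ⟨hf, S, hS, hfS⟩ ⟨hg, T, hT, hgT⟩
    refine ⟨fun x => (hf _).trans (hg x), _, fun z hz => ?_, hfS.mul hgT⟩
    rcases Finset.mem_union.1 hz with hz | hz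
    · exact hT z hz
    · obtain ⟨y, hy, rfl⟩ := Finset.mem_image.1 hz
      rw [← hg, RelIso.apply_inv_self]
      exact hS y hy
  inv_mem' := by
    rintro f ⟨hf, S, hS, hfS⟩
    refine ⟨fun x => by rw [← hf, RelIso.apply_inv_self], _, ?_, hfS.inv⟩
    simpa [hf] using hS

lemma isomConj_mem_dyadicPL {f : ℝ ≃o ℝ} {c : ℝ} (hc : IsDyadic c) (ε : ℤˣ) (hf : f ∈ dyadicPL) :
    isomConj c ε f ∈ dyadicPL := by
  obtain ⟨hf, S, hS, hfS⟩ := hf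
  refine ⟨fun x => ?_, _, ?_, hfS.isomConj c ε⟩
  · rw [isomConj_apply, hc.add_iff_right, IsDyadic.sign_mul_iff, hf, IsDyadic.sign_mul_iff,
      ← hc.add_iff_right, add_sub_cancel]
  · simpa [hc.add_iff_right, IsDyadic.sign_mul_iff] using hS

lemma elementary_mem_dyadicPL {p : ℝ} (hp : IsDyadic p) (n : ℤ) : elementary p n ∈ dyadicPL := by
  refine ⟨fun x => ?_, {p}, by simpa using hp, elementary_isPiecewiseAffine p n⟩
  rcases le_total x p with h | h
  · rw [elementary_of_le n h]
  · rw [elementary_of_ge n h, hp.add_iff_right, IsDyadic.two_zpow_mul_iff, ← hp.add_iff_right,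
      add_sub_cancel]

lemma exists_affine_atTop {f : ℝ ≃o ℝ} (hf : f ∈ dyadicPL) :
    ∃ (k : ℤ) (c M : ℝ), ∀ x ≥ M, f x = 2 ^ k * x + c := by
  obtain ⟨_, S, -, hfS⟩ := hf
  obtain ⟨M, hM⟩ := S.bddAbove
  obtain ⟨k, c, h⟩ := hfS (Set.Ici M) fun x hx y _ z hz hxz _ =>
    hxz.not_ge ((hM hz).trans hx)
  exact ⟨k, c, M, h⟩

/-- The elementary maps with a dyadic breakpoint. -/
def dyadicElementary : Set (ℝ ≃o ℝ) := {g | ∃ p n, IsDyadic p ∧ g = elementary p n}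

/-- A suitable elementary map at the last breakpoint removes that breakpoint. -/
lemma IsPiecewiseAffine.exists_mul_elementary {f : ℝ ≃o ℝ} {S : Finset ℝ} {p : ℝ}
    (hf : IsPiecewiseAffine f (insert p S)) (hp : ∀ z ∈ S, z < p) :
    ∃ n, IsPiecewiseAffine (f * elementary p n) S := by
  obtain ⟨b, cb, hb⟩ := hf (Set.Ici p) fun x hx y _ z hz hxz _ => by
    rcases Finset.mem_insert.1 hz with rfl | hz
    · exact hxz.not_ge hx
    · exact (hp z hz).not_ge (le_trans hx hxz.le)
  obtain ⟨a, ca, ha⟩ := hf ({t | ∀ z ∈ S, z ≤ t} ∩ Set.Iic p) <| by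
    rintro x ⟨hx, -⟩ y ⟨-, hy⟩ z hz hxz hzy
    rcases Finset.mem_insert.1 hz with rfl | hz
    · exact hzy.not_ge hy
    · exact hxz.not_ge (hx z hz)
  have hmatch : 2 ^ b * p + cb = 2 ^ a * p + ca := by
    rw [← hb p Set.self_mem_Ici, ← ha p ⟨fun z hz => (hp z hz).le, Set.self_mem_Iic⟩]
  have hslope : (2 : ℝ) ^ b * 2 ^ (a - b) = 2 ^ a := by
    rw [← zpow_add₀ two_ne_zero, add_sub_cancel]
  have hlast : ∀ t, (∀ z ∈ S, z ≤ t) → (f * elementary p (a - b)) t = 2 ^ a * t + ca := by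
    intro t ht
    rw [RelIso.mul_apply]
    rcases le_total t p with h | h
    · rw [elementary_of_le _ h, ha t ⟨ht, h⟩]
    · have : 0 ≤ (2 : ℝ) ^ (a - b) * (t - p) := mul_nonneg (by positivity) (sub_nonneg.2 h)
      rw [elementary_of_ge _ h, hb _ (by simpa using this)]
      linear_combination hmatch + (t - p) * hslope
  refine ⟨a - b, fun J hJ => ?_⟩
  by_cases hJS : ∀ t ∈ J, ∀ z ∈ S, z ≤ t
  · exact ⟨a, ca, fun t ht => hlast t (hJS t ht)⟩
  · push Not at hJS
    obtain ⟨t, ht, z, hz, htz⟩ := hJS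
    have hJp : ∀ y ∈ J, y < p := fun y hy => (not_lt.1 (hJ t ht y hy z hz htz)).trans_lt (hp z hz)
    obtain ⟨k, c, h⟩ := hf J fun x hx y hy w hw hxw hwy => by
      rcases Finset.mem_insert.1 hw with rfl | hw
      · exact hwy.not_gt (hJp y hy)
      · exact hJ x hx y hy w hw hxw hwy
    refine ⟨k, c, fun y hy => ?_⟩
    rw [RelIso.mul_apply, elementary_of_le _ (hJp y hy).le, h y hy]

lemma eq_one_of_isPiecewiseAffine_empty {f : ℝ ≃o ℝ} (hf : IsPiecewiseAffine f ∅) {M : ℝ}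
    (hM : ∀ x ≤ M, f x = x) : f = 1 := by
  obtain ⟨k, c, h⟩ := hf Set.univ fun _ _ _ _ _ hz => absurd hz (Finset.notMem_empty _)
  have h₁ := (hM M le_rfl).symm.trans (h M trivial)
  have h₂ := (hM (M - 1) (by linarith)).symm.trans (h (M - 1) trivial)
  have hk : (2 : ℝ) ^ k = 1 := by linarith
  rw [hk] at h₁
  ext x
  rw [h x trivial, hk, RelIso.one_apply]
  linarith

lemma mem_closure_dyadicElementary {f : ℝ ≃o ℝ} (hf : f ∈ dyadicPL)
    (hid : ∃ M, ∀ x ≤ M, f x = x) : f ∈ Subgroup.closure dyadicElementary := by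
  obtain ⟨-, S, hS, hfS⟩ := hf
  induction S using Finset.induction_on_max generalizing f with
  | empty =>
    obtain ⟨M, hM⟩ := hid
    rw [eq_one_of_isPiecewiseAffine_empty hfS hM]
    exact one_mem _
  | insert p S hp ih =>
    obtain ⟨M, hM⟩ := hid
    obtain ⟨n, hn⟩ := hfS.exists_mul_elementary hp
    have hpn : elementary p n ∈ Subgroup.closure dyadicElementary :=
      Subgroup.subset_closure ⟨p, n, hS p (Finset.mem_insert_self _ _), rfl⟩
    refine (Subgroup.mul_mem_cancel_right _ hpn).1
      (ih ⟨min M p, fun x hx => ?_⟩ (fun z hz => hS z (Finset.mem_insert_of_mem hz)) hn)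
    rw [RelIso.mul_apply, elementary_of_le _ (hx.trans (min_le_right _ _)),
      hM _ (hx.trans (min_le_left _ _))]

/-! ### Comparison with Thompson's group -/

lemma exists_strictMono_enumeration {α : Type*} [LinearOrder α] {T : Finset α} {a b : α}
    (ha : a ∈ T) (hb : b ∈ T) (hT : ∀ z ∈ T, a ≤ z ∧ z ≤ b) :
    ∃ (m : ℕ) (x : Fin (m + 1) → α),
      x 0 = a ∧ x (Fin.last m) = b ∧ StrictMono x ∧ Set.range x = T := by
  have hcard : T.card = T.card - 1 + 1 := (Nat.sub_add_cancel (Finset.card_pos.2 ⟨a, ha⟩)).symm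
  have hrange := Finset.range_orderEmbOfFin T hcard
  have hmem := Finset.orderEmbOfFin_mem T hcard
  obtain ⟨i, hi⟩ : a ∈ Set.range (T.orderEmbOfFin hcard) := hrange ▸ ha
  obtain ⟨j, hj⟩ : b ∈ Set.range (T.orderEmbOfFin hcard) := hrange ▸ hb
  refine ⟨T.card - 1, T.orderEmbOfFin hcard, le_antisymm ?_ (hT _ (hmem _)).1,
    le_antisymm (hT _ (hmem _)).2 ?_, (T.orderEmbOfFin hcard).strictMono, hrange⟩
  · rw [← hi]
    exact (T.orderEmbOfFin hcard).monotone (Fin.zero_le _)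
  · rw [← hj]
    exact (T.orderEmbOfFin hcard).monotone (Fin.le_last _)

lemma inThompsonF_of_mem_dyadicPL {f : ℝ ≃o ℝ} (hf : f ∈ dyadicPL)
    (h : ∀ x, x ∉ Set.Icc (0 : ℝ) 1 → f x = x) : InThompsonF f := by
  obtain ⟨-, S, hS, hfS⟩ := hf
  obtain ⟨m, x, hx₀, hx₁, hmono, hrange⟩ := exists_strictMono_enumeration (a := (0 : ℝ)) (b := 1)
    (T := insert 0 (insert 1 (S.filter fun z => 0 ≤ z ∧ z ≤ 1)))
    (by simp) (by simp) (by simp)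
  have hmem : ∀ z, z ∈ Set.range x ↔ z = 0 ∨ z = 1 ∨ z ∈ S ∧ 0 ≤ z ∧ z ≤ 1 := by simp [hrange]
  have hbound : ∀ i, 0 ≤ x i ∧ x i ≤ 1 := fun i =>
    ⟨hx₀ ▸ hmono.monotone (Fin.zero_le _), hx₁ ▸ hmono.monotone (Fin.le_last _)⟩
  refine ⟨h, m, x, hx₀, hx₁, hmono, fun i => ?_, fun i => hfS _ ?_⟩
  · rcases (hmem _).1 ⟨i, rfl⟩ with h | h | ⟨h, -⟩
    · exact h ▸ IsDyadic.zero
    · exact h ▸ IsDyadic.one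
    · exact hS _ h
  · rintro u ⟨hu, -⟩ v ⟨-, hv⟩ z hz huz hzv
    obtain ⟨j, rfl⟩ := (hmem z).2 <| .inr <| .inr
      ⟨hz, (hbound _).1.trans (hu.trans huz.le), hzv.le.trans (hv.trans (hbound _).2)⟩
    have hij := hmono.lt_iff_lt.1 (hu.trans_lt huz)
    have hji := hmono.lt_iff_lt.1 (hzv.trans_le hv)
    exact (Fin.castSucc_lt_iff_succ_le.1 hij).not_gt hji

lemma apply_eq_of_le_endpoint {f : ℝ ≃o ℝ} {a : ℝ} (h : ∀ x < a, f x = x) : f a = a := by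
  refine le_antisymm ?_ ?_
  · by_contra! hlt
    have hinv : f⁻¹ a < a := by rwa [← f.lt_iff_lt, RelIso.apply_inv_self]
    have := h _ hinv
    rw [RelIso.apply_inv_self] at this
    exact hinv.ne this.symm
  · by_contra! hlt
    exact hlt.ne (f.injective (h _ hlt))

lemma apply_eq_of_ge_endpoint {f : ℝ ≃o ℝ} {a : ℝ} (h : ∀ x > a, f x = x) : f a = a := by
  refine le_antisymm ?_ ?_
  · by_contra! hlt
    exact hlt.ne' (f.injective (h _ hlt))
  · by_contra! hlt
    have hinv : a < f⁻¹ a := by rwa [← f.lt_iff_lt, RelIso.apply_inv_self]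
    have := h _ hinv
    rw [RelIso.apply_inv_self] at this
    exact hinv.ne this

lemma exists_mem_dyadicPL_slope {g : ℝ ≃o ℝ} (hg : g ∈ dyadicPL) {p : ℝ} (hp : IsDyadic p)
    {k : ℤ} (hslope : ∀ t ≥ p, g t = g p + 2 ^ k * (t - p)) (l : ℤ) :
    ∃ g' ∈ dyadicPL, (∀ t ≤ p, g' t = g t) ∧ ∀ t ≥ p, g' t = g p + 2 ^ l * (t - p) := by
  refine ⟨g * elementary p (l - k), mul_mem hg (elementary_mem_dyadicPL hp _),
    fun t ht => by rw [RelIso.mul_apply, elementary_of_le _ ht], fun t ht => ?_⟩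
  have : 0 ≤ (2 : ℝ) ^ (l - k) * (t - p) := mul_nonneg (by positivity) (sub_nonneg.2 ht)
  rw [RelIso.mul_apply, elementary_of_ge _ ht, hslope _ (by simpa using this),
    add_sub_cancel_left, ← mul_assoc, ← zpow_add₀ two_ne_zero, add_sub_cancel]

lemma mem_dyadicPL_of_inThompsonF {f : ℝ ≃o ℝ} (hf : InThompsonF f) : f ∈ dyadicPL := by
  obtain ⟨hid, m, x, hx₀, hx₁, hmono, hdy, haff⟩ := hf
  have hlt : ∀ t < 0, f t = t := fun t ht => hid t fun h => ht.not_ge h.1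
  have hgt : ∀ t > 1, f t = t := fun t ht => hid t fun h => ht.not_ge h.2
  have hagree : ∀ i, ∃ g ∈ dyadicPL, (∀ t ≤ x i, g t = f t) ∧
      ∃ k : ℤ, ∀ t ≥ x i, g t = g (x i) + 2 ^ k * (t - x i) := by
    intro i
    induction i using Fin.induction with
    | zero =>
      refine ⟨1, one_mem _, fun t ht => ?_, 0, by simp⟩
      rw [hx₀] at ht
      rcases ht.eq_or_lt with rfl | ht
      · exact (apply_eq_of_le_endpoint hlt).symm
      · exact (hlt t ht).symm
    | succ i ih =>
      obtain ⟨g, hg, hgf, k, hk⟩ := ih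
      obtain ⟨l, c, hl⟩ := haff i
      obtain ⟨g', hg', hle, hge⟩ := exists_mem_dyadicPL_slope hg (hdy _) hk l
      have hi : x i.castSucc < x i.succ := hmono Fin.castSucc_lt_succ
      refine ⟨g', hg', fun t ht => ?_, l, fun t ht => ?_⟩
      · rcases le_total t (x i.castSucc) with h | h
        · rw [hle t h, hgf t h]
        · rw [hge t h, hgf _ le_rfl, hl t ⟨h, ht⟩, hl _ ⟨le_rfl, hi.le⟩]
          ring
      · rw [hge t (hi.le.trans ht), hge _ hi.le]
        ring
  obtain ⟨g, hg, hgf, k, hk⟩ := hagree (Fin.last m)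
  obtain ⟨g', hg', hle, hge⟩ := exists_mem_dyadicPL_slope hg (hdy _) hk 0
  rw [hx₁] at hgf hle hge
  convert hg'
  ext t
  rcases le_or_gt t 1 with h | h
  · rw [hle t h, hgf t h]
  · rw [hge t h.le, hgf 1 le_rfl, apply_eq_of_ge_endpoint hgt, hgt t h]
    simp

/-! ### Perfectness of the compactly supported group -/

section GroupTheory

open scoped commutatorElement

variable {G : Type*} [Group G]

lemma exists_commutatorElement_of_mem_commutator {T : Subgroup G} [T.Normal]
    (hT : ∀ t ∈ T, ∀ u ∈ T, Commute t u) {s : G} (hG : ∀ g, ∃ t ∈ T, ∃ k : ℤ, g = t * s ^ k)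
    {g : G} (hg : g ∈ commutator G) : ∃ t ∈ T, g = ⁅s, t⁆ := by
  have hcomm : ∀ t ∈ T, ⁅s, t⁆ ∈ T := fun t ht =>
    mul_mem (Subgroup.Normal.conj_mem inferInstance t ht s) (inv_mem ht)
  have hmul : ∀ t ∈ T, ∀ u ∈ T, ⁅s, t * u⁆ = ⁅s, t⁆ * ⁅s, u⁆ := fun t ht u hu => by
    have := (hT _ (inv_mem ht) _ (hcomm u hu)).eq
    calc ⁅s, t * u⁆ = s * t * s⁻¹ * (⁅s, u⁆ * t⁻¹) := by simp only [commutatorElement_def]; group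
      _ = ⁅s, t⁆ * ⁅s, u⁆ := by rw [← this, commutatorElement_def s t, mul_assoc _ t⁻¹]
  let R : Subgroup G := (MonoidHom.mk' (fun t : T => ⁅s, (t : G)⁆)
    fun t u => hmul t t.2 u u.2).range
  have hR : ∀ t ∈ T, ⁅s, t⁆ ∈ R := fun t ht => ⟨⟨t, ht⟩, rfl⟩
  have hRnormal : R.Normal := by
    refine ⟨?_⟩
    rintro _ ⟨⟨t, ht⟩, rfl⟩ g
    obtain ⟨u, hu, k, rfl⟩ := hG g
    have hconj := Subgroup.Normal.conj_mem (inferInstanceAs T.Normal) t ht (s ^ k)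
    have hu' := (hT u hu _ (hcomm _ hconj)).eq
    convert hR _ hconj using 1
    calc u * s ^ k * ⁅s, t⁆ * (u * s ^ k)⁻¹ = u * ⁅s, s ^ k * t * (s ^ k)⁻¹⁆ * u⁻¹ := by
          simp only [commutatorElement_def]; group
      _ = ⁅s, s ^ k * t * (s ^ k)⁻¹⁆ := by rw [hu', mul_inv_cancel_right]
  have hle : commutator G ≤ R := by
    refine Subgroup.commutator_le.2 fun g _ h _ => ?_
    obtain ⟨t, ht, k, rfl⟩ := hG g
    obtain ⟨u, hu, l, rfl⟩ := hG h
    have hs : ∀ t ∈ T, Commute (s : G ⧸ R) t := fun t ht => by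
      rw [← commutatorElement_eq_one_iff_commute]
      exact (QuotientGroup.eq_one_iff _).2 (hR t ht)
    rw [← QuotientGroup.eq_one_iff, ← QuotientGroup.mk'_apply, map_commutatorElement,
      commutatorElement_eq_one_iff_commute, map_mul, map_mul, map_zpow, map_zpow]
    have htu := (hT t ht u hu).map (QuotientGroup.mk' R)
    exact (htu.mul_right ((hs t ht).symm.zpow_right l)).mul_left
      (((hs u hu).zpow_left k).mul_right ((Commute.refl _).zpow_zpow k l))
  obtain ⟨⟨t, ht⟩, rfl⟩ := hle hg
  exact ⟨t, ht, rfl⟩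

lemma commute_mk_commutator {L : Subgroup G} [L.Normal]
    (hconj : ∀ g, ∀ l ∈ L, ∃ b ∈ L, g * l * g⁻¹ = b * l * b⁻¹) (g : G) {l : G} (hl : l ∈ L) :
    Commute (g : G ⧸ ⁅L, L⁆) l := by
  obtain ⟨b, hb, hgb⟩ := hconj g l hl
  rw [← commutatorElement_eq_one_iff_commute]
  refine (QuotientGroup.eq_one_iff ⁅g, l⁆).2 ?_
  rw [commutatorElement_def, hgb, ← commutatorElement_def]
  exact Subgroup.commutator_mem_commutator hb hl

/-- The idea is that `L / ⁅L, L⁆` is central in `G / ⁅L, L⁆`, so that `T / ⁅L, L⁆` is abelian, being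
locally cyclic modulo a central subgroup. Then every element of `L` is modulo `⁅L, L⁆` a single
commutator `⁅s, t⁆` with `t ∈ T`, and `t` is in `L`, hence central. -/
lemma le_commutator_of_locally_cyclic {L T : Subgroup G} [L.Normal] [T.Normal] {s : G}
    (hconj : ∀ g, ∀ l ∈ L, ∃ b ∈ L, g * l * g⁻¹ = b * l * b⁻¹)
    (hT : ∀ t ∈ T, ∀ u ∈ T, ∃ v, ∃ m n : ℤ, t * v ^ m ∈ L ∧ u * v ^ n ∈ L)
    (hG : ∀ g, ∃ t ∈ T, ∃ k : ℤ, g = t * s ^ k) (hLG : L ≤ commutator G)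
    (hs : ∀ t ∈ T, ⁅s, t⁆ ∈ L → t ∈ L) : L ≤ ⁅L, L⁆ := by
  let π := QuotientGroup.mk' ⁅L, L⁆
  have hπ : Function.Surjective π := QuotientGroup.mk'_surjective _
  have hcentral : ∀ g, ∀ l ∈ L, Commute (π g) (π l) := fun g l hl =>
    commute_mk_commutator hconj g hl
  have hcomm : ∀ t ∈ T.map π, ∀ u ∈ T.map π, Commute t u := by
    rintro _ ⟨t, ht, rfl⟩ _ ⟨u, hu, rfl⟩
    obtain ⟨v, m, n, htv, huv⟩ := hT t ht u hu
    rw [← mul_inv_cancel_right t (v ^ m), ← mul_inv_cancel_right u (v ^ n), map_mul, map_mul,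
      ← zpow_neg, ← zpow_neg, map_zpow, map_zpow]
    have hv := Commute.refl (π v)
    exact ((hcentral _ _ huv).mul_right ((hcentral _ _ htv).symm.zpow_right _)).mul_left
      (((hcentral _ _ huv).zpow_left _).mul_right (hv.zpow_zpow _ _))
  have := Subgroup.Normal.map ‹T.Normal› π hπ
  intro l hl
  have hmem : π l ∈ commutator (G ⧸ ⁅L, L⁆) := by
    rw [commutator_def, ← Subgroup.map_top_of_surjective π hπ, ← Subgroup.map_commutator]
    exact Subgroup.mem_map_of_mem π (hLG hl)
  obtain ⟨_, ⟨t, ht, rfl⟩, hlt⟩ := exists_commutatorElement_of_mem_commutator hcomm (s := π s)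
    (fun g => by
      obtain ⟨g, rfl⟩ := hπ g
      obtain ⟨t, ht, k, rfl⟩ := hG g
      exact ⟨π t, Subgroup.mem_map_of_mem π ht, k, by rw [map_mul, map_zpow]⟩) hmem
  rw [← map_commutatorElement] at hlt
  have htL : t ∈ L := hs t ht <| by
    have := Subgroup.commutator_le_left L L (QuotientGroup.eq.1 hlt)
    simpa using mul_mem hl this
  rw [map_commutatorElement,
    commutatorElement_eq_one_iff_commute.2 (hcentral s t htL)] at hlt
  exact (QuotientGroup.eq_one_iff l).1 hlt

end GroupTheory

section Perfect

open Filter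
open scoped commutatorElement

/-- The order automorphisms which are the identity eventually along the filter `l`. -/
def eventuallyId {α : Type*} [Preorder α] (l : Filter α) : Subgroup (α ≃o α) where
  carrier := {f | ∀ᶠ x in l, f x = x}
  one_mem' := .of_forall fun _ => rfl
  mul_mem' := by
    intro f g hf hg
    filter_upwards [hf, hg] with x hfx hgx
    rw [RelIso.mul_apply, hgx, hfx]
  inv_mem' := by
    intro f hf
    filter_upwards [hf] with x hfx
    exact inv_apply_of_apply_eq hfx

/-- The elements of `dyadicPL` which are the identity near `-∞`. -/
def leftTrivialPL : Subgroup (ℝ ≃o ℝ) := dyadicPL ⊓ eventuallyId atBot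

/-- The elements of `dyadicPL` with bounded support. -/
def compactPL : Subgroup (ℝ ≃o ℝ) := leftTrivialPL ⊓ eventuallyId atTop

/-- Near `+∞` the homeomorphism `f` is the affine map `x ↦ 2 ^ k * x + c`. -/
def HasGerm (f : ℝ ≃o ℝ) (k : ℤ) (c : ℝ) : Prop := ∀ᶠ x in atTop, f x = 2 ^ k * x + c

namespace HasGerm

variable {f g : ℝ ≃o ℝ} {k l : ℤ} {c d : ℝ}

lemma one : HasGerm 1 0 0 := .of_forall fun x => by simp

lemma mul (hf : HasGerm f k c) (hg : HasGerm g l d) : HasGerm (f * g) (k + l) (2 ^ k * d + c) := by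
  filter_upwards [hg, g.tendsto_atTop.eventually hf] with x hgx hfx
  rw [RelIso.mul_apply, hfx, hgx, zpow_add₀ two_ne_zero]
  ring

lemma inv (hf : HasGerm f k c) : HasGerm f⁻¹ (-k) (-(2 ^ (-k) * c)) := by
  filter_upwards [(f⁻¹).tendsto_atTop.eventually hf] with x hx
  rw [RelIso.apply_inv_self] at hx
  conv_rhs => rw [hx]
  rw [mul_add, zpow_neg, inv_mul_cancel_left₀ (zpow_ne_zero k two_ne_zero)]
  ring

lemma conj (hf : HasGerm f k c) (hg : HasGerm g 0 d) : HasGerm (f * g * f⁻¹) 0 (2 ^ k * d) := by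
  convert (hf.mul hg).mul hf.inv using 1
  · ring
  · rw [add_zero, zpow_neg, mul_neg, mul_inv_cancel_left₀ (zpow_ne_zero k two_ne_zero)]
    ring

lemma zpow (hf : HasGerm f 0 c) (m : ℤ) : HasGerm (f ^ m) 0 (m * c) := by
  induction m using Int.induction_on with
  | zero => simpa using one
  | succ i ih =>
    rw [zpow_add_one]
    convert ih.mul hf using 1
    · simp
    · push_cast
      ring
  | pred i ih =>
    rw [zpow_sub_one]
    convert ih.mul hf.inv using 1
    · simp
    · push_cast
      norm_num
      ring

lemma unique (hf : HasGerm f k c) (hf' : HasGerm f l d) : k = l ∧ c = d := by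
  obtain ⟨M, hM⟩ := eventually_atTop.1 (hf.and hf')
  obtain ⟨h₁, h₂⟩ := hM M le_rfl
  obtain ⟨h₃, h₄⟩ := hM (M + 1) (by linarith)
  have hslope : (2 : ℝ) ^ k = 2 ^ l := by linarith
  refine ⟨zpow_right_injective₀ two_pos (by norm_num) hslope, ?_⟩
  rw [hslope] at h₁
  linarith

lemma isDyadic (hf : HasGerm f 0 c) (hfPL : f ∈ dyadicPL) : IsDyadic c := by
  obtain ⟨M, hM⟩ := eventually_atTop.1 hf
  obtain ⟨q, hq, hMq, -⟩ := IsDyadic.exists_between (lt_add_one M)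
  have := (hfPL.1 q).2 hq
  rw [hM q hMq.le] at this
  simpa using this.sub hq

end HasGerm

lemma elementary_hasGerm (p : ℝ) (n : ℤ) : HasGerm (elementary p n) n (p - 2 ^ n * p) := by
  filter_upwards [eventually_ge_atTop p] with x hx
  rw [elementary_of_ge n hx]
  ring

lemma elementary_mul_elementary_hasGerm (r r' : ℝ) :
    HasGerm (elementary r 1 * elementary r' (-1)) 0 (r' - r) := by
  convert (elementary_hasGerm r 1).mul (elementary_hasGerm r' (-1)) using 1
  · norm_num
  · ring

lemma exists_hasGerm {f : ℝ ≃o ℝ} (hf : f ∈ dyadicPL) : ∃ k c, HasGerm f k c := by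
  obtain ⟨k, c, M, h⟩ := exists_affine_atTop hf
  exact ⟨k, c, eventually_atTop.2 ⟨M, h⟩⟩

lemma mem_compactPL_iff {f : ℝ ≃o ℝ} : f ∈ compactPL ↔ f ∈ leftTrivialPL ∧ HasGerm f 0 0 := by
  simp [compactPL, HasGerm, eventuallyId]

lemma elementary_mem_leftTrivialPL {p : ℝ} (hp : IsDyadic p) (n : ℤ) :
    elementary p n ∈ leftTrivialPL :=
  ⟨elementary_mem_dyadicPL hp n, (eventually_le_atBot p).mono fun _ => elementary_of_le n⟩

lemma exists_mem_compactPL_eqOn_Iic {a : ℝ ≃o ℝ} (ha : a ∈ leftTrivialPL) (M : ℝ) :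
    ∃ b ∈ compactPL, ∀ x ≤ M, b x = a x := by
  obtain ⟨k, c, N, hN⟩ := exists_affine_atTop ha.1
  obtain ⟨q, hq, hMNq, -⟩ := IsDyadic.exists_between (lt_add_one (max M N))
  have haq : IsDyadic (a q) := (ha.1.1 q).2 hq
  obtain ⟨r, hr, hqr, -⟩ := IsDyadic.exists_between (lt_add_one (max (a q) (a q + (a q - q))))
  obtain ⟨hMq, hNq⟩ := max_lt_iff.1 hMNq
  obtain ⟨h₁, h₂⟩ := max_lt_iff.1 hqr
  refine ⟨elementary r 1 * elementary (r + (q - a q)) (-1) * (elementary (a q) (-k) * a),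
    mem_compactPL_iff.2 ⟨?_, ?_⟩, fun x hx => ?_⟩
  · exact mul_mem
      (mul_mem (elementary_mem_leftTrivialPL hr 1)
        (elementary_mem_leftTrivialPL (hr.add (hq.sub haq)) _))
      (mul_mem (elementary_mem_leftTrivialPL haq _) ha)
  · convert (elementary_mul_elementary_hasGerm r (r + (q - a q))).mul
      ((elementary_hasGerm (a q) (-k)).mul (eventually_atTop.2 ⟨N, hN⟩)) using 1
    · ring
    · rw [hN q hNq.le]
      have : (2 : ℝ) ^ (-k) * 2 ^ k = 1 := by rw [← zpow_add₀ two_ne_zero]; simp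
      linear_combination q * this
  · have hxq : a x ≤ a q := a.monotone (hx.trans hMq.le)
    simp only [RelIso.mul_apply]
    rw [elementary_of_le _ hxq, elementary_of_le (p := r + _) _ (by linarith),
      elementary_of_le _ (by linarith)]

lemma exists_mem_compactPL_conj_eq {a l : ℝ ≃o ℝ} (ha : a ∈ leftTrivialPL) (hl : l ∈ compactPL) :
    ∃ b ∈ compactPL, a * l * a⁻¹ = b * l * b⁻¹ := by
  obtain ⟨M, hM⟩ := eventually_atTop.1 hl.2
  obtain ⟨b, hb, hab⟩ := exists_mem_compactPL_eqOn_Iic ha M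
  refine ⟨b, hb, mul_inv_eq_iff_eq_mul.2 ?_⟩
  ext x
  simp only [RelIso.mul_apply]
  rcases le_total x M with h | h
  · rw [inv_apply_of_apply_eq (hab x h), hab]
    exact (l.monotone h).trans_eq (hM M le_rfl)
  · have : M ≤ b⁻¹ (a x) := by
      rw [← inv_apply_of_apply_eq (hab M le_rfl)]
      exact b⁻¹.monotone (a.monotone h)
    rw [hM x h, hM _ this, RelIso.apply_inv_self]

/-- The elements of `leftTrivialPL` which are translations near `+∞`. -/
def topTranslation : Subgroup leftTrivialPL where
  carrier := {t | ∃ c, HasGerm t 0 c}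
  one_mem' := ⟨0, HasGerm.one⟩
  mul_mem' := fun ⟨_, hc⟩ ⟨_, hd⟩ => ⟨_, by simpa using hc.mul hd⟩
  inv_mem' := fun ⟨_, hc⟩ => ⟨_, by simpa using hc.inv⟩

instance topTranslation_normal : topTranslation.Normal where
  conj_mem := fun _ ⟨_, hc⟩ a =>
    let ⟨_, _, hk⟩ := exists_hasGerm a.2.1
    ⟨_, hk.conj hc⟩

lemma mem_compactPL_subgroupOf_iff {a : leftTrivialPL} :
    a ∈ compactPL.subgroupOf leftTrivialPL ↔ HasGerm a 0 0 := by
  simp [Subgroup.mem_subgroupOf, mem_compactPL_iff]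

instance compactPL_subgroupOf_normal : (compactPL.subgroupOf leftTrivialPL).Normal where
  conj_mem := by
    intro l hl a
    rw [mem_compactPL_subgroupOf_iff] at hl ⊢
    obtain ⟨k, c, h⟩ := exists_hasGerm a.2.1
    simpa using h.conj hl

/-- The elementary map of slope `2` with breakpoint `p`, as an element of `leftTrivialPL`. -/
noncomputable def doubling (p : ℝ) (hp : IsDyadic p) : leftTrivialPL :=
  ⟨elementary p 1, elementary_mem_leftTrivialPL hp 1⟩

lemma doubling_zero_zpow_hasGerm (k : ℤ) :
    HasGerm ((doubling 0 .zero ^ k : leftTrivialPL) : ℝ ≃o ℝ) k 0 := by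
  have : ((doubling 0 .zero ^ k : leftTrivialPL) : ℝ ≃o ℝ) = elementary 0 k :=
    (elementary_eq_zpow 0 k).symm
  rw [this]
  simpa using elementary_hasGerm 0 k

lemma exists_eq_mul_doubling_zpow (a : leftTrivialPL) :
    ∃ t ∈ topTranslation, ∃ k : ℤ, a = t * doubling 0 .zero ^ k := by
  obtain ⟨k, c, h⟩ := exists_hasGerm a.2.1
  exact ⟨a * (doubling 0 .zero ^ k)⁻¹,
    ⟨c, by simpa using h.mul (doubling_zero_zpow_hasGerm k).inv⟩, k, by simp⟩

lemma exists_common_root_mod_compactPL {t u : leftTrivialPL} (ht : t ∈ topTranslation)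
    (hu : u ∈ topTranslation) :
    ∃ v, ∃ m n : ℤ, t * v ^ m ∈ compactPL.subgroupOf leftTrivialPL ∧
      u * v ^ n ∈ compactPL.subgroupOf leftTrivialPL := by
  obtain ⟨c, hc⟩ := ht
  obtain ⟨d, hd⟩ := hu
  obtain ⟨m, i, rfl⟩ := hc.isDyadic t.2.1
  obtain ⟨n, j, rfl⟩ := hd.isDyadic u.2.1
  have hw : IsDyadic (1 / 2 ^ (i + j)) := ⟨1, i + j, by simp⟩
  have hv := elementary_mul_elementary_hasGerm 0 (1 / 2 ^ (i + j))
  refine ⟨⟨_, mul_mem (elementary_mem_leftTrivialPL .zero 1)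
    (elementary_mem_leftTrivialPL hw (-1))⟩, -(m * 2 ^ j), -(n * 2 ^ i),
    mem_compactPL_subgroupOf_iff.2 ?_, mem_compactPL_subgroupOf_iff.2 ?_⟩
  · convert hc.mul (hv.zpow (-(m * 2 ^ j))) using 1
    · rfl
    · simp
    · push_cast
      rw [zpow_zero, pow_add]
      field_simp
      ring
  · convert hd.mul (hv.zpow (-(n * 2 ^ i))) using 1
    · rfl
    · simp
    · push_cast
      rw [zpow_zero, pow_add]
      field_simp
      ring

lemma elementary_mul_elementary_of_le {p q : ℝ} (h : p ≤ q) :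
    elementary p 1 * elementary q 1 = elementary (2 * q - p) 1 * elementary p 1 := by
  ext x
  simp only [RelIso.mul_apply]
  rcases le_total x q with hxq | hxq
  · rw [elementary_of_le _ hxq]
    rcases le_total x p with hxp | hxp
    · rw [elementary_of_le _ hxp, elementary_of_le _ (by linarith)]
    · rw [elementary_of_ge _ hxp, elementary_of_le _ (by norm_num; linarith)]
  · rw [elementary_of_ge _ hxq, elementary_of_ge _ (by norm_num; linarith),
      elementary_of_ge (p := p) _ (by linarith), elementary_of_ge _ (by norm_num; linarith)]
    norm_num
    ring

lemma abelianization_of_doubling_eq {q r : ℝ} (hq : IsDyadic q) (hr : IsDyadic r) :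
    Abelianization.of (doubling q hq) = Abelianization.of (doubling r hr) := by
  wlog h : q ≤ r generalizing q r
  · exact (this hr hq (le_of_not_ge h)).symm
  have hp : IsDyadic (2 * q - r) := by simpa [two_mul] using (hq.add hq).sub hr
  have hrel : doubling (2 * q - r) hp * doubling q hq = doubling r hr * doubling (2 * q - r) hp :=
    Subtype.ext <| by
      have := elementary_mul_elementary_of_le (p := 2 * q - r) (q := q) (by linarith)
      rwa [sub_sub_cancel] at this
  have := congrArg Abelianization.of hrel
  rw [map_mul, map_mul, mul_comm] at this
  exact mul_right_cancel this

lemma abelianization_of_mem_zpowers (a : leftTrivialPL) :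
    Abelianization.of a ∈ Subgroup.zpowers (Abelianization.of (doubling 0 .zero)) := by
  let K := (Subgroup.zpowers (Abelianization.of (doubling 0 .zero))).comap Abelianization.of
  suffices h : leftTrivialPL ≤ K.map leftTrivialPL.subtype by
    obtain ⟨b, hb, hba⟩ := h a.2
    rwa [← Subtype.ext hba]
  have hgen : Subgroup.closure dyadicElementary ≤ K.map leftTrivialPL.subtype := by
    rw [Subgroup.closure_le]
    rintro _ ⟨p, n, hp, rfl⟩
    refine ⟨doubling p hp ^ n, ?_, (elementary_eq_zpow p n).symm⟩
    refine zpow_mem (Subgroup.mem_comap.2 ?_) n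
    rw [abelianization_of_doubling_eq hp .zero]
    exact Subgroup.mem_zpowers _
  exact fun f hf => hgen (mem_closure_dyadicElementary hf.1 (eventually_atBot.1 hf.2))

lemma compactPL_subgroupOf_le_commutator :
    compactPL.subgroupOf leftTrivialPL ≤ commutator leftTrivialPL := by
  intro a ha
  obtain ⟨k, hk⟩ := Subgroup.mem_zpowers_iff.1 (abelianization_of_mem_zpowers a)
  have hmem : a * (doubling 0 .zero ^ k)⁻¹ ∈ commutator leftTrivialPL := by
    rw [← Abelianization.ker_of, MonoidHom.mem_ker, map_mul, map_inv, map_zpow, hk, mul_inv_cancel]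
  have hle : commutator leftTrivialPL ≤ topTranslation :=
    Subgroup.commutator_le.2 fun a _ b _ => by
      obtain ⟨k, c, ha⟩ := exists_hasGerm a.2.1
      obtain ⟨l, d, hb⟩ := exists_hasGerm b.2.1
      have := ((ha.mul hb).mul ha.inv).mul hb.inv
      rw [show k + l + -k + -l = 0 by ring] at this
      exact ⟨_, this⟩
  obtain ⟨d, hd⟩ := hle hmem
  have := (((mem_compactPL_subgroupOf_iff.1 ha).mul
    (doubling_zero_zpow_hasGerm k).inv).unique hd).1
  obtain rfl : k = 0 := by simpa using this
  simpa using hmem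

theorem compactPL_le_commutator : compactPL ≤ ⁅compactPL, compactPL⁆ := by
  have h := le_commutator_of_locally_cyclic (L := compactPL.subgroupOf leftTrivialPL)
    (T := topTranslation) (s := doubling 0 .zero)
    (fun a l hl => by
      obtain ⟨b, hb, hab⟩ := exists_mem_compactPL_conj_eq a.2 hl
      exact ⟨⟨b, hb.1⟩, hb, Subtype.ext hab⟩)
    (fun _ ht _ hu => exists_common_root_mod_compactPL ht hu) exists_eq_mul_doubling_zpow
    compactPL_subgroupOf_le_commutator
    (by
      rintro t ⟨c, hc⟩ hst
      have hs : HasGerm (doubling 0 .zero) 1 0 := by simpa using doubling_zero_zpow_hasGerm 1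
      have hgerm := (hs.conj hc).mul hc.inv
      have hc₀ := ((mem_compactPL_subgroupOf_iff.1 hst).unique hgerm).2
      norm_num at hc₀
      obtain rfl : c = 0 := by linarith
      exact mem_compactPL_subgroupOf_iff.2 hc)
  have hmap : (compactPL.subgroupOf leftTrivialPL).map leftTrivialPL.subtype = compactPL := by
    rw [Subgroup.subgroupOf_map_subtype]
    exact inf_eq_left.2 inf_le_left
  simpa only [Subgroup.map_commutator, hmap] using Subgroup.map_mono (f := leftTrivialPL.subtype) h

end Perfect

/-! ### Homeomorphisms supported in a cell -/

section Cell

open Filter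
open scoped commutatorElement

lemma commute_of_forall_apply_eq_or {α : Type*} [Preorder α] {f g : α ≃o α}
    (h : ∀ x, f x = x ∨ g x = x) : Commute f g := by
  have hfg : Equiv.Perm.Disjoint f.toEquiv g.toEquiv := h
  ext x
  exact Equiv.congr_fun hfg.commute.eq x

/-- The elements of `dyadicPL` supported in `[-R, R]`. -/
def supportedPL (R : ℝ) : Subgroup (ℝ ≃o ℝ) where
  carrier := {f | f ∈ dyadicPL ∧ ∀ x, R ≤ |x| → f x = x}
  one_mem' := ⟨one_mem _, fun _ _ => rfl⟩
  mul_mem' := fun ⟨hf, hfR⟩ ⟨hg, hgR⟩ =>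
    ⟨mul_mem hf hg, fun x hx => by rw [RelIso.mul_apply, hgR x hx, hfR x hx]⟩
  inv_mem' := fun ⟨hf, hfR⟩ => ⟨inv_mem hf, fun x hx => inv_apply_of_apply_eq (hfR x hx)⟩

lemma supportedPL_mono : Monotone supportedPL :=
  fun _ _ h _ hf => ⟨hf.1, fun x hx => hf.2 x (h.trans hx)⟩

lemma mem_compactPL_iff_exists_mem_supportedPL {f : ℝ ≃o ℝ} :
    f ∈ compactPL ↔ ∃ R, f ∈ supportedPL R := by
  constructor
  · rintro ⟨⟨hf, hbot⟩, htop⟩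
    obtain ⟨M, hM⟩ := eventually_atBot.1 hbot
    obtain ⟨N, hN⟩ := eventually_atTop.1 htop
    refine ⟨max (-M) N, hf, fun x hx => ?_⟩
    obtain ⟨hMx, hNx⟩ := max_le_iff.1 hx
    rcases abs_cases x with ⟨h, -⟩ | ⟨h, -⟩
    · exact hN x (h ▸ hNx)
    · exact hM x (by linarith)
  · rintro ⟨R, hf, hfR⟩
    exact ⟨⟨hf, eventually_atBot.2 ⟨-R, fun x hx => hfR x (by linarith [neg_le_abs x])⟩⟩,
      eventually_atTop.2 ⟨R, fun x hx => hfR x (hx.trans (le_abs_self x))⟩⟩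

/-- The elements of `dyadicPL` with compact support in the open cell `(-1/2, 1/2)`. -/
def cellPL : Subgroup (ℝ ≃o ℝ) where
  carrier := {f | ∃ r < 1 / 2, f ∈ supportedPL r}
  one_mem' := ⟨0, by norm_num, one_mem _⟩
  mul_mem' := fun ⟨r, hr, hf⟩ ⟨r', hr', hg⟩ => ⟨max r r', max_lt hr hr',
    mul_mem (supportedPL_mono (le_max_left _ _) hf) (supportedPL_mono (le_max_right _ _) hg)⟩
  inv_mem' := fun ⟨r, hr, hf⟩ => ⟨r, hr, inv_mem hf⟩

lemma exists_pos_of_mem_cellPL {f : ℝ ≃o ℝ} (hf : f ∈ cellPL) :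
    ∃ r, 0 < r ∧ r < 1 / 2 ∧ f ∈ supportedPL r := by
  obtain ⟨r, hr, hf⟩ := hf
  exact ⟨max r (1 / 4), lt_max_of_lt_right (by norm_num), max_lt hr (by norm_num),
    supportedPL_mono (le_max_left _ _) hf⟩

lemma cellPL_le_dyadicPL : cellPL ≤ dyadicPL := fun _ ⟨_, _, hf, _⟩ => hf

lemma isomConj_zero_mem_cellPL {f : ℝ ≃o ℝ} (ε : ℤˣ) (hf : f ∈ cellPL) :
    isomConj 0 ε f ∈ cellPL := by
  obtain ⟨r, hr, hf, hfr⟩ := hf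
  refine ⟨r, hr, isomConj_mem_dyadicPL .zero ε hf, fun x hx => ?_⟩
  rw [isomConj_apply, hfr, sign_mul_sign_mul, sub_zero, zero_add]
  rcases Int.units_eq_one_or ε with rfl | rfl <;> simpa using hx

lemma exists_mem_commutator_supportedPL {g : ℝ ≃o ℝ} (hg : g ∈ ⁅compactPL, compactPL⁆) :
    ∃ R, g ∈ ⁅supportedPL R, supportedPL R⁆ := by
  have mono {R R' : ℝ} (h : R ≤ R') :
      ⁅supportedPL R, supportedPL R⁆ ≤ ⁅supportedPL R', supportedPL R'⁆ :=
    Subgroup.commutator_mono (supportedPL_mono h) (supportedPL_mono h)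
  rw [Subgroup.commutator_def] at hg
  induction hg using Subgroup.closure_induction with
  | mem g hg =>
    obtain ⟨a, ha, b, hb, rfl⟩ := hg
    obtain ⟨R, hR⟩ := mem_compactPL_iff_exists_mem_supportedPL.1 ha
    obtain ⟨R', hR'⟩ := mem_compactPL_iff_exists_mem_supportedPL.1 hb
    exact ⟨max R R', Subgroup.commutator_mem_commutator (supportedPL_mono (le_max_left _ _) hR)
      (supportedPL_mono (le_max_right _ _) hR')⟩
  | one => exact ⟨0, one_mem _⟩
  | mul a b _ _ iha ihb =>
    obtain ⟨R, hR⟩ := iha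
    obtain ⟨R', hR'⟩ := ihb
    exact ⟨max R R', mul_mem (mono (le_max_left _ _) hR) (mono (le_max_right _ _) hR')⟩
  | inv a _ iha =>
    obtain ⟨R, hR⟩ := iha
    exact ⟨R, inv_mem hR⟩

lemma exists_squeeze {r R : ℝ} (hr : 0 < r) (hr' : r < 1 / 2) (hR : 1 ≤ R) :
    ∃ b ∈ dyadicPL, (∀ x, |x| ≤ r → b x = x) ∧ ∃ r' < 1 / 2, b R ≤ r' ∧ -r' ≤ b (-R) := by
  obtain ⟨q, hq, hrq, hq2⟩ := IsDyadic.exists_between hr'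
  obtain ⟨k, hk⟩ := exists_pow_lt_of_lt_one (show (0 : ℝ) < (1 / 2 - q) / (R - q) from
    div_pos (by linarith) (by linarith)) (show (2⁻¹ : ℝ) < 1 by norm_num)
  rw [lt_div_iff₀ (by linarith)] at hk
  have hpow : (2 : ℝ) ^ (-(k : ℤ)) = 2⁻¹ ^ k := by rw [zpow_neg, zpow_natCast, inv_pow]
  have hpos : (0 : ℝ) < 2⁻¹ ^ k * (R - q) := mul_pos (by positivity) (by linarith)
  have hmir : ∀ x, isomConj 0 (-1) (elementary q (-k)) x = -elementary q (-k) (-x) := by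
    simp [isomConj_apply]
  refine ⟨elementary q (-k) * isomConj 0 (-1) (elementary q (-k)),
    mul_mem (elementary_mem_dyadicPL hq _)
      (isomConj_mem_dyadicPL .zero _ (elementary_mem_dyadicPL hq _)),
    fun x hx => ?_, q + 2⁻¹ ^ k * (R - q), by linarith, ?_, ?_⟩
  · obtain ⟨h₁, h₂⟩ := abs_le.1 hx
    rw [RelIso.mul_apply, hmir, elementary_of_le (x := -x) _ (by linarith), neg_neg,
      elementary_of_le _ (by linarith)]
  · rw [RelIso.mul_apply, hmir, elementary_of_le (x := -R) _ (by linarith), neg_neg,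
      elementary_of_ge _ (by linarith), hpow]
  · rw [RelIso.mul_apply, hmir, neg_neg, elementary_of_ge (x := R) _ (by linarith), hpow,
      elementary_of_le _ (by linarith)]

lemma conj_mem_cellPL {b f : ℝ ≃o ℝ} {r R : ℝ} (hb : b ∈ dyadicPL) (hr : r < 1 / 2)
    (hbR : b R ≤ r) (hbR' : -r ≤ b (-R)) (hf : f ∈ supportedPL R) : b * f * b⁻¹ ∈ cellPL := by
  refine ⟨r, hr, mul_mem (mul_mem hb hf.1) (inv_mem hb), fun x hx => ?_⟩
  simp only [RelIso.mul_apply]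
  rw [hf.2, RelIso.apply_inv_self]
  rcases le_abs'.1 hx with h | h
  · have := b⁻¹.monotone (h.trans hbR')
    rw [RelIso.inv_apply_self] at this
    linarith [neg_le_abs (b⁻¹ x)]
  · have := b⁻¹.monotone (hbR.trans h)
    rw [RelIso.inv_apply_self] at this
    linarith [le_abs_self (b⁻¹ x)]

theorem cellPL_le_commutator : cellPL ≤ ⁅cellPL, cellPL⁆ := by
  intro f hf
  obtain ⟨r, hr, hr', hfr⟩ := exists_pos_of_mem_cellPL hf
  obtain ⟨R, hR⟩ := exists_mem_commutator_supportedPL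
    (compactPL_le_commutator (mem_compactPL_iff_exists_mem_supportedPL.2 ⟨r, hfr⟩))
  have hmono := supportedPL_mono (le_max_left R 1)
  have hfR := Subgroup.commutator_mono hmono hmono hR
  obtain ⟨b, hb, hbr, r', hr', hbR, hbR'⟩ := exists_squeeze hr hr' (le_max_right R 1)
  have hbf : b * f * b⁻¹ = f := by
    refine mul_inv_eq_of_eq_mul (commute_of_forall_apply_eq_or fun x => ?_).eq
    exact (le_total |x| r).imp (hbr x) (hfr.2 x)
  have hmap : (supportedPL (max R 1)).map (MulAut.conj b).toMonoidHom ≤ cellPL := by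
    rintro _ ⟨l, hl, rfl⟩
    exact conj_mem_cellPL hb hr' hbR hbR' hl
  have hmem := Subgroup.mem_map_of_mem (MulAut.conj b).toMonoidHom hfR
  rw [Subgroup.map_commutator, MulEquiv.coe_toMonoidHom, MulAut.conj_apply, hbf] at hmem
  exact Subgroup.commutator_mono hmap hmap hmem

end Cell

section Bump

variable {p d x : ℝ}

/-- The homeomorphism with slope `2 ^ n` on `[p, p + d]`, slope `2 ^ (-n)` on
`[p + d, p + d + 2 ^ n * d]`, and no other moved points. -/
noncomputable def bump (p d : ℝ) (n : ℤ) : ℝ ≃o ℝ :=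
  elementary p n * elementary (p + d) (-(2 * n)) * elementary (p + d + 2 ^ n * d) n

lemma bump_mem_dyadicPL (hp : IsDyadic p) (hd : IsDyadic d) (n : ℤ) : bump p d n ∈ dyadicPL :=
  mul_mem
    (mul_mem (elementary_mem_dyadicPL hp _) (elementary_mem_dyadicPL (hp.add hd) _))
    (elementary_mem_dyadicPL ((hp.add hd).add ((IsDyadic.two_zpow n).mul hd)) _)

lemma bump_of_le (n : ℤ) (hd : 0 ≤ d) (hx : x ≤ p) : bump p d n x = x := by
  have : 0 ≤ (2 : ℝ) ^ n * d := by positivity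
  simp only [bump, RelIso.mul_apply]
  rw [elementary_of_le (x := x) _ (by linarith), elementary_of_le (x := x) _ (by linarith),
    elementary_of_le _ hx]

lemma bump_of_le_add (n : ℤ) (hd : 0 ≤ d) (hpx : p ≤ x) (hx : x ≤ p + d) :
    bump p d n x = p + 2 ^ n * (x - p) := by
  have : 0 ≤ (2 : ℝ) ^ n * d := by positivity
  simp only [bump, RelIso.mul_apply]
  rw [elementary_of_le (x := x) _ (by linarith), elementary_of_le (x := x) _ hx,
    elementary_of_ge _ hpx]

lemma bump_of_add_le (n : ℤ) (hd : 0 ≤ d) (hpx : p + d ≤ x) (hx : x ≤ p + d + 2 ^ n * d) :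
    bump p d n x = p + 2 ^ n * d + 2 ^ (-n) * (x - (p + d)) := by
  have : 0 ≤ (2 : ℝ) ^ (-(2 * n)) * (x - (p + d)) := mul_nonneg (by positivity) (by linarith)
  simp only [bump, RelIso.mul_apply]
  rw [elementary_of_le (x := x) _ hx, elementary_of_ge (x := x) _ hpx,
    elementary_of_ge _ (by linarith), show -n = n + -(2 * n) by ring, zpow_add₀ two_ne_zero]
  ring

lemma bump_of_ge (n : ℤ) (hd : 0 ≤ d) (hx : p + d + 2 ^ n * d ≤ x) : bump p d n x = x := by
  have hpow : (0 : ℝ) < 2 ^ n := by positivity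
  have hpd : 0 ≤ (2 : ℝ) ^ n * d := by positivity
  have hxd : 0 ≤ (2 : ℝ) ^ n * (x - (p + d + 2 ^ n * d)) := mul_nonneg hpow.le (by linarith)
  simp only [bump, RelIso.mul_apply]
  rw [elementary_of_ge (x := x) _ hx, elementary_of_ge (p := p + d) _ (by linarith)]
  have : 0 ≤ (2 : ℝ) ^ (-(2 * n)) *
      (p + d + 2 ^ n * d + 2 ^ n * (x - (p + d + 2 ^ n * d)) - (p + d)) :=
    mul_nonneg (by positivity) (by linarith)
  rw [elementary_of_ge _ (by linarith), zpow_neg, two_mul, zpow_add₀ two_ne_zero]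
  field_simp
  ring

lemma le_bump {n : ℤ} (hn : 0 ≤ n) (hd : 0 ≤ d) (x : ℝ) : x ≤ bump p d n x := by
  have hpow : (1 : ℝ) ≤ 2 ^ n := one_le_zpow₀ one_le_two hn
  have hinv : (2 : ℝ) ^ (-n) * 2 ^ n = 1 := by rw [← zpow_add₀ two_ne_zero]; simp
  have hinv' : (2 : ℝ) ^ (-n) ≤ 1 := zpow_le_one_of_nonpos₀ one_le_two (by linarith)
  rcases le_total x p with h₁ | h₁
  · exact (bump_of_le n hd h₁).ge
  rcases le_total x (p + d) with h₂ | h₂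
  · rw [bump_of_le_add n hd h₁ h₂]
    linarith [le_mul_of_one_le_left (sub_nonneg.2 h₁) hpow]
  rcases le_total x (p + d + 2 ^ n * d) with h₃ | h₃
  · rw [bump_of_add_le n hd h₂ h₃]
    have := mul_nonneg (sub_nonneg.2 hinv') (sub_nonneg.2 h₃)
    linear_combination this - d * hinv
  · exact (bump_of_ge n hd h₃).ge

lemma exists_push {r : ℝ} (hr : 0 < r) (hr' : r < 1 / 2) :
    ∃ p ∈ cellPL, r < p (-r) ∧ ∀ x, x ≤ p x := by
  obtain ⟨c, hc, hrc, hc'⟩ := IsDyadic.exists_between (show 2 * r < 1 by linarith)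
  have hc₀ : 0 < c := by linarith
  obtain ⟨n, hn⟩ := exists_pow_lt_of_lt_one
    (show 0 < min (c - 2 * r) (1 - c) from lt_min (by linarith) (by linarith))
    (show (2⁻¹ : ℝ) < 1 by norm_num)
  obtain ⟨hn₁, hn₂⟩ := lt_min_iff.1 hn
  have hpow : (0 : ℝ) < 2⁻¹ ^ n := by positivity
  set d : ℝ := 2⁻¹ ^ n * c with hd
  have hd₀ : 0 < d := mul_pos hpow hc₀
  have hdn : d < 2⁻¹ ^ n := mul_lt_of_lt_one_right hpow hc'
  have hdyadic : IsDyadic d := by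
    have := (IsDyadic.two_zpow (-n)).mul hc
    rwa [zpow_neg, zpow_natCast, ← inv_pow] at this
  have hcd : (2 : ℝ) ^ (n : ℤ) * d = c := by
    rw [zpow_natCast, hd, ← mul_assoc, ← mul_pow, mul_inv_cancel₀ two_ne_zero, one_pow, one_mul]
  refine ⟨bump (-((c + d) / 2)) d n, ⟨(c + d) / 2, by linarith,
    bump_mem_dyadicPL (hc.add hdyadic).div_two.neg hdyadic n, fun x hx => ?_⟩, ?_,
    le_bump (Int.natCast_nonneg n) hd₀.le⟩
  · rcases le_abs'.1 hx with h | h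
    · exact bump_of_le n hd₀.le h
    · exact bump_of_ge n hd₀.le (by linarith)
  · refine lt_of_lt_of_le ?_ ((bump _ d n).monotone (show -((c + d) / 2) + d ≤ -r by linarith))
    rw [bump_of_le_add n hd₀.le (by linarith) le_rfl, add_sub_cancel_left, hcd]
    linarith

end Bump

/-! ### Copies of a cell homeomorphism along the line -/

section Copies

open scoped commutatorElement

/-- The homeomorphisms of the line which are the identity outside the cell `[-1/2, 1/2]`. -/
def cellHomeo : Subgroup (ℝ ≃o ℝ) where
  carrier := {f | ∀ x, 1 / 2 ≤ |x| → f x = x}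
  one_mem' := fun _ _ => rfl
  mul_mem' := fun hf hg x hx => by rw [RelIso.mul_apply, hg x hx, hf x hx]
  inv_mem' := fun hf x hx => inv_apply_of_apply_eq (hf x hx)

lemma cellPL_le_cellHomeo : cellPL ≤ cellHomeo :=
  fun _ ⟨_, hr, _, hf⟩ x hx => hf x (hr.le.trans hx)

namespace cellHomeo

variable (f : cellHomeo) {x : ℝ}

lemma apply_half : (f : ℝ ≃o ℝ) (1 / 2) = 1 / 2 := f.2 _ (by norm_num)

lemma apply_neg_half : (f : ℝ ≃o ℝ) (-(1 / 2)) = -(1 / 2) := f.2 _ (by norm_num)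

lemma neg_half_le_apply (hx : -(1 / 2) ≤ x) : -(1 / 2) ≤ (f : ℝ ≃o ℝ) x :=
  (apply_neg_half f).ge.trans (f.1.monotone hx)

lemma apply_lt_half (hx : x < 1 / 2) : (f : ℝ ≃o ℝ) x < 1 / 2 :=
  (f.1.strictMono hx).trans_eq (apply_half f)

/-- Conjugation of a cell homeomorphism by `x ↦ ε x`. -/
noncomputable def mirror (ε : ℤˣ) : cellHomeo →* cellHomeo :=
  ((isomConj 0 ε).comp cellHomeo.subtype).codRestrict cellHomeo fun f x hx => by
    have : (f : ℝ ≃o ℝ) (ε * x) = ε * x :=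
      f.2 _ (by rcases Int.units_eq_one_or ε with rfl | rfl <;> simpa using hx)
    simp [isomConj_apply, this, sign_mul_sign_mul]

lemma coe_mirror (ε : ℤˣ) : (mirror ε f : ℝ ≃o ℝ) = isomConj 0 ε f := rfl

lemma mirror_apply (ε : ℤˣ) : (mirror ε f : ℝ ≃o ℝ) x = ε * (f : ℝ ≃o ℝ) (ε * x) := by
  simp [coe_mirror, isomConj_apply]

lemma mirror_one : mirror 1 f = f := Subtype.ext (isomConj_zero_one _)

lemma mirror_mirror (ε η : ℤˣ) : mirror ε (mirror η f) = mirror (ε * η) f :=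
  Subtype.ext (by simp [coe_mirror, isomConj_isomConj])

end cellHomeo

/-- The closed cell of length one centred at the half-integer `m / 2`. -/
def cell (m : ℤ) : Set ℝ := Set.Icc ((m - 1) / 2) ((m + 1) / 2)

lemma mem_cell_iff_abs {m : ℤ} {x : ℝ} : x ∈ cell m ↔ |x - m / 2| ≤ 1 / 2 := by
  rw [cell, Set.mem_Icc, abs_le]
  constructor <;> rintro ⟨h₁, h₂⟩ <;> constructor <;> linarith

/-- The index `m ≡ c (mod 2)` of the half-open cell `[(m - 1) / 2, (m + 1) / 2)` containing `x`. -/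
noncomputable def cellIndex (c : ℤ) (x : ℝ) : ℤ := c + 2 * ⌊x - (c - 1) / 2⌋

lemma cellIndex_emod (c : ℤ) (x : ℝ) : cellIndex c x % 2 = c % 2 := by
  rw [cellIndex]
  omega

lemma neg_half_le_sub_cellIndex (c : ℤ) (x : ℝ) : -(1 / 2) ≤ x - cellIndex c x / 2 := by
  have := Int.floor_le (x - (c - 1) / 2)
  push_cast [cellIndex]
  linarith

lemma sub_cellIndex_lt_half (c : ℤ) (x : ℝ) : x - cellIndex c x / 2 < 1 / 2 := by
  have := Int.lt_floor_add_one (x - (c - 1) / 2)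
  push_cast [cellIndex]
  linarith

lemma cellIndex_eq {c m : ℤ} {x : ℝ} (hm : m % 2 = c % 2) (h : -(1 / 2) ≤ x - m / 2)
    (h' : x - m / 2 < 1 / 2) : cellIndex c x = m := by
  obtain ⟨j, rfl⟩ : ∃ j, m = c + 2 * j := ⟨(m - c) / 2, by omega⟩
  have : ⌊x - (c - 1) / 2⌋ = j := by
    push_cast at h h'
    exact Int.floor_eq_iff.2 ⟨by linarith, by linarith⟩
  rw [cellIndex, this]

lemma cellIndex_mono (c : ℤ) : Monotone (cellIndex c) := fun x y h => by
  have : ⌊x - (c - 1) / 2⌋ ≤ ⌊y - (c - 1) / 2⌋ := Int.floor_mono (by linarith)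
  unfold cellIndex
  omega

lemma exists_mem_cell (c : ℤ) (x : ℝ) : ∃ m, m % 2 = c % 2 ∧ x ∈ cell m :=
  ⟨cellIndex c x, cellIndex_emod c x, mem_cell_iff_abs.2 <|
    abs_le.2 ⟨neg_half_le_sub_cellIndex c x, (sub_cellIndex_lt_half c x).le⟩⟩

/-- The self-map of the line which acts by a translate of `φ m` on each half-open cell of index
`m ≡ c (mod 2)`. -/
noncomputable def assembleFun (c : ℤ) (φ : ℤ → cellHomeo) (x : ℝ) : ℝ :=
  cellIndex c x / 2 + (φ (cellIndex c x) : ℝ ≃o ℝ) (x - cellIndex c x / 2)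

lemma cellIndex_assembleFun (c : ℤ) (φ : ℤ → cellHomeo) (x : ℝ) :
    cellIndex c (assembleFun c φ x) = cellIndex c x := by
  apply cellIndex_eq (cellIndex_emod c x)
  · rw [assembleFun, add_sub_cancel_left]
    exact cellHomeo.neg_half_le_apply _ (neg_half_le_sub_cellIndex c x)
  · rw [assembleFun, add_sub_cancel_left]
    exact cellHomeo.apply_lt_half _ (sub_cellIndex_lt_half c x)

lemma assembleFun_assembleFun (c : ℤ) (φ ψ : ℤ → cellHomeo) (x : ℝ) :
    assembleFun c φ (assembleFun c ψ x) = assembleFun c (φ * ψ) x := by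
  rw [assembleFun, cellIndex_assembleFun, assembleFun, add_sub_cancel_left]
  rfl

lemma assembleFun_one (c : ℤ) (x : ℝ) : assembleFun c 1 x = x :=
  add_sub_cancel _ _

lemma assembleFun_strictMono (c : ℤ) (φ : ℤ → cellHomeo) : StrictMono (assembleFun c φ) := by
  intro x y hxy
  rcases (cellIndex_mono c hxy.le).eq_or_lt with h | h
  · rw [assembleFun, assembleFun, h]
    gcongr
  · have hle : cellIndex c x + 2 ≤ cellIndex c y := by
      have := cellIndex_emod c x
      have := cellIndex_emod c y
      omega
    have hle' : (cellIndex c x + 2 : ℝ) ≤ cellIndex c y := by exact_mod_cast hle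
    have := sub_cellIndex_lt_half c (assembleFun c φ x)
    have := neg_half_le_sub_cellIndex c (assembleFun c φ y)
    rw [cellIndex_assembleFun] at *
    linarith

/-- The homeomorphism of the line which acts by a translate of `φ m` on each cell of index
`m ≡ c (mod 2)`. -/
noncomputable def assemble (c : ℤ) : (ℤ → cellHomeo) →* (ℝ ≃o ℝ) where
  toFun φ := StrictMono.orderIsoOfRightInverse (assembleFun c φ) (assembleFun_strictMono c φ)
    (assembleFun c φ⁻¹) fun x => by
      rw [assembleFun_assembleFun, mul_inv_cancel, assembleFun_one]
  map_one' := by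
    ext x
    exact assembleFun_one c x
  map_mul' φ ψ := by
    ext x
    exact (assembleFun_assembleFun c φ ψ x).symm

lemma assemble_apply (φ : ℤ → cellHomeo) {c m : ℤ} (hm : m % 2 = c % 2) {x : ℝ}
    (hx : x ∈ cell m) : assemble c φ x = isomConj (m / 2) 1 (φ m) x := by
  have h : assemble c φ x =
      cellIndex c x / 2 + (φ (cellIndex c x) : ℝ ≃o ℝ) (x - cellIndex c x / 2) := rfl
  obtain ⟨h₁, h₂⟩ := abs_le.1 (mem_cell_iff_abs.1 hx)
  rw [h, isomConj_apply]
  rcases h₂.lt_or_eq with h₂ | h₂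
  · simp [cellIndex_eq hm h₁ h₂]
  · have hc : cellIndex c x = m + 2 := cellIndex_eq (by omega)
      (by push_cast; linarith) (by push_cast; linarith)
    have e : x - ((m + 2 : ℤ) : ℝ) / 2 = -(1 / 2) := by push_cast; linarith
    rw [hc, e, cellHomeo.apply_neg_half, h₂, Units.val_one, Int.cast_one, one_mul, one_mul,
      cellHomeo.apply_half]
    push_cast
    ring

lemma eq_assemble {c : ℤ} {φ : ℤ → cellHomeo} {z : ℝ ≃o ℝ}
    (h : ∀ m, m % 2 = c % 2 → ∀ x ∈ cell m, z x = isomConj (m / 2) 1 (φ m) x) :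
    z = assemble c φ := by
  ext x
  obtain ⟨m, hm, hx⟩ := exists_mem_cell c x
  rw [h m hm x hx, assemble_apply φ hm hx]

lemma assemble_congr {c c' : ℤ} {φ φ' : ℤ → cellHomeo} (hc : c % 2 = c' % 2)
    (hφ : ∀ m, m % 2 = c % 2 → φ m = φ' m) : assemble c φ = assemble c' φ' :=
  eq_assemble fun m hm x hx => by
    rw [← hφ m (by omega), assemble_apply φ (by omega) hx]

open Classical in
/-- The family of cell homeomorphisms with value `f`, reflected at the indices where `s = -1`, on
`E`, and trivial elsewhere. -/
noncomputable def pattern (s : ℤ → ℤˣ) (E : Set ℤ) : cellHomeo →* (ℤ → cellHomeo) :=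
  MonoidHom.pi fun m => if m ∈ E then cellHomeo.mirror (s m) else 1

section Pattern

variable {s : ℤ → ℤˣ} {E : Set ℤ} {m : ℤ}

lemma pattern_of_mem (hm : m ∈ E) (f : cellHomeo) : pattern s E f m = cellHomeo.mirror (s m) f := by
  simp [pattern, hm]

lemma pattern_of_notMem (hm : m ∉ E) (f : cellHomeo) : pattern s E f m = 1 := by
  simp [pattern, hm]

lemma pattern_empty (f : cellHomeo) : pattern s ∅ f = 1 :=
  funext fun _ => pattern_of_notMem (Set.notMem_empty _) f

lemma pattern_commutator (E E' : Set ℤ) (a b : cellHomeo) :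
    ⁅pattern s E a, pattern s E' b⁆ = pattern s (E ∩ E') ⁅a, b⁆ := by
  ext1 m
  rw [commutatorElement_def, Pi.mul_apply, Pi.mul_apply, Pi.mul_apply, Pi.inv_apply, Pi.inv_apply,
    ← commutatorElement_def]
  by_cases hm : m ∈ E
  · by_cases hm' : m ∈ E'
    · rw [pattern_of_mem hm, pattern_of_mem hm', pattern_of_mem (Set.mem_inter hm hm'),
        map_commutatorElement]
    · rw [pattern_of_notMem hm', pattern_of_notMem fun h : m ∈ E ∩ E' => hm' h.2,
        commutatorElement_one_right]
  · rw [pattern_of_notMem hm, pattern_of_notMem fun h : m ∈ E ∩ E' => hm h.1,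
      commutatorElement_one_left]

lemma pattern_mul_compl (E : Set ℤ) (f : cellHomeo) :
    pattern s E f * pattern s Eᶜ f = pattern s Set.univ f := by
  ext1 m
  rw [Pi.mul_apply, pattern_of_mem (Set.mem_univ m)]
  by_cases hm : m ∈ E
  · rw [pattern_of_mem hm, pattern_of_notMem (by simpa), mul_one]
  · rw [pattern_of_notMem hm, pattern_of_mem hm, one_mul]

lemma pattern_univ_conj (E : Set ℤ) (p f : cellHomeo) :
    pattern s Set.univ p * pattern s E f * (pattern s Set.univ p)⁻¹ =
      pattern s E (p * f * p⁻¹) := by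
  ext1 m
  rw [Pi.mul_apply, Pi.mul_apply, Pi.inv_apply]
  by_cases hm : m ∈ E
  · simp only [pattern_of_mem hm, pattern_of_mem (Set.mem_univ m), map_mul, map_inv]
  · simp only [pattern_of_notMem hm, mul_one, mul_inv_cancel]

lemma pattern_neg_mirror (E : Set ℤ) (f : cellHomeo) :
    pattern (-s) E (cellHomeo.mirror (-1) f) = pattern s E f := by
  ext1 m
  by_cases hm : m ∈ E
  · rw [pattern_of_mem hm, pattern_of_mem hm, cellHomeo.mirror_mirror, Pi.neg_apply, neg_mul_neg,
      mul_one]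
  · rw [pattern_of_notMem hm, pattern_of_notMem hm]

lemma pattern_eq_of_sign (s o : ℤ → ℤˣ) (E : Set ℤ) (f : cellHomeo) :
    pattern o E f = pattern s (E ∩ {m | s m * o m = 1}) f *
      pattern s (E ∩ {m | s m * o m = 1}ᶜ) (cellHomeo.mirror (-1) f) := by
  ext1 m
  rw [Pi.mul_apply]
  by_cases hm : m ∈ E
  · rw [pattern_of_mem hm]
    by_cases hso : s m * o m = 1
    · rw [pattern_of_mem (Set.mem_inter hm hso), pattern_of_notMem fun h => h.2 hso, mul_one,
        eq_inv_of_mul_eq_one_left hso, Int.units_inv_eq_self]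
    · have h : s m * -1 = o m := by
        rcases Int.units_eq_one_or (s m) with h | h <;>
          rcases Int.units_eq_one_or (o m) with h' | h' <;> simp_all
      rw [pattern_of_notMem fun h => hso h.2, pattern_of_mem (Set.mem_inter hm hso), one_mul,
        cellHomeo.mirror_mirror, h]
  · rw [pattern_of_notMem hm, pattern_of_notMem fun h => hm h.1, pattern_of_notMem fun h => hm h.1,
      one_mul]

end Pattern

/-- The homeomorphism of the line acting by a copy of `f`, reflected where `s = -1`, on each cell
whose index lies in `E` and is congruent to `c` modulo `2`. -/
noncomputable def copies (s : ℤ → ℤˣ) (c : ℤ) (E : Set ℤ) : cellHomeo →* (ℝ ≃o ℝ) :=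
  (assemble c).comp (pattern s E)

section

variable {s : ℤ → ℤˣ} {c m : ℤ} {E E' : Set ℤ} {x : ℝ}

lemma copies_eq (f : cellHomeo) : copies s c E f = assemble c (pattern s E f) := rfl

lemma copies_mul_copies_compl (s : ℤ → ℤˣ) (c : ℤ) (E : Set ℤ) (f : cellHomeo) :
    copies s c E f * copies s c Eᶜ f = copies s c Set.univ f := by
  rw [copies_eq, copies_eq, copies_eq, ← map_mul, pattern_mul_compl]

lemma copies_apply_of_mem (hm : m % 2 = c % 2) (hmE : m ∈ E) (hx : x ∈ cell m) (f : cellHomeo) :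
    copies s c E f x = isomConj (m / 2) (s m) f x := by
  rw [copies_eq, assemble_apply _ hm hx, pattern_of_mem hmE, cellHomeo.coe_mirror,
    isomConj_isomConj, one_mul, mul_zero, add_zero]

lemma copies_apply_of_notMem (hm : m % 2 = c % 2) (hmE : m ∉ E) (hx : x ∈ cell m)
    (f : cellHomeo) : copies s c E f x = x := by
  rw [copies_eq, assemble_apply _ hm hx, pattern_of_notMem hmE, OneMemClass.coe_one, map_one,
    RelIso.one_apply]

end

/-- `G` contains the copies over `E`, with orientations `s`, of all the elements of `cellPL`. -/
def ContainsCopies (G : Subgroup (ℝ ≃o ℝ)) (s : ℤ → ℤˣ) (E : Set ℤ) : Prop :=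
  ∀ (c : ℤ) (f : cellHomeo), (f : ℝ ≃o ℝ) ∈ cellPL → copies s c E f ∈ G

namespace ContainsCopies

variable {G : Subgroup (ℝ ≃o ℝ)} {s : ℤ → ℤˣ} {E E' : Set ℤ}

lemma of_commutator (h : ∀ (c : ℤ) (a b : cellHomeo), (a : ℝ ≃o ℝ) ∈ cellPL →
    (b : ℝ ≃o ℝ) ∈ cellPL → copies s c E ⁅a, b⁆ ∈ G) : ContainsCopies G s E := by
  intro c f hf
  have hle : ⁅cellPL, cellPL⁆ ≤ (G.comap (copies s c E)).map cellHomeo.subtype :=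
    Subgroup.commutator_le.2 fun a ha b hb =>
      ⟨⁅⟨a, cellPL_le_cellHomeo ha⟩, ⟨b, cellPL_le_cellHomeo hb⟩⁆, h c _ _ ha hb, rfl⟩
  obtain ⟨f', hf', h⟩ := hle (cellPL_le_commutator hf)
  rwa [← Subtype.ext h]

lemma inter (hE : ContainsCopies G s E) (hE' : ContainsCopies G s E') :
    ContainsCopies G s (E ∩ E') := by
  refine of_commutator fun c a b ha hb => ?_
  rw [copies_eq, ← pattern_commutator, map_commutatorElement]
  have ha := hE c a ha
  have hb := hE' c b hb
  exact mul_mem (mul_mem (mul_mem ha hb) (inv_mem ha)) (inv_mem hb)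

lemma compl (h : ContainsCopies G s Set.univ) (hE : ContainsCopies G s E) :
    ContainsCopies G s Eᶜ := by
  intro c f hf
  have : copies s c Eᶜ f = (copies s c E f)⁻¹ * copies s c Set.univ f := by
    rw [eq_inv_mul_iff_mul_eq, copies_mul_copies_compl]
  exact this ▸ mul_mem (inv_mem (hE c f hf)) (h c f hf)

lemma union (h : ContainsCopies G s Set.univ) (hE : ContainsCopies G s E)
    (hE' : ContainsCopies G s E') : ContainsCopies G s (E ∪ E') := by
  rw [← compl_compl (E ∪ E'), Set.compl_union]
  exact h.compl ((h.compl hE).inter (h.compl hE'))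

lemma empty (G : Subgroup (ℝ ≃o ℝ)) (s : ℤ → ℤˣ) : ContainsCopies G s ∅ := fun c f _ => by
  rw [copies_eq, pattern_empty, map_one]
  exact one_mem G

lemma emod_two (h : ContainsCopies G s Set.univ) (d : ℤ) :
    ContainsCopies G s {m | m % 2 = d % 2} := by
  intro c f hf
  by_cases hc : c % 2 = d % 2
  · have : copies s c {m | m % 2 = d % 2} f = copies s c Set.univ f :=
      assemble_congr rfl fun m hm => by
        rw [pattern_of_mem (by simpa using hm.trans hc), pattern_of_mem (Set.mem_univ m)]
    exact this ▸ h c f hf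
  · have : copies s c {m | m % 2 = d % 2} f = assemble c 1 :=
      assemble_congr rfl fun m hm => pattern_of_notMem (by simpa [hm] using hc) f
    rw [this, map_one]
    exact one_mem G

lemma neg (hE : ContainsCopies G s E) : ContainsCopies G (-s) E := by
  intro c f hf
  have := hE c (cellHomeo.mirror (-1) f) (isomConj_zero_mem_cellPL _ hf)
  rwa [copies_eq, ← pattern_neg_mirror, cellHomeo.mirror_mirror, neg_one_mul, neg_neg,
    cellHomeo.mirror_one] at this

end ContainsCopies

end Copies

/-! ### Recognising local patterns -/

section Front

open scoped commutatorElement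

/-- The support of `f` is contained in a compact subset of the open front half `(0, 1/2)` of the
cell. -/
def IsFrontSupported (f : ℝ ≃o ℝ) : Prop :=
  ∃ u v : ℝ, 0 < u ∧ v < 1 / 2 ∧ ∀ x, x ≤ u ∨ v ≤ x → f x = x

namespace IsFrontSupported

variable {f : ℝ ≃o ℝ} {x : ℝ}

lemma apply_of_nonpos (hf : IsFrontSupported f) (hx : x ≤ 0) : f x = x := by
  obtain ⟨u, v, hu, -, h⟩ := hf
  exact h x (.inl (hx.trans hu.le))

lemma apply_of_half_le (hf : IsFrontSupported f) (hx : 1 / 2 ≤ x) : f x = x := by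
  obtain ⟨u, v, -, hv, h⟩ := hf
  exact h x (.inr (hv.le.trans hx))

lemma isomConj_mem_cellPL (hf : IsFrontSupported f) (hPL : f ∈ dyadicPL) (η : ℤˣ) :
    isomConj (-η / 2) η f ∈ cellPL := by
  have hshift : isomConj (-(1 / 2)) 1 f ∈ cellPL := by
    obtain ⟨u, v, hu, hv, h⟩ := hf
    refine ⟨max (1 / 2 - u) 0, max_lt (by linarith) (by norm_num),
      isomConj_mem_dyadicPL IsDyadic.one.div_two.neg 1 hPL, fun x hx => ?_⟩
    obtain ⟨hux, -⟩ := max_le_iff.1 hx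
    have : f (x + 1 / 2) = x + 1 / 2 := h _ <| by
      rcases abs_cases x with ⟨-, hx⟩ | ⟨hx, -⟩
      · exact .inr (by linarith)
      · exact .inl (by linarith)
    rw [isomConj_apply, Units.val_one, Int.cast_one, one_mul, one_mul, sub_neg_eq_add, this]
    ring
  have := isomConj_zero_mem_cellPL η hshift
  rwa [isomConj_isomConj, mul_one, zero_add, mul_neg, mul_one_div, ← neg_div] at this

lemma of_push {p : ℝ ≃o ℝ} {r : ℝ} (hp : p ∈ cellHomeo) (hf : ∀ x, r ≤ |x| → f x = x)
    (hr : 0 < r) (hr' : r < 1 / 2) (hpr : r < p (-r)) : IsFrontSupported (p * f * p⁻¹) := by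
  refine ⟨p (-r), p r, hr.trans hpr, cellHomeo.apply_lt_half ⟨p, hp⟩ hr', fun x hx => ?_⟩
  have : r ≤ |p⁻¹ x| := by
    rcases hx with hx | hx
    · exact (le_neg_of_le_neg (p.symm_apply_le.2 hx)).trans (neg_le_abs _)
    · exact (p.le_symm_apply.2 hx).trans (le_abs_self _)
  rw [RelIso.mul_apply, RelIso.mul_apply, hf _ this, RelIso.apply_inv_self]

/-- A front-supported `f` seen from the neighbouring cell centre, that is the copy of `f` at
`-η / 2` with orientation `η`. -/
noncomputable def toNeighbour (hf : IsFrontSupported f) (η : ℤˣ) : cellHomeo :=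
  ⟨isomConj (-η / 2) η f, fun x hx => by
    have : f (η * (x - -η / 2)) = η * (x - -η / 2) := by
      have e : (η : ℝ) * (x - -η / 2) = η * x + 1 / 2 := by
        linear_combination sign_mul_self η / 2
      have hx' : 1 / 2 ≤ |η * x| := by
        rcases Int.units_eq_one_or η with rfl | rfl <;> simpa using hx
      rcases le_abs.1 hx' with h | h
      · exact hf.apply_of_half_le (by linarith)
      · exact hf.apply_of_nonpos (by linarith)
    rw [isomConj_apply, this, sign_mul_sign_mul]
    ring⟩

end IsFrontSupported

lemma exists_mem_cellPL_isFrontSupported_conj {a b : ℝ ≃o ℝ} (ha : a ∈ cellPL) (hb : b ∈ cellPL) :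
    ∃ p ∈ cellPL, IsFrontSupported (p * a * p⁻¹) ∧ IsFrontSupported (p * b * p⁻¹) := by
  obtain ⟨r, hr, hr₂, -, ha⟩ := exists_pos_of_mem_cellPL ha
  obtain ⟨r', -, hr₂', -, hb⟩ := exists_pos_of_mem_cellPL hb
  have hR : 0 < max r r' := hr.trans_le (le_max_left r r')
  have hR₂ : max r r' < 1 / 2 := max_lt hr₂ hr₂'
  obtain ⟨p, hp, hpr, -⟩ := exists_push hR hR₂
  have hp' := cellPL_le_cellHomeo hp
  exact ⟨p, hp, .of_push hp' (fun x hx => ha x ((le_max_left r r').trans hx)) hR hR₂ hpr,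
    .of_push hp' (fun x hx => hb x ((le_max_right r r').trans hx)) hR hR₂ hpr⟩

open Classical in
/-- The copy of `b` in direction `ε` from `m / 2` when the neighbouring cell `m + ε` belongs to `E`
and is oriented in direction `η ε`, and the identity otherwise. -/
noncomputable def halfCopy (s : ℤ → ℤˣ) (E : Set ℤ) (η : ℤˣ) (b : cellHomeo) (m : ℤ) (ε : ℤˣ) :
    cellHomeo :=
  if m + ε ∈ E ∧ s (m + ε) = η * ε then cellHomeo.mirror ε b else 1

section

variable {s : ℤ → ℤˣ} {E : Set ℤ} {η : ℤˣ} {a b : cellHomeo} {m : ℤ}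

lemma mirror_apply_of_nonpos (hb : IsFrontSupported b) {ε : ℤˣ} {x : ℝ} (hx : ε * x ≤ 0) :
    (cellHomeo.mirror ε b : ℝ ≃o ℝ) x = x := by
  rw [cellHomeo.mirror_apply, hb.apply_of_nonpos hx, sign_mul_sign_mul]

lemma halfCopy_apply_of_nonpos (hb : IsFrontSupported b) {ε : ℤˣ} {x : ℝ} (hx : ε * x ≤ 0) :
    (halfCopy s E η b m ε : ℝ ≃o ℝ) x = x := by
  unfold halfCopy
  split_ifs
  · exact mirror_apply_of_nonpos hb hx
  · rfl

lemma commute_halfCopy_neg {f : cellHomeo} {ε : ℤˣ} (hb : IsFrontSupported b)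
    (hf : ∀ x : ℝ, ε * x ≤ 0 → (f : ℝ ≃o ℝ) x = x) : Commute f (halfCopy s E η b m (-ε)) := by
  refine Subtype.ext (commute_of_forall_apply_eq_or fun x => ?_)
  refine (le_total (ε * x) 0).imp (hf x) fun hx => halfCopy_apply_of_nonpos hb ?_
  rw [Units.val_neg, Int.cast_neg, neg_mul]
  exact neg_nonpos.2 hx

lemma halfCopy_mul_halfCopy_neg (hb : IsFrontSupported b) (ε : ℤˣ) :
    halfCopy s E η b m ε * halfCopy s E η b m (-ε) =
      halfCopy s E η b m 1 * halfCopy s E η b m (-1) := by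
  rcases Int.units_eq_one_or ε with rfl | rfl
  · rfl
  · rw [neg_neg]
    exact (commute_halfCopy_neg hb fun x => halfCopy_apply_of_nonpos hb).symm

lemma isomConj_halfCopy_apply (hb : IsFrontSupported b) {c : ℤ} {ε : ℤˣ} {x : ℝ}
    (hm : (m + ε) % 2 = c % 2) (hx : 0 ≤ ε * (x - m / 2)) (hx' : ε * (x - m / 2) ≤ 1 / 2) :
    isomConj (m / 2) 1 (halfCopy s E η b m ε) x = copies s c E (hb.toNeighbour η) x := by
  have hcell : x ∈ cell (m + ε) := mem_cell_iff_abs.2 <| abs_le.2 <| by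
    rcases Int.units_eq_one_or ε with rfl | rfl <;> push_cast at * <;> constructor <;> linarith
  by_cases hE : m + ε ∈ E
  · rw [copies_apply_of_mem hm hE hcell, IsFrontSupported.toNeighbour, isomConj_isomConj]
    by_cases hs : s (m + ε) = η * ε
    · have hhalf : halfCopy s E η b m ε = cellHomeo.mirror ε b := if_pos ⟨hE, hs⟩
      rw [hhalf, hs, cellHomeo.coe_mirror, isomConj_isomConj]
      have hcentre : ((m + ε : ℤ) : ℝ) / 2 + ((η * ε : ℤˣ) : ℤ) * (-η / 2) =
          m / 2 + ((1 : ℤˣ) : ℤ) * 0 := by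
        push_cast
        linear_combination (-ε / 2 : ℝ) * sign_mul_self η
      rw [hcentre, mul_right_comm, Int.units_mul_self]
    · have hhalf : halfCopy s E η b m ε = 1 := if_neg fun h => hs h.2
      have hs : s (m + ε) * η = -ε := by
        rw [Int.units_ne_iff_eq_neg.1 hs, neg_mul, mul_right_comm, Int.units_mul_self, one_mul]
      have hcentre : ((m + ε : ℤ) : ℝ) / 2 + s (m + ε) * (-η / 2) = m / 2 + ε := by
        have : (s (m + ε) * η : ℝ) = -ε := by exact_mod_cast congrArg (fun u : ℤˣ => (u : ℤ)) hs
        push_cast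
        linear_combination -this / 2
      have hfix : (b : ℝ ≃o ℝ) ((-ε : ℤˣ) * (x - (m / 2 + ε))) = (-ε : ℤˣ) * (x - (m / 2 + ε)) :=
        hb.apply_of_half_le <| by
          push_cast
          linear_combination hx' - sign_mul_self ε
      rw [hhalf, hs, hcentre, OneMemClass.coe_one, map_one, RelIso.one_apply, isomConj_apply, hfix,
        sign_mul_sign_mul, add_sub_cancel]
  · have hhalf : halfCopy s E η b m ε = 1 := if_neg fun h => hE h.1
    rw [copies_apply_of_notMem hm hE hcell, hhalf, OneMemClass.coe_one, map_one, RelIso.one_apply]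

lemma copies_toNeighbour (hb : IsFrontSupported b) (c : ℤ) :
    copies s (c + 1) E (hb.toNeighbour η) =
      assemble c (fun m => halfCopy s E η b m 1 * halfCopy s E η b m (-1)) := by
  refine eq_assemble fun m hm x hx => ?_
  obtain ⟨ε, hε⟩ : ∃ ε : ℤˣ, 0 ≤ ε * (x - m / 2) := by
    rcases le_total 0 (x - m / 2) with h | h
    exacts [⟨1, by simpa using h⟩, ⟨-1, by simpa using h⟩]
  have hε' : ε * (x - m / 2) ≤ 1 / 2 := by
    have := abs_le.1 (mem_cell_iff_abs.1 hx)
    rcases Int.units_eq_one_or ε with rfl | rfl <;> push_cast <;> linarith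
  have hfix : isomConj (m / 2) 1 (halfCopy s E η b m (-ε)) x = x := by
    rw [isomConj_apply, halfCopy_apply_of_nonpos hb]
    · simp
    · simpa using hε
  rw [← halfCopy_mul_halfCopy_neg hb ε, Subgroup.coe_mul, map_mul, RelIso.mul_apply, hfix,
    isomConj_halfCopy_apply hb (c := c + 1) _ hε hε']
  rcases Int.units_eq_one_or ε with rfl | rfl <;> push_cast <;> omega

lemma commutator_mirror_halfCopy (ha : IsFrontSupported a) (hb : IsFrontSupported b) :
    ⁅cellHomeo.mirror (s m) a, halfCopy s E η b m 1 * halfCopy s E η b m (-1)⁆ =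
      pattern s {m | m + s m ∈ E ∧ s (m + s m) = η * s m} ⁅a, b⁆ m := by
  have hcomm : Commute (cellHomeo.mirror (s m) a) (halfCopy s E η b m (-s m)) :=
    commute_halfCopy_neg hb fun x => mirror_apply_of_nonpos ha
  rw [← halfCopy_mul_halfCopy_neg hb (s m), commutatorElement_mul_right_eq_mul_conj,
    hcomm.commutator_eq, mul_one, mul_inv_cancel_right]
  by_cases h : m + s m ∈ E ∧ s (m + s m) = η * s m
  · have hhalf : halfCopy s E η b m (s m) = cellHomeo.mirror (s m) b := if_pos h
    rw [hhalf, pattern_of_mem h, map_commutatorElement]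
  · have hhalf : halfCopy s E η b m (s m) = 1 := if_neg h
    rw [hhalf, pattern_of_notMem h, commutatorElement_one_right]

lemma copies_commutator_toNeighbour (ha : IsFrontSupported a) (hb : IsFrontSupported b) (c : ℤ) :
    ⁅copies s c Set.univ a, copies s (c + 1) E (hb.toNeighbour η)⁆ =
      copies s c {m | m + s m ∈ E ∧ s (m + s m) = η * s m} ⁅a, b⁆ := by
  rw [copies_toNeighbour, copies_eq, ← map_commutatorElement, copies_eq]
  congr 1
  ext1 m
  rw [← commutator_mirror_halfCopy ha hb, ← pattern_of_mem (Set.mem_univ m)]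
  rfl

end

end Front

/-- The sign of the index `m + s m * i` relative to that of `m`: the label at distance `i` in the
direction in which the cell of index `m` is oriented. -/
def relSign (s : ℤ → ℤˣ) (m i : ℤ) : ℤˣ := s m * s (m + s m * i)

lemma relSign_zero (s : ℤ → ℤˣ) (m : ℤ) : relSign s m 0 = 1 := by
  simp [relSign]

lemma relSign_add (s : ℤ → ℤˣ) (m i j : ℤ) :
    relSign s m (i + j) = relSign s m i * relSign s (m + s m * i) (relSign s m i * j) := by
  have h (a b : ℤˣ) : (b : ℤ) * (((a * b : ℤˣ) : ℤ) * j) = a * j := by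
    rw [← mul_assoc, ← Units.val_mul, mul_left_comm, Int.units_mul_self, mul_one]
  simp only [relSign, h, mul_assoc, mul_add, add_assoc]
  rw [← mul_assoc (s (m + _)), Int.units_mul_self, one_mul]

namespace ContainsCopies

variable {G : Subgroup (ℝ ≃o ℝ)} {s : ℤ → ℤˣ} {E : Set ℤ}

section Front

open scoped commutatorElement

lemma front (h : ContainsCopies G s Set.univ) (hE : ContainsCopies G s E) (η : ℤˣ) :
    ContainsCopies G s {m | m + s m ∈ E ∧ s (m + s m) = η * s m} := by
  refine of_commutator fun c a b ha hb => ?_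
  obtain ⟨p, hp, ha', hb'⟩ := exists_mem_cellPL_isFrontSupported_conj ha hb
  obtain ⟨p, rfl⟩ : ∃ p' : cellHomeo, p' = p := ⟨⟨p, cellPL_le_cellHomeo hp⟩, rfl⟩
  rw [← Subgroup.coe_mul, ← Subgroup.coe_inv, ← Subgroup.coe_mul] at ha' hb'
  have hb_mem : isomConj (-η / 2) η (p * b * p⁻¹ : cellHomeo) ∈ cellPL :=
    hb'.isomConj_mem_cellPL (cellPL_le_dyadicPL (mul_mem (mul_mem hp hb) (inv_mem hp))) η
  have hx := h c (p * a * p⁻¹) (mul_mem (mul_mem hp ha) (inv_mem hp))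
  have hy := hE (c + 1) (hb'.toNeighbour η) hb_mem
  have hG := G.commutator_le_self (Subgroup.commutator_mem_commutator hx hy)
  rw [copies_commutator_toNeighbour ha' hb', copies_eq, ← conjugate_commutatorElement,
    ← pattern_univ_conj, map_mul, map_mul, map_inv] at hG
  have hu := h c p hp
  exact (G.mul_mem_cancel_left hu).1 ((G.mul_mem_cancel_right (inv_mem hu)).1 hG)

end Front

lemma back (h : ContainsCopies G s Set.univ) (hE : ContainsCopies G s E) (η : ℤˣ) :
    ContainsCopies G s {m | m - s m ∈ E ∧ s (m - s m) = η * s m} := by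
  have := (h.neg.front hE.neg η).neg
  simpa [← sub_eq_add_neg] using this

lemma relSign_unit (h : ContainsCopies G s Set.univ) (hE : ContainsCopies G s E) (d η : ℤˣ) :
    ContainsCopies G s {m | m + s m * d ∈ E ∧ relSign s m d = η} := by
  have e (m : ℤ) : relSign s m d = η ↔ s (m + s m * d) = η * s m := by
    rw [relSign, mul_comm, ← eq_mul_inv_iff_mul_eq, Int.units_inv_eq_self]
  simp only [e]
  rcases Int.units_eq_one_or d with rfl | rfl
  · simpa using h.front hE η
  · simpa [← sub_eq_add_neg] using h.back hE η

lemma relSign_eq (h : ContainsCopies G s Set.univ) (i : ℤ) (η : ℤˣ) :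
    ContainsCopies G s {m | relSign s m i = η} := by
  suffices ∀ n : ℕ, ∀ i : ℤ, i.natAbs = n → ContainsCopies G s {m | relSign s m i = 1} by
    rcases Int.units_eq_one_or η with rfl | rfl
    · exact this _ i rfl
    · simpa only [Set.compl_ofPred, ← ne_eq, Int.units_ne_iff_eq_neg] using h.compl (this _ i rfl)
  intro n
  induction n with
  | zero =>
    intro i hi
    simpa [Int.natAbs_eq_zero.1 hi, relSign_zero] using h
  | succ n ih =>
    intro i hi
    obtain ⟨d, e, rfl, he⟩ : ∃ (d : ℤˣ) (e : ℤ), i = d + e ∧ e.natAbs = n := by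
      rcases Int.natAbs_eq i with h | h
      exacts [⟨1, n, by push_cast; omega, by simp⟩, ⟨-1, -n, by push_cast; omega, by simp⟩]
    have h₁ := h.relSign_unit (ih e he) d 1
    have h₂ := h.relSign_unit (h.compl (ih (-e) (by simpa))) d (-1)
    convert h.union h₁ h₂ using 1
    ext m
    rw [Set.mem_union, Set.mem_ofPred_eq, relSign_add]
    rcases Int.units_eq_one_or (relSign s m d) with hd | hd
    · simp [hd]
    · simp [hd, Int.units_ne_iff_eq_neg, neg_eq_iff_eq_neg]

lemma of_finite {ι : Type*} [Finite ι] (h : ContainsCopies G s Set.univ) (X : ι → Set ℤ)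
    (hX : ∀ i, ContainsCopies G s (X i))
    (hE : ∀ m m', (∀ i, m ∈ X i ↔ m' ∈ X i) → m ∈ E → m' ∈ E) : ContainsCopies G s E := by
  let atom (t : Set ι) : Set ℤ := {m | {i | m ∈ X i} = t}
  have hatom (t : Set ι) : ContainsCopies G s (atom t) := by
    have hinf : InfClosed {E | ContainsCopies G s E} := fun _ hE _ hE' => hE.inter hE'
    have : atom t = ⨅ i, {m | m ∈ X i ↔ i ∈ t} := by
      ext m
      simp [atom, Set.ext_iff]
    rw [this]
    refine hinf.iInf_mem h fun i => ?_
    by_cases hi : i ∈ t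
    · simpa [hi] using hX i
    · simp only [hi, iff_false]
      exact h.compl (hX i)
  have hsup : SupClosed {E | ContainsCopies G s E} := fun _ hE _ hE' => h.union hE hE'
  have : E = ⨆ t : {t | (E ∩ atom t).Nonempty}, atom t := by
    ext m
    simp only [Set.iSup_eq_iUnion, Set.mem_iUnion]
    refine ⟨fun hm => ⟨⟨_, m, hm, rfl⟩, rfl⟩, ?_⟩
    rintro ⟨⟨_, m', hm', rfl⟩, hm⟩
    exact hE m' m (fun i => (Set.ext_iff.1 hm i).symm) hm'
  rw [this]
  exact hsup.iSup_mem (.empty G s) fun t => hatom t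

end ContainsCopies

/-- The indices `m` and `m'` have the same parity, and the same labels within distance `R` when read
in the direction of their orientations. -/
def Similar (s : ℤ → ℤˣ) (R : ℕ) (m m' : ℤ) : Prop :=
  m % 2 = m' % 2 ∧ ∀ i : ℤ, |i| ≤ R → relSign s m i = relSign s m' i

namespace Similar

variable {s : ℤ → ℤˣ} {R : ℕ} {m m' m'' : ℤ}

lemma symm (h : Similar s R m m') : Similar s R m' m :=
  ⟨h.1.symm, fun i hi => (h.2 i hi).symm⟩

lemma trans (h : Similar s R m m') (h' : Similar s R m' m'') : Similar s R m m'' :=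
  ⟨h.1.trans h'.1, fun i hi => (h.2 i hi).trans (h'.2 i hi)⟩

lemma mono {R' : ℕ} (hR : R' ≤ R) (h : Similar s R m m') : Similar s R' m m' :=
  ⟨h.1, fun i hi => h.2 i (hi.trans (Int.ofNat_le.2 hR))⟩

lemma shift {k : ℕ} {i : ℤ} (hi : |i| ≤ k) (h : Similar s (R + k) m m') :
    Similar s R (m + s m * i) (m' + s m' * i) := by
  have hsign : relSign s m i = relSign s m' i := h.2 i (by push_cast; omega)
  constructor
  · have := h.1
    rcases Int.units_eq_one_or (s m) with h₁ | h₁ <;>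
      rcases Int.units_eq_one_or (s m') with h₂ | h₂ <;>
      rw [h₁, h₂] <;> push_cast <;> omega
  · intro j hj
    have hj' : |relSign s m i * j| ≤ R := by
      rwa [abs_sign_mul_int]
    have := h.2 (i + relSign s m i * j) ((abs_add_le _ _).trans (by push_cast; omega))
    rw [relSign_add, relSign_add, sign_mul_sign_mul_int, ← hsign, sign_mul_sign_mul_int] at this
    exact mul_left_cancel this

end Similar

/-- A set of indices such that membership only depends on the labels within a bounded distance. -/
def IsLocal (s : ℤ → ℤˣ) (E : Set ℤ) : Prop :=
  ∃ R : ℕ, ∀ m m', Similar s R m m' → m ∈ E → m' ∈ E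

lemma IsLocal.compl {s : ℤ → ℤˣ} {E : Set ℤ} (hE : IsLocal s E) : IsLocal s Eᶜ := by
  obtain ⟨R, hR⟩ := hE
  exact ⟨R, fun m m' h hm hm' => hm (hR m' m h.symm hm')⟩

theorem ContainsCopies.of_isLocal {G : Subgroup (ℝ ≃o ℝ)} {s : ℤ → ℤˣ} {E : Set ℤ}
    (h : ContainsCopies G s Set.univ) (hE : IsLocal s E) : ContainsCopies G s E := by
  obtain ⟨R, hR⟩ := hE
  let X : Option (Finset.Icc (-R : ℤ) R) → Set ℤ
    | none => {m | m % 2 = 0 % 2}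
    | some i => {m | relSign s m i = 1}
  refine h.of_finite X ?_ fun m m' hX => hR m m' ⟨?_, fun i hi => ?_⟩
  · rintro (_ | i)
    exacts [h.emod_two 0, h.relSign_eq i 1]
  · have : m % 2 = 0 % 2 ↔ m' % 2 = 0 % 2 := hX none
    omega
  · have hmem := Finset.mem_Icc.2 (abs_le.1 hi)
    have : relSign s m i = 1 ↔ relSign s m' i = 1 := hX (some ⟨i, hmem⟩)
    rcases Int.units_eq_one_or (relSign s m i) with h | h <;>
      rcases Int.units_eq_one_or (relSign s m' i) with h' | h' <;> simp_all

/-! ### The group generated by the maps `ζ` and `χ` -/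

section Generators

/-- The orientation of the letter of `ρ` at the index `m`: `1` for `a` and `b`, and `-1` for their
inverses. -/
def orientation (ρ : ℤ → Letter) (m : ℤ) : ℤˣ := if ρ m = .a ∨ ρ m = .b then 1 else -1

/-- A homeomorphism of `[0, 1]` transported to the cell `[-1/2, 1/2]`. -/
noncomputable def recentre (ν : ℝ ≃o ℝ) (h : ∀ x ∉ Set.Icc (0 : ℝ) 1, ν x = x) : cellHomeo :=
  ⟨isomConj (-(1 / 2)) 1 ν, fun x hx => by
    have h₀ : ν 0 = 0 := apply_eq_of_le_endpoint fun x hx => h x fun hx' => hx.not_ge hx'.1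
    have h₁ : ν 1 = 1 := apply_eq_of_ge_endpoint fun x hx => h x fun hx' => hx.not_ge hx'.2
    have hν : ν (x + 1 / 2) = x + 1 / 2 := by
      rcases le_abs'.1 hx with hx | hx
      · rcases hx.eq_or_lt with rfl | hx
        · simpa using h₀
        · exact h _ fun h' => by linarith [h'.1]
      · rcases hx.eq_or_lt with rfl | hx
        · rwa [add_halves]
        · exact h _ fun h' => by linarith [h'.2]
    simp [isomConj_apply, -one_div, hν]⟩

variable {ν : ℝ ≃o ℝ} {h : ∀ x ∉ Set.Icc (0 : ℝ) 1, ν x = x}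

lemma coe_recentre : (recentre ν h : ℝ ≃o ℝ) = isomConj (-(1 / 2)) 1 ν := rfl

lemma isomConj_recentre_one (c x : ℝ) :
    isomConj c 1 (recentre ν h) x = c - 1 / 2 + ν (x - (c - 1 / 2)) := by
  rw [coe_recentre, isomConj_isomConj, isomConj_apply]
  push_cast
  ring_nf

lemma isomConj_recentre_neg_one (c x : ℝ) :
    isomConj c (-1) (recentre ν h) x = c + 1 / 2 - ν (c + 1 / 2 - x) := by
  rw [coe_recentre, isomConj_isomConj, isomConj_apply]
  push_cast
  ring_nf

lemma eq_copies_univ {s : ℤ → ℤˣ} {c : ℤ} {f : cellHomeo} {z : ℝ ≃o ℝ}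
    (hz : ∀ m, m % 2 = c % 2 → ∀ x ∈ cell m, z x = isomConj (m / 2) (s m) f x) :
    z = copies s c Set.univ f :=
  eq_assemble fun m hm x hx => by
    rw [hz m hm x hx, pattern_of_mem (Set.mem_univ m), cellHomeo.coe_mirror, isomConj_isomConj,
      one_mul, mul_zero, add_zero]

variable {ρ : ℤ → Letter}

lemma eq_copies_of_isZeta {ζ : ℝ ≃o ℝ} (hρ : IsLabelling ρ) (hζ : IsZeta ρ ν ζ) :
    ζ = copies (orientation ρ) 1 Set.univ (recentre ν h) := by
  refine eq_copies_univ fun m hm x hx => ?_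
  obtain ⟨n, rfl⟩ : ∃ n, m = 2 * n + 1 := ⟨m / 2, by omega⟩
  push_cast [cell] at hx
  obtain ⟨hb, hB⟩ := hζ n x ⟨by linarith [hx.1], by linarith [hx.2]⟩
  rcases (hρ (2 * n + 1)).2 ⟨n, rfl⟩ with hn | hn
  · rw [hb hn, show orientation ρ (2 * n + 1) = 1 by simp [orientation, hn],
      isomConj_recentre_one]
    push_cast
    ring_nf
  · rw [hB hn, show orientation ρ (2 * n + 1) = -1 by simp [orientation, hn],
      isomConj_recentre_neg_one]
    push_cast
    ring_nf

lemma eq_copies_of_isChi {χ : ℝ ≃o ℝ} (hρ : IsLabelling ρ) (hχ : IsChi ρ ν χ) :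
    χ = copies (orientation ρ) 0 Set.univ (recentre ν h) := by
  refine eq_copies_univ fun m hm x hx => ?_
  obtain ⟨n, rfl⟩ : ∃ n, m = 2 * n := ⟨m / 2, by omega⟩
  push_cast [cell] at hx
  obtain ⟨ha, hA⟩ := hχ n x ⟨by linarith [hx.1], by linarith [hx.2]⟩
  rcases (hρ (2 * n)).1 ⟨n, two_mul n⟩ with hn | hn
  · rw [ha hn, show orientation ρ (2 * n) = 1 by simp [orientation, hn], isomConj_recentre_one]
    push_cast
    ring_nf
  · rw [hA hn, show orientation ρ (2 * n) = -1 by simp [orientation, hn],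
      isomConj_recentre_neg_one]
    push_cast
    ring_nf

lemma inH_isomConj_of_mem_cellPL {f : ℝ ≃o ℝ} (hf : f ∈ cellPL) : InH (isomConj (1 / 2) 1 f) := by
  obtain ⟨r, hr, hf, hfr⟩ := hf
  have hfix (x : ℝ) (hx : r ≤ |x - 1 / 2|) : isomConj (1 / 2) 1 f x = x := by
    rw [isomConj_apply, Units.val_one, Int.cast_one, one_mul, one_mul, hfr _ hx, add_sub_cancel]
  refine ⟨inThompsonF_of_mem_dyadicPL (isomConj_mem_dyadicPL IsDyadic.one.div_two 1 hf)
    fun x hx => hfix x ?_, 0, 1 / 2 - r, by linarith, fun t ht => ?_, fun t ht => ?_⟩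
  · contrapose! hx
    obtain ⟨h₁, h₂⟩ := abs_lt.1 hx
    exact ⟨by linarith, by linarith⟩
  · rw [hfix t (le_abs.2 (.inr (by linarith [ht.2]))), zpow_zero, one_mul]
  · rw [hfix t (le_abs.2 (.inl (by linarith [ht.1]))), zpow_zero, one_mul, add_sub_cancel]

lemma containsCopies_univ_of_generators {ι : Type*} {ν : ι → ℝ ≃o ℝ} {G : Subgroup (ℝ ≃o ℝ)}
    {s : ℤ → ℤˣ} (hH : ∀ f, InH f → f ∈ Subgroup.closure (Set.range ν))
    (hν : ∀ i, ∀ x ∉ Set.Icc (0 : ℝ) 1, ν i x = x)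
    (hG : ∀ i c, copies s c Set.univ (recentre (ν i) (hν i)) ∈ G) :
    ContainsCopies G s Set.univ := by
  intro c f hf
  have hle : Subgroup.closure (Set.range ν) ≤ ((G.comap (copies s c Set.univ)).map
      cellHomeo.subtype).comap (isomConj (-(1 / 2)) 1) := by
    rw [Subgroup.closure_le]
    rintro _ ⟨i, rfl⟩
    exact ⟨_, hG i c, rfl⟩
  obtain ⟨f', hf', hff'⟩ := hle (hH _ (inH_isomConj_of_mem_cellPL hf))
  rw [isomConj_isomConj, Units.val_one, Int.cast_one, one_mul, mul_one, neg_add_cancel,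
    isomConj_zero_one] at hff'
  rwa [← Subtype.ext hff']

end Generators

section Doubling

/-- The product of the conjugate of `w` at the point `-p` and the mirror conjugate of `w` at the
point `p`. For `w` supported in `[0, 1/4]` it realises the germ of `w` at `0` at both ends of the
cell if `p = 1/2`, and at both sides of the centre of the cell if `p = 0`. -/
noncomputable def doubled (p : ℝ) (w : ℝ ≃o ℝ) : ℝ ≃o ℝ := isomConj p (-1) w * isomConj (-p) 1 w

variable {w : ℝ ≃o ℝ} {p x : ℝ}

lemma doubled_mem_dyadicPL (hp : IsDyadic p) (hw : w ∈ dyadicPL) : doubled p w ∈ dyadicPL :=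
  mul_mem (isomConj_mem_dyadicPL hp _ hw) (isomConj_mem_dyadicPL hp.neg _ hw)

lemma doubled_apply_right (h : w (x + p) = x + p) : doubled p w x = p - w (p - x) := by
  rw [doubled, RelIso.mul_apply, isomConj_apply (-p), isomConj_apply]
  simp [h, sub_eq_add_neg]

variable (hw₀ : ∀ x ≤ 0, w x = x) (hw₁ : ∀ x, 1 / 4 ≤ x → w x = x)

include hw₁ in
lemma doubled_half_apply_right (hx : 0 ≤ x) : doubled (1 / 2) w x = 1 / 2 - w (1 / 2 - x) :=
  doubled_apply_right (hw₁ _ (by linarith))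

include hw₀ in
lemma doubled_zero_apply_left (hx : x ≤ 0) : doubled 0 w x = -w (-x) := by
  rw [doubled_apply_right (hw₀ _ (by linarith))]
  simp

include hw₀ hw₁

section

variable (hp : p = 0 ∨ p = 1 / 2)
include hp

lemma commute_doubled : Commute (isomConj p (-1) w) (isomConj (-p) 1 w) := by
  refine commute_of_forall_apply_eq_or fun x => ?_
  simp only [isomConj_apply]
  push_cast
  by_contra! h
  have h₁ := lt_of_not_ge (mt (hw₀ (-1 * (x - p))) fun e => h.1 (by rw [e]; ring))
  have h₂ := lt_of_not_ge (mt (hw₁ (-1 * (x - p))) fun e => h.1 (by rw [e]; ring))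
  have h₃ := lt_of_not_ge (mt (hw₀ (1 * (x - -p))) fun e => h.2 (by rw [e]; ring))
  have h₄ := lt_of_not_ge (mt (hw₁ (1 * (x - -p))) fun e => h.2 (by rw [e]; ring))
  rcases hp with rfl | rfl <;> linarith

lemma doubled_apply_left (h : w (p - x) = p - x) : doubled p w x = -p + w (x + p) := by
  rw [doubled, (commute_doubled hw₀ hw₁ hp).eq, RelIso.mul_apply, isomConj_apply p, isomConj_apply]
  simp [h]

lemma isomConj_zero_doubled (ε : ℤˣ) : isomConj 0 ε (doubled p w) = doubled p w := by
  rcases Int.units_eq_one_or ε with rfl | rfl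
  · exact isomConj_zero_one _
  · rw [doubled, map_mul, isomConj_isomConj, isomConj_isomConj]
    simpa using (commute_doubled hw₀ hw₁ hp).eq.symm

end

lemma doubled_half_apply_left (hx : x ≤ 0) : doubled (1 / 2) w x = -(1 / 2) + w (x + 1 / 2) :=
  doubled_apply_left hw₀ hw₁ (.inr rfl) (hw₁ _ (by linarith))

lemma doubled_half_mem_cellHomeo : doubled (1 / 2) w ∈ cellHomeo := by
  intro x hx
  rcases le_abs'.1 hx with hx | hx
  · rw [doubled_half_apply_left hw₀ hw₁ (by linarith), hw₀ _ (by linarith)]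
    ring
  · rw [doubled_half_apply_right hw₁ (by linarith), hw₀ _ (by linarith)]
    ring

lemma doubled_zero_apply_right (hx : 0 ≤ x) : doubled 0 w x = w x := by
  rw [doubled_apply_left hw₀ hw₁ (.inl rfl) (hw₀ _ (by linarith))]
  simp

lemma doubled_zero_mem_cellPL (hw : w ∈ dyadicPL) : doubled 0 w ∈ cellPL := by
  refine ⟨1 / 4, by norm_num, doubled_mem_dyadicPL .zero hw, fun x hx => ?_⟩
  rcases le_abs'.1 hx with hx | hx
  · rw [doubled_zero_apply_left hw₀ (by linarith), hw₁ _ (by linarith), neg_neg]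
  · rw [doubled_zero_apply_right hw₀ hw₁ (by linarith), hw₁ x hx]

end Doubling

-- The centres of the cells of one parity are the common endpoints of those of the other parity.
lemma copies_doubled_zero (s : ℤ → ℤˣ) (c : ℤ) {w : ℝ ≃o ℝ} (hw₀ : ∀ x ≤ 0, w x = x)
    (hw₁ : ∀ x, 1 / 4 ≤ x → w x = x) {f g : cellHomeo} (hf : (f : ℝ ≃o ℝ) = doubled 0 w)
    (hg : (g : ℝ ≃o ℝ) = doubled (1 / 2) w) :
    copies s (c + 1) Set.univ f = copies s c Set.univ g := by
  have hconj {p : ℝ} (hp : p = 0 ∨ p = 1 / 2) (m : ℤ) (x : ℝ) :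
      isomConj (m / 2) (s m) (doubled p w) x = m / 2 + doubled p w (x - m / 2) := by
    have h := isomConj_isomConj (m / 2) 0 1 (s m) (doubled p w)
    rw [isomConj_zero_doubled hw₀ hw₁ hp, one_mul, mul_zero, add_zero] at h
    rw [← h, isomConj_apply, Units.val_one, Int.cast_one, one_mul, one_mul]
  refine eq_copies_univ fun m hm x hx => ?_
  rw [hg, hconj (.inr rfl)]
  rcases le_total x (m / 2) with h | h
  · rw [copies_apply_of_mem (m := m - 1) (by omega) (Set.mem_univ _)
      ⟨by push_cast; linarith [hx.1], by push_cast; linarith⟩, hf, hconj (.inl rfl),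
      doubled_zero_apply_right hw₀ hw₁ (by push_cast; linarith [hx.1]),
      doubled_half_apply_left hw₀ hw₁ (by linarith)]
    push_cast
    ring_nf
  · rw [copies_apply_of_mem (m := m + 1) (by omega) (Set.mem_univ _)
      ⟨by push_cast; linarith, by push_cast; linarith [hx.2]⟩, hf, hconj (.inl rfl),
      doubled_zero_apply_left hw₀ (by push_cast; linarith [hx.2]),
      doubled_half_apply_right hw₁ (by linarith)]
    push_cast
    ring_nf

lemma exists_germ (k : ℤ) : ∃ w ∈ dyadicPL, (∀ x ≤ 0, w x = x) ∧ (∀ x, 1 / 4 ≤ x → w x = x) ∧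
    ∃ δ > 0, ∀ t ∈ Set.Icc 0 δ, w t = 2 ^ k * t := by
  set d : ℝ := 2 ^ (-(|k| + 3)) with hd
  have hd₀ : 0 < d := by positivity
  have hle {j : ℤ} (hj : j ≤ -3) : (2 : ℝ) ^ j ≤ 1 / 8 :=
    (zpow_le_zpow_right₀ one_le_two hj).trans_eq (by norm_num)
  have hd₁ : d ≤ 1 / 8 := hle (by linarith [abs_nonneg k])
  have hd₂ : 2 ^ k * d ≤ 1 / 8 := by
    rw [hd, ← zpow_add₀ two_ne_zero]
    exact hle (by linarith [le_abs_self k])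
  exact ⟨bump 0 d k, bump_mem_dyadicPL .zero (.two_zpow _) k, fun x hx => bump_of_le k hd₀.le hx,
    fun x hx => bump_of_ge k hd₀.le (by linarith), d, hd₀, fun t ht => by
      rw [bump_of_le_add k hd₀.le ht.1 (by linarith [ht.2]), zero_add, sub_zero]⟩

lemma inv_mul_mem_cellPL {f g : cellHomeo} (hf : (f : ℝ ≃o ℝ) ∈ dyadicPL)
    (hg : (g : ℝ ≃o ℝ) ∈ dyadicPL) {δ : ℝ} (hδ : 0 < δ)
    (h : ∀ t ∈ Set.Icc 0 δ, (f : ℝ ≃o ℝ) (-(1 / 2) + t) = (g : ℝ ≃o ℝ) (-(1 / 2) + t))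
    (h' : ∀ t ∈ Set.Icc 0 δ, (f : ℝ ≃o ℝ) (1 / 2 - t) = (g : ℝ ≃o ℝ) (1 / 2 - t)) :
    ((f⁻¹ * g : cellHomeo) : ℝ ≃o ℝ) ∈ cellPL := by
  refine ⟨1 / 2 - δ, by linarith, mul_mem (inv_mem hf) hg, fun x hx => ?_⟩
  rcases le_total (1 / 2) |x| with hx' | hx'
  · exact (f⁻¹ * g).2 x hx'
  obtain ⟨h₁, h₂⟩ := abs_le.1 hx'
  refine inv_apply_of_apply_eq ?_
  rcases le_abs'.1 hx with hx | hx
  · simpa using h (x + 1 / 2) ⟨by linarith, by linarith⟩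
  · simpa using h' (1 / 2 - x) ⟨by linarith, by linarith⟩

/-- The subgroup generated by the copies over the whole line of the elements of `cellPL`. -/
def fullCopies (s : ℤ → ℤˣ) : Subgroup (ℝ ≃o ℝ) :=
  Subgroup.closure {z | ∃ c, ∃ f : cellHomeo, (f : ℝ ≃o ℝ) ∈ cellPL ∧ z = copies s c Set.univ f}

-- The equality of the two end slopes of `ν` is what allows the germs of `ν` at both ends of the
-- cells of one parity to be realised by an element supported near the centres of the others.
lemma copies_recentre_mem_fullCopies (s : ℤ → ℤˣ) (c : ℤ) {ν : ℝ ≃o ℝ} (hν : InH ν) :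
    copies s c Set.univ (recentre ν hν.1.1) ∈ fullCopies s := by
  have hmem (c : ℤ) (f : cellHomeo) (hf : (f : ℝ ≃o ℝ) ∈ cellPL) :
      copies s c Set.univ f ∈ fullCopies s := Subgroup.subset_closure ⟨c, f, hf, rfl⟩
  have hνPL : (recentre ν hν.1.1 : ℝ ≃o ℝ) ∈ dyadicPL :=
    isomConj_mem_dyadicPL IsDyadic.one.div_two.neg 1 (mem_dyadicPL_of_inThompsonF hν.1)
  obtain ⟨-, k, ε, hε, hν₀, hν₁⟩ := id hν
  obtain ⟨w, hw, hw₀, hw₁, δ, hδ, hwδ⟩ := exists_germ k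
  have hcentre := doubled_zero_mem_cellPL hw₀ hw₁ hw
  set f : cellHomeo := ⟨_, cellPL_le_cellHomeo hcentre⟩
  set g : cellHomeo := ⟨_, doubled_half_mem_cellHomeo hw₀ hw₁⟩
  have hquot : ((g⁻¹ * recentre ν hν.1.1 : cellHomeo) : ℝ ≃o ℝ) ∈ cellPL := by
    refine inv_mul_mem_cellPL (doubled_mem_dyadicPL IsDyadic.one.div_two hw) hνPL
      (δ := min (1 / 2) (min δ ε)) (by positivity) (fun t ht => ?_) (fun t ht => ?_)
    all_goals
      obtain ⟨ht₀, ht₁⟩ := ht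
      obtain ⟨ht₁, ht₂, ht₃⟩ : t ≤ 1 / 2 ∧ t ≤ δ ∧ t ≤ ε := by simpa using ht₁
      rw [coe_recentre, isomConj_apply, Units.val_one, Int.cast_one, one_mul, one_mul]
    · rw [doubled_half_apply_left hw₀ hw₁ (by linarith), sub_neg_eq_add, neg_add_cancel_comm,
        hwδ t ⟨ht₀, ht₂⟩, hν₀ t ⟨ht₀, ht₃⟩]
    · rw [doubled_half_apply_right hw₁ (by linarith), sub_sub_cancel, hwδ t ⟨ht₀, ht₂⟩,
        hν₁ _ ⟨by linarith, by linarith⟩]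
      ring
  have hsplit : copies s c Set.univ (recentre ν hν.1.1) = copies s (c + 1) Set.univ f *
      copies s c Set.univ (g⁻¹ * recentre ν hν.1.1) := by
    rw [copies_doubled_zero s c hw₀ hw₁ (f := f) (g := g) rfl rfl, ← map_mul, mul_inv_cancel_left]
  exact hsplit ▸ mul_mem (hmem _ f hcentre) (hmem c _ hquot)

/-! ### Homogeneous quasimorphisms -/

section Quasimorphism

open Filter Topology
open scoped commutatorElement

variable {Γ : Type*} [Group Γ]

/-- A homogeneous quasimorphism: a quasimorphism which is a homomorphism on cyclic subgroups. It is
enough to ask the latter for nonnegative powers. -/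
structure IsHomogeneousQuasimorphism (ψ : Γ → ℝ) : Prop where
  exists_abs_map_mul_sub_le : ∃ C, ∀ g h, |ψ (g * h) - ψ g - ψ h| ≤ C
  map_pow (g : Γ) (n : ℕ) : ψ (g ^ n) = n * ψ g

section Homogenization

variable {φ : Γ → ℝ} {D : ℝ} (hφ : ∀ g h, |φ (g * h) - φ g - φ h| ≤ D)
include hφ

lemma abs_map_pow_sub_le (g : Γ) {n : ℕ} (hn : n ≠ 0) : |φ (g ^ n) - n * φ g| ≤ n * D := by
  have hD : 0 ≤ D := (abs_nonneg _).trans (hφ 1 1)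
  induction n, Nat.one_le_iff_ne_zero.2 hn using Nat.le_induction with
  | base => simpa using hD
  | succ n hn ih =>
    have ih := abs_le.1 (ih (by omega))
    have h := abs_le.1 (hφ (g ^ n) g)
    rw [pow_succ, abs_le]
    push_cast
    constructor <;> linarith [ih.1, ih.2, h.1, h.2]

lemma abs_map_pow_mul_div_sub_le (g : Γ) {m n : ℕ} (hm : m ≠ 0) (hn : n ≠ 0) :
    |φ (g ^ (m * n)) / ↑(m * n) - φ (g ^ m) / m| ≤ D / m := by
  have hm' : (0 : ℝ) < m := by positivity
  have hn' : (0 : ℝ) < n := by positivity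
  have h := abs_map_pow_sub_le hφ (g ^ m) hn
  rw [← pow_mul] at h
  calc |φ (g ^ (m * n)) / ↑(m * n) - φ (g ^ m) / m|
      = |φ (g ^ (m * n)) - n * φ (g ^ m)| / (m * n) := by
        rw [← abs_of_pos (mul_pos hm' hn'), ← abs_div, Nat.cast_mul, sub_div, mul_comm (n : ℝ),
          mul_div_mul_right _ _ hn'.ne']
    _ ≤ n * D / (m * n) := by gcongr
    _ = D / m := by field_simp

lemma exists_tendsto_map_pow_div (g : Γ) :
    ∃ l, Tendsto (fun n : ℕ => φ (g ^ n) / n) atTop (𝓝 l) := by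
  have hD : 0 ≤ D := (abs_nonneg _).trans (hφ 1 1)
  suffices h : CauchySeq fun n : ℕ => φ (g ^ (n + 1)) / ↑(n + 1) by
    obtain ⟨l, hl⟩ := cauchySeq_tendsto_of_complete h
    exact ⟨l, (tendsto_add_atTop_iff_nat 1).1 hl⟩
  refine cauchySeq_of_le_tendsto_0 (fun N : ℕ => 2 * D * (1 / ((N : ℝ) + 1)))
    (fun m n N hm hn => ?_) (by
      simpa using (tendsto_one_div_add_atTop_nhds_zero_nat (𝕜 := ℝ)).const_mul (2 * D))
  have key {k : ℕ} (hk : N ≤ k) : D / ↑(k + 1) ≤ D * (1 / ((N : ℝ) + 1)) := by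
    rw [mul_one_div]
    push_cast
    gcongr
  have h₁ := abs_le.1 (abs_map_pow_mul_div_sub_le hφ g m.succ_ne_zero n.succ_ne_zero)
  have h₂ := abs_le.1 (abs_map_pow_mul_div_sub_le hφ g n.succ_ne_zero m.succ_ne_zero)
  rw [mul_comm n.succ] at h₂
  rw [Real.dist_eq, abs_le]
  constructor <;> linarith [h₁.1, h₁.2, h₂.1, h₂.2, key hm, key hn]

theorem exists_isHomogeneousQuasimorphism :
    ∃ ψ : Γ → ℝ, IsHomogeneousQuasimorphism ψ ∧ ∀ g, |ψ g - φ g| ≤ D := by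
  choose ψ hψ using exists_tendsto_map_pow_div hφ
  have hclose (g : Γ) : |ψ g - φ g| ≤ D := by
    refine le_of_tendsto ((hψ g).sub_const (φ g)).abs
      ((eventually_ne_atTop 0).mono fun n hn => ?_)
    simpa using abs_map_pow_mul_div_sub_le hφ g one_ne_zero hn
  refine ⟨ψ, ⟨⟨4 * D, fun g h => ?_⟩, fun g k => ?_⟩, hclose⟩
  · have h₁ := abs_le.1 (hclose (g * h))
    have h₂ := abs_le.1 (hclose g)
    have h₃ := abs_le.1 (hclose h)
    have h₄ := abs_le.1 (hφ g h)
    rw [abs_le]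
    constructor <;> linarith [h₁.1, h₁.2, h₂.1, h₂.2, h₃.1, h₃.2, h₄.1, h₄.2]
  · rcases k.eq_zero_or_pos with rfl | hk
    · refine tendsto_nhds_unique (hψ (g ^ 0)) ?_
      simpa using tendsto_const_div_atTop_nhds_zero_nat (φ 1)
    · have hmul : Tendsto (fun n : ℕ => k * n) atTop atTop := tendsto_id.const_mul_atTop' hk
      refine tendsto_nhds_unique (hψ (g ^ k)) ((((hψ g).comp hmul).const_mul _).congr fun n => ?_)
      rw [Function.comp_apply, pow_mul]
      push_cast
      field_simp

end Homogenization

lemma eq_zero_of_forall_abs_nat_mul_le {x C : ℝ} (h : ∀ n : ℕ, |n * x| ≤ C) : x = 0 := by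
  by_contra hx
  obtain ⟨n, hn⟩ := exists_nat_gt (C / |x|)
  rw [div_lt_iff₀ (abs_pos.2 hx)] at hn
  have := h n
  rw [abs_mul, Nat.abs_cast] at this
  exact hn.not_ge this

namespace IsHomogeneousQuasimorphism

variable {ψ : Γ → ℝ} (hψ : IsHomogeneousQuasimorphism ψ) {x y t : Γ}
include hψ

lemma map_one : ψ 1 = 0 := by simpa using hψ.map_pow 1 0

lemma map_mul_of_commute (h : Commute x y) : ψ (x * y) = ψ x + ψ y := by
  obtain ⟨C, hC⟩ := hψ.exists_abs_map_mul_sub_le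
  rw [← sub_eq_zero, ← sub_sub]
  refine eq_zero_of_forall_abs_nat_mul_le (C := C) fun n => ?_
  have := hC (x ^ n) (y ^ n)
  rwa [← h.mul_pow, hψ.map_pow, hψ.map_pow, hψ.map_pow, ← mul_sub, ← mul_sub] at this

lemma map_inv (x : Γ) : ψ x⁻¹ = -ψ x := by
  have := hψ.map_mul_of_commute (Commute.inv_right (Commute.refl x))
  rw [mul_inv_cancel, hψ.map_one] at this
  linarith

lemma map_conj (t x : Γ) : ψ (MulAut.conj t x) = ψ x := by
  obtain ⟨C, hC⟩ := hψ.exists_abs_map_mul_sub_le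
  rw [← sub_eq_zero]
  refine eq_zero_of_forall_abs_nat_mul_le (C := 2 * C) fun n => ?_
  have h₁ := abs_le.1 (hC (t * x ^ n) t⁻¹)
  have h₂ := abs_le.1 (hC t (x ^ n))
  rw [← MulAut.conj_apply, _root_.map_pow, hψ.map_pow, hψ.map_inv] at h₁
  rw [hψ.map_pow] at h₂
  rw [abs_le]
  constructor <;> linarith [h₁.1, h₁.2, h₂.1, h₂.2]

end IsHomogeneousQuasimorphism

/-- `t` displaces `Y`: the conjugates of `Y` by the powers of `t` commute with one another. -/
def Displaces (t : Γ) (Y : Subgroup Γ) : Prop :=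
  ∀ n : ℕ, ∀ x ∈ Y, ∀ y ∈ Y, Commute x (MulAut.conj (t ^ (n + 1)) y)

/-- The product of the conjugates of `x` by `1, t, …, t ^ (n - 1)`. -/
def conjProd (t x : Γ) (n : ℕ) : Γ := ((List.range n).map fun i => MulAut.conj (t ^ i) x).prod

lemma conjProd_succ (t x : Γ) (n : ℕ) :
    conjProd t x (n + 1) = conjProd t x n * MulAut.conj (t ^ n) x :=
  List.prod_range_succ _ n

namespace Displaces

variable {t x y : Γ} {Y : Subgroup Γ} (h : Displaces t Y) (hx : x ∈ Y) (hy : y ∈ Y)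
include h hx hy

lemma commute_conjProd (n : ℕ) : Commute (conjProd t x n) (MulAut.conj (t ^ n) y) := by
  refine Commute.list_prod_left _ _ fun z hz => ?_
  obtain ⟨i, hi, rfl⟩ := List.mem_map.1 hz
  obtain ⟨j, rfl⟩ := Nat.exists_eq_add_of_lt (List.mem_range.1 hi)
  rw [add_assoc, pow_add, map_mul, MulAut.mul_apply]
  exact (h j x hx y hy).map (MulAut.conj (t ^ i))

lemma conjProd_mul (n : ℕ) : conjProd t (x * y) n = conjProd t x n * conjProd t y n := by
  induction n with
  | zero => simp [conjProd]
  | succ n ih =>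
    rw [conjProd_succ, conjProd_succ, conjProd_succ, ih, map_mul,
      (h.commute_conjProd hy hx n).mul_mul_mul_comm]

end Displaces

namespace IsHomogeneousQuasimorphism

variable {ψ : Γ → ℝ} (hψ : IsHomogeneousQuasimorphism ψ) {t : Γ}
include hψ

lemma map_conjProd {x : Γ} {Y : Subgroup Γ} (h : Displaces t Y) (hx : x ∈ Y) (n : ℕ) :
    ψ (conjProd t x n) = n * ψ x := by
  induction n with
  | zero => simpa [conjProd] using hψ.map_one
  | succ n ih =>
    rw [conjProd_succ, hψ.map_mul_of_commute (h.commute_conjProd hx hx n), hψ.map_conj, ih]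
    push_cast
    ring

lemma map_mul_of_displaces {x y : Γ} {Y : Subgroup Γ} (h : Displaces t Y) (hx : x ∈ Y)
    (hy : y ∈ Y) : ψ (x * y) = ψ x + ψ y := by
  obtain ⟨C, hC⟩ := hψ.exists_abs_map_mul_sub_le
  rw [← sub_eq_zero, ← sub_sub]
  refine eq_zero_of_forall_abs_nat_mul_le (C := C) fun n => ?_
  have := hC (conjProd t x n) (conjProd t y n)
  rwa [← h.conjProd_mul hx hy, hψ.map_conjProd h (mul_mem hx hy), hψ.map_conjProd h hx,
    hψ.map_conjProd h hy, ← mul_sub, ← mul_sub] at this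

theorem eq_zero_of_displaces {X : Subgroup Γ} (hX : X ≤ ⁅X, X⁆)
    (h : ∀ x ∈ X, ∀ y ∈ X, ∃ (t : Γ) (Y : Subgroup Γ), Displaces t Y ∧ x ∈ Y ∧ y ∈ Y)
    {x : Γ} (hx : x ∈ X) : ψ x = 0 := by
  have hadd {x y : Γ} (hx : x ∈ X) (hy : y ∈ X) : ψ (x * y) = ψ x + ψ y := by
    obtain ⟨t, Y, htY, hxY, hyY⟩ := h x hx y hy
    exact hψ.map_mul_of_displaces htY hxY hyY
  let F : X →* Multiplicative ℝ :=
    MonoidHom.mk' (fun x => .ofAdd (ψ x)) fun x y => congrArg _ (hadd x.2 y.2)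
  have hle : ⁅X, X⁆ ≤ F.ker.map X.subtype := by
    refine Subgroup.commutator_le.2 fun a ha b hb =>
      ⟨⁅(⟨a, ha⟩ : X), (⟨b, hb⟩ : X)⁆, ?_, rfl⟩
    rw [SetLike.mem_coe, MonoidHom.mem_ker, map_commutatorElement,
      commutatorElement_eq_one_iff_commute]
    exact Commute.all _ _
  obtain ⟨x, hx', rfl⟩ := hle (hX hx)
  exact hx'

end IsHomogeneousQuasimorphism

end Quasimorphism

/-! ### Local sets of indices with bounded gaps -/

section Core

variable {E : Set ℤ} {r r' : ℝ} {s : ℤ → ℤˣ}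

lemma exists_mem_cell_abs_sub_le (c : ℤ) {m : ℤ} {x : ℝ} (hx : x ∈ cell m) :
    ∃ m', m' % 2 = c % 2 ∧ |m - m'| ≤ 1 ∧ x ∈ cell m' := by
  by_cases hm : m % 2 = c % 2
  · exact ⟨m, hm, by simp, hx⟩
  · obtain ⟨m', hm', hx'⟩ := exists_mem_cell c x
    have h₁ : m - 1 ≤ m' + 1 := by exact_mod_cast (by linarith [hx.1, hx'.2] : (m - 1 : ℝ) ≤ m' + 1)
    have h₂ : m' - 1 ≤ m + 1 := by exact_mod_cast (by linarith [hx.2, hx'.1] : (m' - 1 : ℝ) ≤ m + 1)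
    exact ⟨m', hm', abs_le.2 (by omega), hx'⟩

/-- The points at distance at most `r` from the centre of a cell with index in `E`. -/
def core (E : Set ℤ) (r : ℝ) : Set ℝ := {x | ∃ m ∈ E, |x - m / 2| ≤ r}

lemma core_mono (E : Set ℤ) : Monotone (core E) :=
  fun _ _ h _ ⟨m, hm, hx⟩ => ⟨m, hm, hx.trans h⟩

lemma copies_mem_fixingSubgroup_core {c : ℤ} {f : cellHomeo} (hf : (f : ℝ ≃o ℝ) ∈ supportedPL r) :
    copies s c E f ∈ fixingSubgroup (ℝ ≃o ℝ) (core E r)ᶜ := by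
  refine (mem_fixingSubgroup_iff _).2 fun x hx => ?_
  obtain ⟨m, hm, hxm⟩ := exists_mem_cell c x
  by_cases hmE : m ∈ E
  · have hr : r ≤ |(s m : ℝ) * (x - m / 2)| := by
      rw [abs_sign_mul]
      exact (not_le.1 fun h => hx ⟨m, hmE, h⟩).le
    rw [RelIso.smul_def, copies_apply_of_mem hm hmE hxm, isomConj_apply, hf.2 _ hr,
      sign_mul_sign_mul, add_sub_cancel]
  · exact copies_apply_of_notMem hm hmE hxm f

lemma fixingSubgroup_compl_core_mono (E : Set ℤ) :
    Monotone fun r => fixingSubgroup (ℝ ≃o ℝ) (core E r)ᶜ :=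
  fun _ _ h => fixingSubgroup_antitone _ _ (Set.compl_subset_compl.2 (core_mono E h))

end Core

/-- The group generated by the copies of the elements of `cellPL` over the local subsets of `E`. -/
def localGroup (s : ℤ → ℤˣ) (E : Set ℤ) : Subgroup (ℝ ≃o ℝ) :=
  Subgroup.closure {z | ∃ E' ⊆ E, IsLocal s E' ∧ ∃ c, ∃ f : cellHomeo, (f : ℝ ≃o ℝ) ∈ cellPL ∧
    z = copies s c E' f}

section LocalGroup

open scoped commutatorElement

variable {G : Subgroup (ℝ ≃o ℝ)} {s : ℤ → ℤˣ} {E E' : Set ℤ}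

lemma copies_mem_localGroup (hE : E' ⊆ E) (hE' : IsLocal s E') (c : ℤ) {f : cellHomeo}
    (hf : (f : ℝ ≃o ℝ) ∈ cellPL) : copies s c E' f ∈ localGroup s E :=
  Subgroup.subset_closure ⟨E', hE, hE', c, f, hf, rfl⟩

lemma localGroup_mono (s : ℤ → ℤˣ) : Monotone (localGroup s) := fun _ _ h =>
  Subgroup.closure_mono fun _ ⟨E', hE', hz⟩ => ⟨E', hE'.trans h, hz⟩

lemma ContainsCopies.localGroup_le (h : ContainsCopies G s Set.univ) (E : Set ℤ) :
    localGroup s E ≤ G := by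
  refine (Subgroup.closure_le _).2 ?_
  rintro _ ⟨E', -, hE', c, f, hf, rfl⟩
  exact h.of_isLocal hE' c f hf

lemma localGroup_le_commutator (s : ℤ → ℤˣ) (E : Set ℤ) :
    localGroup s E ≤ ⁅localGroup s E, localGroup s E⁆ := by
  refine (Subgroup.closure_le _).2 ?_
  rintro _ ⟨E', hE, hE', c, f, hf, rfl⟩
  refine ContainsCopies.of_commutator (fun c a b ha hb => ?_) c f hf
  rw [map_commutatorElement]
  exact Subgroup.commutator_mem_commutator (copies_mem_localGroup hE hE' c ha)
    (copies_mem_localGroup hE hE' c hb)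

lemma exists_mem_fixingSubgroup_of_mem_localGroup {z : ℝ ≃o ℝ} (hz : z ∈ localGroup s E) :
    ∃ r, 1 / 4 < r ∧ r < 1 / 2 ∧ z ∈ fixingSubgroup (ℝ ≃o ℝ) (core E r)ᶜ := by
  induction hz using Subgroup.closure_induction with
  | mem z hz =>
    obtain ⟨E', hE, -, c, f, ⟨r, hr, hf⟩, rfl⟩ := hz
    refine ⟨max r (3 / 8), lt_max_of_lt_right (by norm_num), max_lt hr (by norm_num), ?_⟩
    refine fixingSubgroup_compl_core_mono E (le_max_left r _) ?_
    have hcore : core E' r ⊆ core E r := fun x ⟨m, hm, hx⟩ => ⟨m, hE hm, hx⟩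
    exact fixingSubgroup_antitone _ _ (Set.compl_subset_compl.2 hcore)
      (copies_mem_fixingSubgroup_core hf)
  | one => exact ⟨3 / 8, by norm_num, by norm_num, one_mem _⟩
  | mul x y _ _ hx hy =>
    obtain ⟨r, hr, hr', hx⟩ := hx
    obtain ⟨q, -, hq', hy⟩ := hy
    exact ⟨max r q, lt_max_of_lt_left hr, max_lt hr' hq',
      mul_mem (fixingSubgroup_compl_core_mono E (le_max_left _ _) hx)
        (fixingSubgroup_compl_core_mono E (le_max_right _ _) hy)⟩
  | inv x _ hx =>
    obtain ⟨r, hr, hr', hx⟩ := hx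
    exact ⟨r, hr, hr', inv_mem hx⟩

lemma ContainsCopies.of_isLocal_sign {o : ℤ → ℤˣ} (h : ContainsCopies G s Set.univ)
    (ho : IsLocal s {m | s m * o m = 1}) (hE : IsLocal s E) : ContainsCopies G o E := by
  intro c f hf
  have hE := h.of_isLocal hE
  have ho := h.of_isLocal ho
  rw [copies_eq, pattern_eq_of_sign s, map_mul]
  exact mul_mem (hE.inter ho c f hf)
    (hE.inter (h.compl ho) c _ (isomConj_zero_mem_cellPL (-1) hf))

end LocalGroup

/-- The coordinate of `x` relative to the centre of the cell of index `m` with orientation `ε`. -/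
noncomputable def cellCoord (ε : ℤˣ) (m : ℤ) (x : ℝ) : ℝ := ε * (x - m / 2)

section CellCoord

variable {ε : ℤˣ} {m : ℤ} {x y : ℝ}

lemma abs_cellCoord : |cellCoord ε m x| = |x - m / 2| := by
  rw [cellCoord, abs_sign_mul]

lemma mem_cell_iff_abs_cellCoord : x ∈ cell m ↔ |cellCoord ε m x| ≤ 1 / 2 := by
  rw [abs_cellCoord, mem_cell_iff_abs]

lemma cellCoord_add_sign : cellCoord ε (m + ε) x = cellCoord ε m x - 1 / 2 := by
  rw [cellCoord, cellCoord]
  push_cast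
  linear_combination -(1 / 2 : ℝ) * sign_mul_self ε

lemma cellCoord_sub_cellCoord : cellCoord ε m x - cellCoord ε m y = ε * (x - y) := by
  rw [cellCoord, cellCoord]
  ring

lemma cellCoord_isomConj (f : ℝ ≃o ℝ) :
    cellCoord ε m (isomConj (m / 2) ε f x) = f (cellCoord ε m x) := by
  rw [isomConj_apply, cellCoord, add_sub_cancel_left, sign_mul_sign_mul, cellCoord]

lemma cellCoord_lt_cellCoord_map (τ : ℝ ≃o ℝ) (h : cellCoord ε m x < cellCoord ε m y) :
    cellCoord ε m (τ x) < cellCoord ε m (τ y) := by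
  rw [← sub_neg, cellCoord_sub_cellCoord] at h ⊢
  rcases Int.units_eq_one_or ε with rfl | rfl <;> simpa using h

end CellCoord

/-- An orientation `o` and a clock `κ` along which the points of the cells with index in `E` can be
pushed out of `E`: the orientation is constant on the runs of `E`, and the times at which the
successive cells of a run are moved increase in its direction. -/
structure IsConveyor (E : Set ℤ) (o : ℤ → ℤˣ) (κ : ℤ → ℕ) : Prop where
  orient_add_one {m : ℤ} (hm : m ∈ E) (hm' : m + 1 ∈ E) : o (m + 1) = o m
  clock_lt {m : ℤ} (hm : m ∈ E) (hm' : m + o m ∈ E) : κ m < κ (m + o m)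
  emod_two (m : ℤ) : m % 2 = (κ m : ℤ) % 2

/-- The points that are about to leave `E`. -/
def exitSet (E : Set ℤ) (o : ℤ → ℤˣ) (r : ℝ) : Set ℝ :=
  {x | ∃ m ∈ E, m + o m ∉ E ∧ r < cellCoord (o m) m x ∧ cellCoord (o m) m x < 1 / 2}

/-- The points that are in `exitSet E o r`, or can be moved at time `k` or later. -/
def stage (E : Set ℤ) (o : ℤ → ℤˣ) (κ : ℤ → ℕ) (r : ℝ) (k : ℕ) : Set ℝ :=
  {x | ∃ m ∈ E, k ≤ κ m ∧ -r ≤ cellCoord (o m) m x ∧ cellCoord (o m) m x < 1 / 2} ∪ exitSet E o r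

lemma disjoint_core_exitSet {E : Set ℤ} {o : ℤ → ℤˣ} {r : ℝ} :
    Disjoint (core E r) (exitSet E o r) := by
  rw [Set.disjoint_left]
  rintro x ⟨m', hm', hx⟩ ⟨m, -, hmE, h₁, h₂⟩
  obtain ⟨d, rfl⟩ : ∃ d, m' = m + o m * d :=
    ⟨o m * (m' - m), by rw [sign_mul_sign_mul_int, add_sub_cancel]⟩
  have hd : cellCoord (o m) (m + o m * d) x = cellCoord (o m) m x - d / 2 := by
    rw [cellCoord, cellCoord]
    push_cast
    linear_combination -(d / 2 : ℝ) * sign_mul_self (o m)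
  rw [← abs_cellCoord (ε := o m), hd, abs_le] at hx
  have hd₀ : (0 : ℝ) < d := by linarith [hx.2]
  have hd₂ : (d : ℝ) < 2 := by linarith [hx.1]
  obtain rfl : d = 1 := by
    have : 0 < d := by exact_mod_cast hd₀
    have : d < 2 := by exact_mod_cast hd₂
    omega
  exact hmE (by simpa using hm')

namespace IsConveyor

variable {E : Set ℤ} {o : ℤ → ℤˣ} {κ : ℤ → ℕ} (h : IsConveyor E o κ) {m m' : ℤ} {k : ℕ}
include h

lemma orient_eq (hm : m ∈ E) (hm' : m' ∈ E) (hmm : |m - m'| ≤ 1) : o m' = o m := by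
  obtain rfl | rfl | rfl : m' = m ∨ m' = m + 1 ∨ m = m' + 1 := by
    rw [abs_le] at hmm
    omega
  exacts [rfl, h.orient_add_one hm hm', (h.orient_add_one hm' hm).symm]

variable {p : cellHomeo} {x : ℝ}

lemma cellCoord_copies_apply (hm : m ∈ E) (hk : κ m = k) (hx : x ∈ cell m) :
    cellCoord (o m) m (copies o k {m ∈ E | κ m = k} p x) =
      (p : ℝ ≃o ℝ) (cellCoord (o m) m x) := by
  have hmE : m ∈ {m ∈ E | κ m = k} := ⟨hm, hk⟩
  rw [copies_apply_of_mem (hk ▸ h.emod_two m) hmE hx, cellCoord_isomConj]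

lemma cellCoord_le_copies_apply (hp : ∀ x, x ≤ (p : ℝ ≃o ℝ) x) (hm : m ∈ E) (hx : x ∈ cell m) :
    cellCoord (o m) m x ≤ cellCoord (o m) m (copies o k {m ∈ E | κ m = k} p x) := by
  obtain ⟨m', hm', hmm, hx'⟩ := exists_mem_cell_abs_sub_le k hx
  by_cases hmE : m' ∈ {m ∈ E | κ m = k}
  · have := hp (cellCoord (o m') m' x)
    rwa [← h.cellCoord_copies_apply hmE.1 hmE.2 hx', ← sub_nonneg, cellCoord_sub_cellCoord,
      h.orient_eq hm hmE.1 hmm, ← cellCoord_sub_cellCoord (m := m), sub_nonneg] at this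
  · rw [copies_apply_of_notMem hm' hmE hx']

lemma cellCoord_copies_apply_lt (hm : m ∈ E) (hm' : m + o m ∈ E → κ (m + o m) ≠ k)
    (hx : cellCoord (o m) m x < 1 / 2) :
    cellCoord (o m) m (copies o k {m ∈ E | κ m = k} p x) < 1 / 2 := by
  obtain ⟨e, he⟩ : ∃ e, cellCoord (o m) m e = 1 / 2 :=
    ⟨m / 2 + o m * (1 / 2), by rw [cellCoord, add_sub_cancel_left, sign_mul_sign_mul]⟩
  suffices hfix : cellCoord (o m) m (copies o k {m ∈ E | κ m = k} p e) = 1 / 2 by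
    rw [← hfix]
    exact cellCoord_lt_cellCoord_map _ (hx.trans_eq he.symm)
  have hem : e ∈ cell m := mem_cell_iff_abs_cellCoord.2 (by rw [he]; norm_num)
  by_cases hpar : m % 2 = (k : ℤ) % 2
  · by_cases hk : m ∈ {m ∈ E | κ m = k}
    · rw [h.cellCoord_copies_apply hm hk.2 hem, he, cellHomeo.apply_half]
    · rw [copies_apply_of_notMem hpar hk hem, he]
  · rw [copies_apply_of_notMem (m := m + o m) _ (fun hk => hm' hk.1 hk.2), he]
    · rw [mem_cell_iff_abs_cellCoord (ε := o m), cellCoord_add_sign, he]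
      norm_num
    · rcases Int.units_eq_one_or (o m) with ho | ho <;> rw [ho] <;> push_cast <;> omega

lemma mapsTo_stage {r : ℝ} (hr : 1 / 4 < r) (hr' : r < 1 / 2) (hpr : r < (p : ℝ ≃o ℝ) (-r))
    (hp : ∀ x, x ≤ (p : ℝ ≃o ℝ) x) (k : ℕ) :
    Set.MapsTo (copies o k {m ∈ E | κ m = k} p) (stage E o κ r k) (stage E o κ r (k + 1)) := by
  rintro x (⟨m, hm, hk, hx, hx'⟩ | ⟨m, hm, hmE, hx, hx'⟩)
  · have hxm : x ∈ cell m :=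
      mem_cell_iff_abs_cellCoord.2 (abs_le.2 ⟨by linarith, hx'.le⟩)
    have hle := h.cellCoord_le_copies_apply (k := k) hp hm hxm
    have hlt := h.cellCoord_copies_apply_lt (k := k) (p := p) hm
      (fun hm' => (hk.trans_lt (h.clock_lt hm hm')).ne') hx'
    rcases hk.lt_or_eq with hk | hk
    · exact Or.inl ⟨m, hm, hk, hx.trans hle, hlt⟩
    have hgt : r < cellCoord (o m) m (copies o k {m ∈ E | κ m = k} p x) := by
      rw [h.cellCoord_copies_apply hm hk.symm hxm]
      exact hpr.trans_le (p.1.monotone hx)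
    by_cases hmE : m + o m ∈ E
    · have ho : o (m + o m) = o m := h.orient_eq hm hmE (by
        rw [sub_add_cancel_left, abs_neg, Int.isUnit_iff_abs_eq.1 (o m).isUnit])
      have hκ := h.clock_lt hm hmE
      refine Or.inl ⟨m + o m, hmE, by omega, ?_⟩
      rw [ho, cellCoord_add_sign]
      constructor <;> linarith
    · exact Or.inr ⟨m, hm, hmE, hgt, hlt⟩
  · have hxm : x ∈ cell m :=
      mem_cell_iff_abs_cellCoord.2 (abs_le.2 ⟨by linarith, hx'.le⟩)
    exact Or.inr ⟨m, hm, hmE, hx.trans_le (h.cellCoord_le_copies_apply hp hm hxm),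
      h.cellCoord_copies_apply_lt hm (fun hm' => absurd hm' hmE) hx'⟩

theorem exists_mapsTo_exitSet {G : Subgroup (ℝ ≃o ℝ)}
    (hG : ∀ k, ContainsCopies G o {m ∈ E | κ m = k}) {K : ℕ} (hK : ∀ m ∈ E, κ m < K) {r : ℝ}
    (hr : 1 / 4 < r) (hr' : r < 1 / 2) :
    ∃ t ∈ G, Set.MapsTo t (core E r ∪ exitSet E o r) (exitSet E o r) := by
  obtain ⟨p, hp, hpr, hpx⟩ := exists_push (by linarith : 0 < r) hr'
  have hpush (k : ℕ) : ∃ t ∈ G, Set.MapsTo t (stage E o κ r 0) (stage E o κ r k) := by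
    induction k with
    | zero => exact ⟨1, one_mem G, Set.mapsTo_id _⟩
    | succ k ih =>
      obtain ⟨t, ht, hmaps⟩ := ih
      exact ⟨_, mul_mem (hG k k ⟨p, cellPL_le_cellHomeo hp⟩ hp) ht,
        (h.mapsTo_stage hr hr' hpr hpx k).comp hmaps⟩
  obtain ⟨t, ht, hmaps⟩ := hpush K
  refine ⟨t, ht, (hmaps.mono_left ?_).mono_right ?_⟩
  · refine Set.union_subset_union_left _ fun x ⟨m, hm, hx⟩ => ⟨m, hm, Nat.zero_le _, ?_⟩
    rw [← abs_cellCoord (ε := o m), abs_le] at hx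
    exact ⟨hx.1, hx.2.trans_lt hr'⟩
  · exact Set.union_subset (fun x ⟨m, hm, hk, _⟩ => absurd (hK m hm) hk.not_gt) subset_rfl

end IsConveyor

section Gaps

variable {s : ℤ → ℤˣ} {E : Set ℤ} {L : ℕ} {m m' : ℤ}

/-- Every `L + 1` consecutive integers include one outside `E`. -/
def HasGaps (E : Set ℤ) (L : ℕ) : Prop := ∀ m : ℤ, ∃ j : ℕ, j ≤ L ∧ m + j ∉ E

/-- The number of steps from `m` in the direction `ε` before leaving `E`. If `E` is never left, this
is `0`. -/
noncomputable def exitTime (E : Set ℤ) (ε : ℤˣ) (m : ℤ) : ℕ := sInf {j : ℕ | m + ε * j ∉ E}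

lemma exitTime_le_of_notMem {ε : ℤˣ} {j : ℕ} (h : m + ε * j ∉ E) : exitTime E ε m ≤ j :=
  Nat.sInf_le h

namespace HasGaps

variable (hgap : HasGaps E L)
include hgap

lemma exists_notMem (ε : ℤˣ) (m : ℤ) : ∃ j : ℕ, j ≤ L ∧ m + ε * j ∉ E := by
  rcases Int.units_eq_one_or ε with rfl | rfl
  · simpa using hgap m
  · obtain ⟨j, hj, hm⟩ := hgap (m - L)
    refine ⟨L - j, Nat.sub_le L j, ?_⟩
    convert hm using 2
    push_cast [hj]
    ring

lemma exitTime_le (ε : ℤˣ) (m : ℤ) : exitTime E ε m ≤ L := by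
  obtain ⟨j, hj, hm⟩ := hgap.exists_notMem ε m
  exact (exitTime_le_of_notMem hm).trans hj

lemma add_exitTime_notMem (ε : ℤˣ) (m : ℤ) : m + ε * exitTime E ε m ∉ E := by
  obtain ⟨j, -, hm⟩ := hgap.exists_notMem ε m
  exact Nat.sInf_mem (s := {j : ℕ | m + ε * j ∉ E}) ⟨j, hm⟩

lemma exitTime_eq_add_one (ε : ℤˣ) (hm : m ∈ E) :
    exitTime E ε m = exitTime E ε (m + ε) + 1 := by
  have hstep (j : ℕ) : m + ε + ε * j = m + ε * (j + 1 : ℕ) := by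
    push_cast
    ring
  apply le_antisymm
  · have := hgap.add_exitTime_notMem ε (m + ε)
    rw [hstep] at this
    exact exitTime_le_of_notMem this
  · have hexit := hgap.add_exitTime_notMem ε m
    obtain ⟨j, hj⟩ : ∃ j, exitTime E ε m = j + 1 := by
      refine Nat.exists_eq_succ_of_ne_zero fun h => ?_
      rw [h, Nat.cast_zero, mul_zero, add_zero] at hexit
      exact hexit hm
    rw [hj, ← hstep] at hexit
    rw [hj]
    exact Nat.succ_le_succ (exitTime_le_of_notMem hexit)

lemma exitTime_eq_of_similar {R : ℕ} (hE : ∀ m m', Similar s R m m' → m ∈ E → m' ∈ E)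
    (h : Similar s (R + L) m m') (δ : ℤˣ) : exitTime E (δ * s m) m = exitTime E (δ * s m') m' := by
  suffices hle : ∀ m m', Similar s (R + L) m m' →
      exitTime E (δ * s m) m ≤ exitTime E (δ * s m') m' from
    (hle m m' h).antisymm (hle m' m h.symm)
  intro m m' h
  refine exitTime_le_of_notMem fun hm => hgap.add_exitTime_notMem (δ * s m') m' ?_
  have hshift (m : ℤ) : m + ((δ * s m : ℤˣ) : ℤ) * exitTime E (δ * s m') m' =
      m + s m * (δ * exitTime E (δ * s m') m') := by
    rw [Units.val_mul]
    ring
  rw [hshift] at hm ⊢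
  refine hE _ _ (h.shift ?_) hm
  rw [abs_sign_mul_int, Nat.abs_cast]
  exact_mod_cast hgap.exitTime_le _ _

end HasGaps

/-- Half of `c`, rounded to the nearest even integer if `c` is odd. -/
def roundHalf (c : ℤ) : ℤ := if c % 2 = 0 then c / 2 else 2 * ((c + 1) / 4)

lemma sign_mul_roundHalf_sub (hm : m % 2 = m' % 2) (ε ε' : ℤˣ) (d : ℤ) :
    ε * (roundHalf (2 * m + ε * d) - m) = ε' * (roundHalf (2 * m' + ε' * d) - m') := by
  unfold roundHalf
  rcases Int.units_eq_one_or ε with rfl | rfl <;> rcases Int.units_eq_one_or ε' with rfl | rfl <;>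
    push_cast <;> split_ifs <;> omega

lemma abs_roundHalf_sub_le (m d : ℤ) : |roundHalf (2 * m + d) - m| ≤ |d| := by
  have := le_abs_self d
  have := neg_abs_le d
  rw [abs_le]
  unfold roundHalf
  split_ifs <;> omega

/-- The middle of the run of `E` containing `m`. When a run has two middle elements, the even one is
chosen, so that the choice does not depend on a direction. -/
noncomputable def runMiddle (E : Set ℤ) (m : ℤ) : ℤ :=
  roundHalf (2 * m + (exitTime E 1 m - exitTime E (-1) m))

/-- The sign of the middle of the run of `E` containing `m`. -/
noncomputable def runSign (s : ℤ → ℤˣ) (E : Set ℤ) (m : ℤ) : ℤˣ := s (runMiddle E m)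

/-- A measure of the position of `m` in its run of `E`, increasing in the direction of `runSign`,
with the parity of `m`. -/
noncomputable def runClock (s : ℤ → ℤˣ) (E : Set ℤ) (m : ℤ) : ℕ :=
  2 * exitTime E (-runSign s E m) m + (m % 2).toNat

lemma runMiddle_eq (ε : ℤˣ) (E : Set ℤ) (m : ℤ) :
    runMiddle E m = roundHalf (2 * m + ε * (exitTime E (1 * ε) m - exitTime E (-1 * ε) m)) := by
  rcases Int.units_eq_one_or ε with rfl | rfl <;> simp [runMiddle]

namespace HasGaps

variable (hgap : HasGaps E L)
include hgap

lemma isConveyor (s : ℤ → ℤˣ) : IsConveyor E (runSign s E) (runClock s E) := by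
  have hconst {m : ℤ} (hm : m ∈ E) (hm' : m + 1 ∈ E) : runSign s E (m + 1) = runSign s E m := by
    have h₁ := hgap.exitTime_eq_add_one 1 hm
    have h₂ := hgap.exitTime_eq_add_one (-1) hm'
    push_cast at h₁ h₂
    rw [add_neg_cancel_right] at h₂
    rw [runSign, runSign, runMiddle, runMiddle, h₁, h₂]
    push_cast
    ring_nf
  refine ⟨hconst, fun {m} hm hm' => ?_, fun m => ?_⟩
  · have he : runSign s E (m + runSign s E m) = runSign s E m := by
      rcases Int.units_eq_one_or (runSign s E m) with h | h
      · rw [h] at hm' ⊢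
        exact (hconst hm hm').trans h
      · rw [h] at hm' ⊢
        have := hconst hm' (by simpa using hm)
        rw [← this]
        simpa using h
    have := hgap.exitTime_eq_add_one (-runSign s E m) hm'
    rw [Units.val_neg, add_neg_cancel_right] at this
    rw [runClock, runClock, he, this]
    omega
  · rw [runClock]
    omega

lemma runClock_lt (s : ℤ → ℤˣ) (m : ℤ) : runClock s E m < 2 * L + 2 := by
  have := hgap.exitTime_le (-runSign s E m) m
  rw [runClock]
  omega

section Similar

variable {R : ℕ} (hE : ∀ m m', Similar s R m m' → m ∈ E → m' ∈ E) (h : Similar s (R + L) m m')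
include hE h

lemma mul_runSign_eq_of_similar : s m * runSign s E m = s m' * runSign s E m' := by
  set d : ℤ := exitTime E (1 * s m) m - exitTime E (-1 * s m) m with hd
  have hd' : d = exitTime E (1 * s m') m' - exitTime E (-1 * s m') m' := by
    rw [hd, hgap.exitTime_eq_of_similar hE h, hgap.exitTime_eq_of_similar hE h]
  have hdL : |d| ≤ L := by
    have := hgap.exitTime_le (1 * s m) m
    have := hgap.exitTime_le (-1 * s m) m
    rw [abs_le]
    omega
  have hoffset {m : ℤ} : s m * s (roundHalf (2 * m + s m * d)) =
      relSign s m (s m * (roundHalf (2 * m + s m * d) - m)) := by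
    rw [relSign, sign_mul_sign_mul_int, add_sub_cancel]
  rw [runSign, runSign, runMiddle_eq (s m), runMiddle_eq (s m'), ← hd, ← hd', hoffset, hoffset,
    sign_mul_roundHalf_sub h.1 (s m) (s m')]
  refine h.2 _ ?_
  rw [abs_sign_mul_int]
  refine (abs_roundHalf_sub_le _ _).trans ?_
  rw [abs_sign_mul_int]
  omega

lemma runClock_eq_of_similar : runClock s E m = runClock s E m' := by
  have hsign (m : ℤ) : -runSign s E m = -(s m * runSign s E m) * s m := by
    rw [neg_mul, mul_right_comm, Int.units_mul_self, one_mul]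
  rw [runClock, runClock, h.1, hsign m, hsign m', ← hgap.mul_runSign_eq_of_similar hE h,
    hgap.exitTime_eq_of_similar hE h]

end Similar

theorem exists_mapsTo_exitSet {G : Subgroup (ℝ ≃o ℝ)} (h : ContainsCopies G s Set.univ)
    (hE : IsLocal s E) {r : ℝ} (hr : 1 / 4 < r) (hr' : r < 1 / 2) :
    ∃ t ∈ G, ∃ W, Disjoint (core E r) W ∧ Set.MapsTo t (core E r ∪ W) W := by
  obtain ⟨R, hR⟩ := hE
  have hsign : IsLocal s {m | s m * runSign s E m = 1} := ⟨R + L, fun m m' hs hm =>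
    (hgap.mul_runSign_eq_of_similar hR hs).symm.trans hm⟩
  have hclock (k : ℕ) : IsLocal s {m ∈ E | runClock s E m = k} := ⟨R + L, fun m m' hs hm =>
    ⟨hR m m' (hs.mono (Nat.le_add_right R L)) hm.1,
      (hgap.runClock_eq_of_similar hR hs).symm.trans hm.2⟩⟩
  obtain ⟨t, ht, hmaps⟩ := (hgap.isConveyor s).exists_mapsTo_exitSet
    (fun k => h.of_isLocal_sign hsign (hclock k)) (fun m _ => hgap.runClock_lt s m) hr hr'
  exact ⟨t, ht, _, disjoint_core_exitSet, hmaps⟩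

end HasGaps

end Gaps

section Displacement

variable {G : Subgroup (ℝ ≃o ℝ)}

lemma displaces_fixingSubgroup {t : G} {K W : Set ℝ} (hKW : Disjoint K W)
    (ht : Set.MapsTo (t : ℝ ≃o ℝ) (K ∪ W) W) :
    Displaces t ((fixingSubgroup (ℝ ≃o ℝ) Kᶜ).subgroupOf G) := by
  intro n x hx y hy
  have hpow (n : ℕ) : Set.MapsTo ((t : ℝ ≃o ℝ) ^ (n + 1)) K W := by
    induction n with
    | zero => exact fun u hu => ht (Or.inl hu)
    | succ n ih =>
      intro u hu
      rw [pow_succ']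
      exact ht (Or.inr (ih hu))
  refine Subtype.ext (commute_of_forall_apply_eq_or fun u => or_iff_not_imp_left.2 fun hu => ?_)
  have huK : u ∈ K := not_not.1 fun h => hu ((mem_fixingSubgroup_iff _).1 hx u h)
  have hy : (y : ℝ ≃o ℝ) _ = _ := (mem_fixingSubgroup_iff _).1 hy
    (((t : ℝ ≃o ℝ) ^ (n + 1))⁻¹ u) fun h => hKW.notMem_of_mem_left huK (by simpa using hpow n h)
  change ((t : ℝ ≃o ℝ) ^ (n + 1)) ((y : ℝ ≃o ℝ) (((t : ℝ ≃o ℝ) ^ (n + 1))⁻¹ u)) = u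
  rw [hy, RelIso.apply_inv_self]

lemma subgroupOf_le_commutator {Γ : Type*} [Group Γ] {X G : Subgroup Γ} (hXG : X ≤ G)
    (hX : X ≤ ⁅X, X⁆) : X.subgroupOf G ≤ ⁅X.subgroupOf G, X.subgroupOf G⁆ := by
  rw [← Subgroup.map_le_map_iff_of_injective G.subtype_injective, Subgroup.map_commutator,
    Subgroup.map_subgroupOf_eq_of_le hXG]
  exact hX

theorem IsHomogeneousQuasimorphism.eq_zero_of_mem_localGroup {ψ : G → ℝ}
    (hψ : IsHomogeneousQuasimorphism ψ) {s : ℤ → ℤˣ} (h : ContainsCopies G s Set.univ)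
    {E : Set ℤ} {L : ℕ} (hE : IsLocal s E) (hgap : HasGaps E L) {z : G}
    (hz : (z : ℝ ≃o ℝ) ∈ localGroup s E) : ψ z = 0 := by
  refine hψ.eq_zero_of_displaces (X := (localGroup s E).subgroupOf G)
    (subgroupOf_le_commutator (h.localGroup_le E) (localGroup_le_commutator s E)) ?_ hz
  intro x hx y hy
  obtain ⟨r, hr, hr', hx⟩ := exists_mem_fixingSubgroup_of_mem_localGroup hx
  obtain ⟨q, -, hq', hy⟩ := exists_mem_fixingSubgroup_of_mem_localGroup hy
  obtain ⟨t, ht, W, hW, hmaps⟩ := hgap.exists_mapsTo_exitSet h hE (lt_max_of_lt_left hr)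
    (max_lt hr' hq')
  exact ⟨⟨t, ht⟩, _, displaces_fixingSubgroup hW hmaps,
    fixingSubgroup_compl_core_mono E (le_max_left _ _) hx,
    fixingSubgroup_compl_core_mono E (le_max_right _ _) hy⟩

end Displacement

/-! ### Blocks of a labelling -/

section Blocks

variable {ρ : ℤ → Letter} {k k' m m' : ℤ} {n n' : ℕ}

lemma blockWord_eq_map (ρ : ℤ → Letter) (k : ℤ) (n : ℕ) :
    blockWord ρ k n = (List.range (n + 1)).map fun i : ℕ => ρ (k + i) := by
  unfold blockWord
  simp only [List.bind_eq_flatMap, List.pure_def, ← List.map_eq_flatMap, List.map_map]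
  rfl

lemma length_blockWord : (blockWord ρ k n).length = n + 1 := by
  simp [blockWord_eq_map]

lemma getElem_blockWord {i : ℕ} (hi : i < (blockWord ρ k n).length) :
    (blockWord ρ k n)[i] = ρ (k + i) := by
  simp [blockWord_eq_map]

lemma exists_translate_of_blockWord_isInfix (h : blockWord ρ k n <:+: blockWord ρ k' n') :
    ∃ p : ℕ, p + n ≤ n' ∧ ∀ i : ℕ, i ≤ n → ρ (k' + p + i) = ρ (k + i) := by
  obtain ⟨p, hp, h⟩ := List.infix_iff_getElem?.1 h
  rw [length_blockWord, length_blockWord] at hp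
  refine ⟨p, by omega, fun i hi => ?_⟩
  have := h i (by rw [length_blockWord]; omega)
  rw [List.getElem?_eq_getElem (by rw [length_blockWord]; omega), getElem_blockWord,
    getElem_blockWord, Option.some_inj] at this
  rw [← this]
  push_cast
  ring_nf

lemma apply_eq_inv_of_blockWord_eq_wordInv (h : blockWord ρ k' n = wordInv (blockWord ρ k n))
    {i : ℕ} (hi : i ≤ n) : ρ (k' + i) = (ρ (k + n - i)).inv := by
  have hi' : i < (blockWord ρ k' n).length := by
    rw [length_blockWord]
    omega
  rw [← getElem_blockWord hi']
  simp only [h, wordInv, List.getElem_reverse, List.getElem_map, List.length_map,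
    getElem_blockWord, length_blockWord]
  congr 2
  omega

lemma orientation_congr (h : ρ m = ρ m') : orientation ρ m = orientation ρ m' := by
  unfold orientation
  rw [h]

lemma apply_eq_a_or_A_iff (hρ : IsLabelling ρ) : ρ m = .a ∨ ρ m = .A ↔ m % 2 = 0 := by
  rcases Int.emod_two_eq_zero_or_one m with h | h
  · exact iff_of_true ((hρ m).1 (Int.even_iff.2 h)) h
  · refine iff_of_false ?_ (by omega)
    rcases (hρ m).2 (Int.odd_iff.2 h) with h | h <;> simp [h]

lemma emod_two_eq_of_apply_eq (hρ : IsLabelling ρ) (h : ρ m = ρ m') : m % 2 = m' % 2 := by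
  have h₁ := apply_eq_a_or_A_iff (m := m) hρ
  have h₂ := apply_eq_a_or_A_iff (m := m') hρ
  rw [h, h₂] at h₁
  omega

lemma emod_two_eq_of_apply_eq_inv (hρ : IsLabelling ρ) (h : ρ m = (ρ m').inv) :
    m % 2 = m' % 2 := by
  have h₁ := apply_eq_a_or_A_iff (m := m) hρ
  have h₂ := apply_eq_a_or_A_iff (m := m') hρ
  have hinv : (ρ m').inv = .a ∨ (ρ m').inv = .A ↔ ρ m' = .a ∨ ρ m' = .A := by
    cases ρ m' <;> simp [Letter.inv]
  rw [h, hinv, h₂] at h₁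
  omega

/-- Condition (1) in the definition of a quasi-periodic labelling. -/
def IsUniformlyRecurrent (ρ : ℤ → Letter) : Prop :=
  ∀ (k : ℤ) (n : ℕ), ∃ N : ℕ, ∀ (k' : ℤ) (n' : ℕ), N ≤ n' + 1 →
    blockWord ρ k n <:+: blockWord ρ k' n'

lemma IsUniformlyRecurrent.exists_translate (h : IsUniformlyRecurrent ρ) (k : ℤ) (n : ℕ) :
    ∃ N : ℕ, ∀ m : ℤ, ∃ p : ℕ, p ≤ N ∧ ∀ i : ℕ, i ≤ n → ρ (m + p + i) = ρ (k + i) := by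
  obtain ⟨N, hN⟩ := h k n
  refine ⟨N, fun m => ?_⟩
  obtain ⟨p, hp, hpi⟩ := exists_translate_of_blockWord_isInfix (hN m N N.le_succ)
  exact ⟨p, by omega, hpi⟩

/-- A period would make the labelling invariant under a half-turn about an integer `e`, which would
make the letter at `e` its own formal inverse. -/
theorem not_periodic_of_forall_exists_wordInv (hρ : IsLabelling ρ)
    (hinv : ∀ (k : ℤ) (n : ℕ), ∃ k' : ℤ, blockWord ρ k' n = wordInv (blockWord ρ k n))
    {d : ℕ} (hd : 0 < d) : ¬Function.Periodic ρ d := by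
  intro hper
  obtain ⟨k', hk'⟩ := hinv 0 d
  obtain ⟨e, he⟩ : ∃ e, k' + d = 2 * e := by
    have := emod_two_eq_of_apply_eq_inv hρ
      (apply_eq_inv_of_blockWord_eq_wordInv hk' d.zero_le)
    exact ⟨(k' + d) / 2, by push_cast at this; omega⟩
  obtain ⟨i, hi⟩ : ∃ i : ℕ, (i : ℤ) = (e - k') % d :=
    ⟨_, Int.toNat_of_nonneg (Int.emod_nonneg _ (by omega))⟩
  have hid : (i : ℤ) < d := hi ▸ Int.emod_lt_of_pos _ (by omega)
  have hdiv := Int.emod_add_mul_ediv (e - k') d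
  have hflip := apply_eq_inv_of_blockWord_eq_wordInv hk' (i := i) (by omega)
  have h₁ : k' + i = e - ((e - k') / d) • (d : ℤ) := by
    rw [smul_eq_mul]
    linarith
  have h₂ : 0 + d - i = e + ((e - k') / d) • (d : ℤ) := by
    rw [smul_eq_mul]
    linarith
  rw [h₁, h₂, hper.sub_zsmul_eq, hper.zsmul _ e] at hflip
  cases h : ρ e <;> simp [h, Letter.inv] at hflip

lemma apply_eq_of_orientation_eq (hρ : IsLabelling ρ) (hpar : m % 2 = m' % 2)
    (h : orientation ρ m = orientation ρ m') : ρ m = ρ m' := by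
  have h₁ := apply_eq_a_or_A_iff (m := m) hρ
  have h₂ := apply_eq_a_or_A_iff (m := m') hρ
  rw [← hpar, ← h₁] at h₂
  unfold orientation at h
  revert h h₂
  cases ρ m <;> cases ρ m' <;> simp +decide

lemma not_periodic_orientation (hρ : IsLabelling ρ)
    (hper : ∀ d : ℕ, 0 < d → ¬Function.Periodic ρ d) {d : ℕ} (hd : 0 < d) :
    ¬Function.Periodic (orientation ρ) d := fun h =>
  hper (2 * d) (by omega) fun m => apply_eq_of_orientation_eq hρ (by push_cast; omega) <| by
    rw [Nat.cast_mul]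
    exact h.nat_mul 2 m

namespace IsUniformlyRecurrent

variable (hrec : IsUniformlyRecurrent ρ)
include hrec

lemma exists_orientation_ne_translate (hρ : IsLabelling ρ)
    (hper : ∀ d : ℕ, 0 < d → ¬Function.Periodic ρ d) (n : ℕ) :
    ∃ r : ℕ, ∀ d : ℕ, 0 < d → d ≤ n → ∀ m : ℤ,
      ∃ j : ℕ, j ≤ r ∧ orientation ρ (m + j) ≠ orientation ρ (m + j + d) := by
  induction n with
  | zero => exact ⟨0, fun d hd hd' => by omega⟩
  | succ n ih =>
    obtain ⟨r, hr⟩ := ih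
    obtain ⟨x, hx⟩ := not_forall.1 (not_periodic_orientation hρ hper n.succ_pos)
    obtain ⟨N, hN⟩ := hrec.exists_translate x (n + 1)
    refine ⟨max r N, fun d hd hdn m => ?_⟩
    rcases hdn.lt_or_eq with hdn | rfl
    · obtain ⟨j, hj, hne⟩ := hr d hd (Nat.le_of_lt_succ hdn) m
      exact ⟨j, le_max_of_le_left hj, hne⟩
    · obtain ⟨p, hp, hpi⟩ := hN m
      refine ⟨p, le_max_of_le_right hp, ?_⟩
      have h₀ := orientation_congr (hpi 0 (Nat.zero_le _))
      rw [Nat.cast_zero, add_zero, add_zero] at h₀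
      rw [h₀, orientation_congr (hpi (n + 1) le_rfl)]
      exact Ne.symm hx

end IsUniformlyRecurrent

end Blocks

section Markers

variable {s : ℤ → ℤˣ} {r D : ℕ} {m : ℤ}

/-- The indices at which the labels within distance `r` are as at the index `0`. -/
def markers (s : ℤ → ℤˣ) (r : ℕ) : Set ℤ := {m | Similar s r 0 m}

/-- The indices within distance `D` of a marker. -/
def nearMarkers (s : ℤ → ℤˣ) (r D : ℕ) : Set ℤ := {m | ∃ o ∈ markers s r, |m - o| ≤ D}

lemma nearMarkers_mono (s : ℤ → ℤˣ) (r : ℕ) : Monotone (nearMarkers s r) := by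
  rintro D D' h m ⟨o, ho, hm⟩
  exact ⟨o, ho, hm.trans (Int.ofNat_le.2 h)⟩

lemma markers_subset_nearMarkers : markers s r ⊆ nearMarkers s r D :=
  fun m hm => ⟨m, hm, by simp⟩

lemma isLocal_markers : IsLocal s (markers s r) :=
  ⟨r, fun _ _ h hm => Similar.trans hm h⟩

lemma isLocal_nearMarkers : IsLocal s (nearMarkers s r D) := by
  refine ⟨r + D, fun m m' h => ?_⟩
  rintro ⟨o, ho, hD⟩
  have ho' : o = m + s m * (s m * (o - m)) := by
    rw [sign_mul_sign_mul_int, add_sub_cancel]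
  rw [abs_sub_comm, ← abs_sign_mul_int (s m)] at hD
  rw [ho'] at ho
  exact ⟨_, ho.trans (h.shift hD), by rwa [sub_add_cancel_left, abs_neg, abs_sign_mul_int]⟩

lemma hasGaps_nearMarkers
    (h : ∀ m ∈ markers s r, ∀ m' ∈ markers s r, m < m' → 2 * D + 1 < m' - m) :
    HasGaps (nearMarkers s r D) (2 * D + 1) := by
  intro m
  by_contra! hcon
  obtain ⟨o, ho, hm⟩ := hcon 0 (by omega)
  obtain ⟨j, hj⟩ := Int.eq_ofNat_of_zero_le (a := o + D + 1 - m) (by rw [abs_le] at hm; omega)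
  rw [abs_le] at hm
  obtain ⟨o', ho', hm'⟩ := hcon j (by omega)
  rw [abs_le] at hm'
  rcases lt_trichotomy o o' with hlt | rfl | hlt
  · have := h o ho o' ho' hlt
    omega
  · omega
  · omega

lemma markers_separated (n : ℕ)
    (hr : ∀ d : ℕ, 0 < d → d ≤ n → ∀ m : ℤ, ∃ j : ℕ, j ≤ r ∧ s (m + j) ≠ s (m + j + d)) :
    ∀ m ∈ markers s (r + n), ∀ m' ∈ markers s (r + n), m < m' → n < m' - m := by
  intro m hm m' hm' hlt
  by_contra! hle
  obtain ⟨d, rfl⟩ : ∃ d : ℕ, m' = m + d := ⟨(m' - m).toNat, by omega⟩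
  obtain ⟨hpar, hsim⟩ := Similar.trans (Similar.symm hm) hm'
  by_cases hs : s (m + d) = s m
  · obtain ⟨j, hj, hne⟩ := hr d (by omega) (by omega) m
    have := hsim (s m * j) (by rw [abs_sign_mul_int, Nat.abs_cast]; omega)
    rw [relSign, relSign, hs, sign_mul_sign_mul_int, mul_right_inj] at this
    exact hne (this.trans (by rw [add_right_comm]))
  · obtain ⟨e, he⟩ : ∃ e : ℕ, d = 2 * e := ⟨d / 2, by omega⟩
    rw [← ne_eq, Int.units_ne_iff_eq_neg] at hs
    have := hsim (s m * e) (by rw [abs_sign_mul_int, Nat.abs_cast]; omega)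
    have hmid : m + d + (-s m : ℤˣ) * (s m * e) = m + e := by
      rw [Units.val_neg, neg_mul, sign_mul_sign_mul_int, he]
      push_cast
      ring
    rw [relSign, relSign, hs, hmid, sign_mul_sign_mul_int, mul_left_inj] at this
    exact absurd this (Int.units_ne_iff_eq_neg.2 (neg_neg _).symm)

variable {ρ : ℤ → Letter}

lemma exists_markers_separated (hρ : IsLabelling ρ) (hrec : IsUniformlyRecurrent ρ)
    (hper : ∀ d : ℕ, 0 < d → ¬Function.Periodic ρ d) (n : ℕ) :
    ∃ r, ∀ m ∈ markers (orientation ρ) r, ∀ m' ∈ markers (orientation ρ) r,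
      m < m' → n < m' - m := by
  obtain ⟨r, hr⟩ := hrec.exists_orientation_ne_translate hρ hper n
  exact ⟨r + n, markers_separated n hr⟩

lemma hasGaps_compl_markers (hρ : IsLabelling ρ) (hrec : IsUniformlyRecurrent ρ) (r : ℕ) :
    ∃ L, HasGaps (markers (orientation ρ) r)ᶜ L := by
  obtain ⟨N, hN⟩ := hrec.exists_translate (-r) (2 * r)
  refine ⟨N + r, fun m => ?_⟩
  obtain ⟨p, hp, hpi⟩ := hN m
  refine ⟨p + r, by omega, not_not.2 ?_⟩
  have hblock {i : ℤ} (hi : |i| ≤ r) : ρ (m + (p + r : ℕ) + i) = ρ (0 + i) := by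
    rw [abs_le] at hi
    convert hpi (i + r).toNat (by omega) using 2 <;> push_cast <;> omega
  have h₀ := hblock (i := 0) (by simp)
  rw [add_zero, add_zero] at h₀
  refine ⟨(emod_two_eq_of_apply_eq hρ h₀).symm, fun i hi => ?_⟩
  rw [relSign, relSign, orientation_congr h₀, orientation_congr (hblock _)]
  rwa [abs_sign_mul_int]

end Markers

section Splitting

variable {G : Subgroup (ℝ ≃o ℝ)} {s : ℤ → ℤˣ} {E : Set ℤ} {r n : ℕ}

lemma commute_of_mem_localGroup {x y : ℝ ≃o ℝ} (hx : x ∈ localGroup s (nearMarkers s r (n + 1))ᶜ)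
    (hy : y ∈ localGroup s (nearMarkers s r n)) : Commute x y := by
  obtain ⟨a, -, ha, hx⟩ := exists_mem_fixingSubgroup_of_mem_localGroup hx
  obtain ⟨b, -, hb, hy⟩ := exists_mem_fixingSubgroup_of_mem_localGroup hy
  rw [mem_fixingSubgroup_iff] at hx hy
  refine commute_of_forall_apply_eq_or fun u => or_iff_not_imp_left.2 fun hu => hy u ?_
  rintro ⟨m', ⟨o, ho, hd⟩, hu'⟩
  obtain ⟨m, hm, hmu⟩ := not_not.1 fun h => hu (hx u h)
  rw [abs_le] at hmu hu'
  have h₁ : (m' : ℝ) < m + 2 := by linarith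
  have h₂ : (m : ℝ) < m' + 2 := by linarith
  norm_cast at h₁ h₂
  refine hm ⟨o, ho, ?_⟩
  rw [abs_le] at hd ⊢
  push_cast
  omega

lemma exists_mul_of_isLocal {c : ℤ} {f : cellHomeo} (hf : f.1 ∈ cellPL)
    (hE : IsLocal s E) : ∃ h ∈ localGroup s E, ∃ k ∈ localGroup s Eᶜ,
      copies s c Set.univ f = h * k := by
  refine ⟨_, copies_mem_localGroup subset_rfl hE c hf, _,
    copies_mem_localGroup subset_rfl hE.compl c hf, ?_⟩
  rw [copies_mul_copies_compl]

lemma exists_mul_of_mem_fullCopies {g : ℝ ≃o ℝ} (hg : g ∈ fullCopies s) :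
    ∃ n, ∀ r, ∃ h ∈ localGroup s (nearMarkers s r n), ∃ k ∈ localGroup s (markers s r)ᶜ,
      g = h * k := by
  have hstep (c : ℤ) (f : cellHomeo) (hf : (f : ℝ ≃o ℝ) ∈ cellPL) {y : ℝ ≃o ℝ}
      (hy : ∃ n, ∀ r, ∃ h ∈ localGroup s (nearMarkers s r n), ∃ k ∈ localGroup s (markers s r)ᶜ,
        y = h * k) :
      ∃ n, ∀ r, ∃ h ∈ localGroup s (nearMarkers s r n), ∃ k ∈ localGroup s (markers s r)ᶜ,
        copies s c Set.univ f * y = h * k := by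
    obtain ⟨n, hn⟩ := hy
    refine ⟨n + 1, fun r => ?_⟩
    obtain ⟨h, hh, k, hk, rfl⟩ := hn r
    obtain ⟨z, hz, w, hw, hzw⟩ := exists_mul_of_isLocal (s := s) (c := c) hf
      (isLocal_nearMarkers (r := r) (D := n + 1))
    refine ⟨z * h, mul_mem hz (localGroup_mono s (nearMarkers_mono s r n.le_succ) hh), w * k,
      mul_mem (localGroup_mono s (Set.compl_subset_compl.2 markers_subset_nearMarkers) hw) hk, ?_⟩
    rw [hzw, mul_assoc, ← mul_assoc w, (commute_of_mem_localGroup hw hh).eq]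
    simp only [mul_assoc]
  induction hg using Subgroup.closure_induction_left with
  | one => exact ⟨0, fun r => ⟨1, one_mem _, 1, one_mem _, (mul_one 1).symm⟩⟩
  | mul_left z hz y _ ih =>
    obtain ⟨c, f, hf, rfl⟩ := hz
    exact hstep c f hf ih
  | inv_mul_cancel z hz y _ ih =>
    obtain ⟨c, f, hf, rfl⟩ := hz
    rw [← map_inv]
    exact hstep c f⁻¹ (inv_mem hf) ih

theorem IsHomogeneousQuasimorphism.exists_abs_le {ψ : G → ℝ} {ρ : ℤ → Letter}
    (hψ : IsHomogeneousQuasimorphism ψ) (hρ : IsLabelling ρ) (hrec : IsUniformlyRecurrent ρ)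
    (hper : ∀ d : ℕ, 0 < d → ¬Function.Periodic ρ d)
    (h : ContainsCopies G (orientation ρ) Set.univ) (hG : G ≤ fullCopies (orientation ρ)) :
    ∃ C, ∀ g, |ψ g| ≤ C := by
  obtain ⟨C, hC⟩ := hψ.exists_abs_map_mul_sub_le
  refine ⟨C, fun ⟨g, hg⟩ => ?_⟩
  obtain ⟨n, hn⟩ := exists_mul_of_mem_fullCopies (hG hg)
  obtain ⟨r, hr⟩ := exists_markers_separated hρ hrec hper (2 * n + 1)
  obtain ⟨L, hL⟩ := hasGaps_compl_markers hρ hrec r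
  obtain ⟨x, hx, y, hy, rfl⟩ := hn r
  have hψx : ψ ⟨x, h.localGroup_le _ hx⟩ = 0 := hψ.eq_zero_of_mem_localGroup h
    isLocal_nearMarkers (hasGaps_nearMarkers (by exact_mod_cast hr)) hx
  have hψy : ψ ⟨y, h.localGroup_le _ hy⟩ = 0 :=
    hψ.eq_zero_of_mem_localGroup h isLocal_markers.compl hL hy
  simpa [hψx, hψy] using hC ⟨x, h.localGroup_le _ hx⟩ ⟨y, h.localGroup_le _ hy⟩

end Splitting

section

variable {ι : Type*} {ρ : ℤ → Letter} {ν ζ χ : ι → ℝ ≃o ℝ}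

lemma containsCopies_closure (hρ : IsLabelling ρ)
    (hν : ∀ f, f ∈ Subgroup.closure (Set.range ν) ↔ InH f)
    (hζ : ∀ i, IsZeta ρ (ν i) (ζ i)) (hχ : ∀ i, IsChi ρ (ν i) (χ i)) :
    ContainsCopies (Subgroup.closure (Set.range ζ ∪ Set.range χ)) (orientation ρ) Set.univ := by
  have hνH (i : ι) : InH (ν i) := (hν _).1 (Subgroup.subset_closure ⟨i, rfl⟩)
  refine containsCopies_univ_of_generators (fun f => (hν f).2) (fun i => (hνH i).1.1) fun i c => ?_
  rcases Int.emod_two_eq_zero_or_one c with hc | hc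
  · have : copies (orientation ρ) c Set.univ (recentre (ν i) (hνH i).1.1) = χ i := by
      rw [eq_copies_of_isChi (h := (hνH i).1.1) hρ (hχ i)]
      exact assemble_congr hc fun _ _ => rfl
    exact this ▸ Subgroup.subset_closure (Or.inr ⟨i, rfl⟩)
  · have : copies (orientation ρ) c Set.univ (recentre (ν i) (hνH i).1.1) = ζ i := by
      rw [eq_copies_of_isZeta (h := (hνH i).1.1) hρ (hζ i)]
      exact assemble_congr hc fun _ _ => rfl
    exact this ▸ Subgroup.subset_closure (Or.inl ⟨i, rfl⟩)

lemma closure_le_fullCopies (hρ : IsLabelling ρ) (hν : ∀ i, InH (ν i))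
    (hζ : ∀ i, IsZeta ρ (ν i) (ζ i)) (hχ : ∀ i, IsChi ρ (ν i) (χ i)) :
    Subgroup.closure (Set.range ζ ∪ Set.range χ) ≤ fullCopies (orientation ρ) := by
  rw [Subgroup.closure_le]
  rintro _ (⟨i, rfl⟩ | ⟨i, rfl⟩)
  · exact eq_copies_of_isZeta hρ (hζ i) ▸ copies_recentre_mem_fullCopies _ _ (hν i)
  · exact eq_copies_of_isChi hρ (hχ i) ▸ copies_recentre_mem_fullCopies _ _ (hν i)

end

end LabelledLine

open LabelledLine in
theorem quasimorphisms_are_bounded_general {ι : Type*}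
    (ρ : ℤ → Letter) (hρ : IsLabelling ρ) (hrec : IsUniformlyRecurrent ρ)
    (hper : ∀ d : ℕ, 0 < d → ¬Function.Periodic ρ d)
    (ν ζ χ : ι → ℝ ≃o ℝ) (hν : ∀ f, f ∈ Subgroup.closure (Set.range ν) ↔ InH f)
    (hζ : ∀ i, IsZeta ρ (ν i) (ζ i)) (hχ : ∀ i, IsChi ρ (ν i) (χ i))
    (G : Subgroup (ℝ ≃o ℝ)) (hG : G = Subgroup.closure (Set.range ζ ∪ Set.range χ))
    (φ : G → ℝ) (hφ : ∃ D : ℝ, ∀ g h : G, |φ (g * h) - φ g - φ h| ≤ D) :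
    ∃ C : ℝ, ∀ g : G, |φ g| ≤ C := by
  obtain ⟨D, hD⟩ := hφ
  have hνH (i : ι) : InH (ν i) := (hν _).1 (Subgroup.subset_closure ⟨i, rfl⟩)
  obtain ⟨ψ, hψ, hψφ⟩ := exists_isHomogeneousQuasimorphism hD
  obtain ⟨C, hC⟩ := hψ.exists_abs_le hρ hrec hper (hG ▸ containsCopies_closure hρ hν hζ hχ)
    (hG ▸ closure_le_fullCopies hρ hνH hζ hχ)
  refine ⟨C + D, fun g => ?_⟩
  have := abs_sub_abs_le_abs_sub (φ g) (ψ g)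
  rw [abs_sub_comm] at this
  linarith [hC g, hψφ g]

/-- For a quasi-periodic labelling `ρ`, every quasimorphism on `G_ρ`
is bounded. -/
theorem quasimorphisms_are_bounded
    (ρ : ℤ → Letter) (hρ : IsQuasiPeriodic ρ)
    (H : Subgroup (ℝ ≃o ℝ)) (hH : ∀ f : ℝ ≃o ℝ, f ∈ H ↔ InH f)
    (ν₁ ν₂ ν₃ : ℝ ≃o ℝ) (hgen : Subgroup.closure {ν₁, ν₂, ν₃} = H)
    (ζ₁ ζ₂ ζ₃ χ₁ χ₂ χ₃ : ℝ ≃o ℝ)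
    (hζ₁ : IsZeta ρ ν₁ ζ₁) (hζ₂ : IsZeta ρ ν₂ ζ₂) (hζ₃ : IsZeta ρ ν₃ ζ₃)
    (hχ₁ : IsChi ρ ν₁ χ₁) (hχ₂ : IsChi ρ ν₂ χ₂) (hχ₃ : IsChi ρ ν₃ χ₃)
    (G : Subgroup (ℝ ≃o ℝ))
    (hG : G = Subgroup.closure {ζ₁, ζ₂, ζ₃, χ₁, χ₂, χ₃})
    (φ : ↥G → ℝ) (hφ : ∃ D : ℝ, ∀ g h : ↥G, |φ (g * h) - φ g - φ h| ≤ D) :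
    ∃ C : ℝ, ∀ g : ↥G, |φ g| ≤ C := by
  obtain ⟨hlabel, hrec, hinv⟩ := hρ
  have hrange (x y z : ℝ ≃o ℝ) : Set.range ![x, y, z] = {x, y, z} := by
    rw [Matrix.range_cons, Matrix.range_cons_cons_empty, Set.singleton_union]
  refine quasimorphisms_are_bounded_general ρ hlabel hrec
    (fun d hd => LabelledLine.not_periodic_of_forall_exists_wordInv hlabel hinv hd)
    ![ν₁, ν₂, ν₃] ![ζ₁, ζ₂, ζ₃] ![χ₁, χ₂, χ₃] (fun f => ?_) ?_ ?_ G ?_ φ hφ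
  · rw [hrange, hgen, hH]
  · simp [Fin.forall_fin_succ, hζ₁, hζ₂, hζ₃]
  · simp [Fin.forall_fin_succ, hχ₁, hχ₂, hχ₃]
  · rw [hG, hrange, hrange]
    simp only [Set.insert_union, Set.singleton_union]
end

section
/- Let G be a group and let ω be a bounded homogeneous 2-cocycle on G. Then ω is conjugation-invariant: for all f, g, h ∈ G, ω(h⁻¹fh, h⁻¹gh) = ω(f, g). -/
/-!
If `h * x = y * h`, put `φ(x, y) = ω(y, h) - ω(h, x)`. Three instances of the cocycle identity give
`φ(x * x', y * y') = φ(x, y) + φ(x', y') + ω(x, x') - ω(y, y')`: in a group, where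
`x = h⁻¹ * y * h`, the function `φ` is a primitive of the difference between the conjugate of `ω`
by `h` and `ω` itself. On powers the correction term vanishes by homogeneity, so
`φ(xⁿ, yⁿ) = n φ(x, y)`. As `φ` is bounded, `φ = 0`, and the identity reads `ω(x, x') = ω(y, y')`.
-/

theorem eq_zero_of_forall_norm_nsmul_le {V : Type*} [NormedAddCommGroup V] [NormSMulClass ℤ V]
    {v : V} {C : ℝ} (hv : ∀ n : ℕ, ‖n • v‖ ≤ C) : v = 0 := by
  by_contra hne
  obtain ⟨n, hn⟩ := exists_lt_nsmul (norm_pos_iff.2 hne) C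
  have norm_nsmul_eq : ‖n • v‖ = n • ‖v‖ := by
    simpa using norm_smul (n : ℤ) v
  exact (hn.trans_eq norm_nsmul_eq.symm).not_ge (hv n)

/-- The 2-cocycle identity for trivial coefficients in an abelian group, on a multiplicative
structure which need not be a group; the terms are arranged as in `IsBounded2Cocycle`. -/
def Is2Cocycle {M V : Type*} [Mul M] [AddCommGroup V] (ω : M → M → V) : Prop :=
  ∀ x y z : M, ω y z - ω (x * y) z + ω x (y * z) - ω x y = 0

/-- The primitive of the difference between the conjugate of `ω` by `h` and `ω`, used to show that
the two agree. It takes the conjugate `x` and the original `y` as separate arguments, meant to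
satisfy `SemiconjBy h x y`, so that no inverse of `h` is needed. -/
def conjPrimitive {M V : Type*} [Sub V] (ω : M → M → V) (h x y : M) : V :=
  ω y h - ω h x

theorem norm_conjPrimitive_le {M V : Type*} [SeminormedAddCommGroup V] {ω : M → M → V} {C : ℝ}
    (hC : ∀ x y, ‖ω x y‖ ≤ C) (h x y : M) : ‖conjPrimitive ω h x y‖ ≤ C + C :=
  norm_sub_le_of_le (hC y h) (hC h x)

namespace Is2Cocycle

theorem conjPrimitive_mul {S V : Type*} [Semigroup S] [AddCommGroup V] {ω : S → S → V}
    (hω : Is2Cocycle ω) {h x y x' y' : S} (hxy : SemiconjBy h x y) (hxy' : SemiconjBy h x' y') :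
    conjPrimitive ω h (x * x') (y * y') =
      conjPrimitive ω h x y + conjPrimitive ω h x' y' + (ω x x' - ω y y') := by
  have cocycle_right := hω y y' h
  have cocycle_middle := hω y h x'
  have cocycle_left := hω h x x'
  rw [hxy'.eq] at cocycle_middle
  rw [hxy.eq] at cocycle_left
  unfold conjPrimitive
  linear_combination (norm := abel) cocycle_middle - cocycle_right - cocycle_left

variable {M V : Type*} [Monoid M]

theorem conjPrimitive_one [AddCommGroup V] {ω : M → M → V} (hω : Is2Cocycle ω) (h : M) :
    conjPrimitive ω h 1 1 = 0 := by
  simpa using hω.conjPrimitive_mul (.one_right h) (.one_right h)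

theorem conjPrimitive_pow [AddCommGroup V] {ω : M → M → V} (hω : Is2Cocycle ω) {h x y : M}
    (hxy : SemiconjBy h x y) (hx : ∀ n : ℕ, ω (x ^ n) x = 0) (hy : ∀ n : ℕ, ω (y ^ n) y = 0)
    (n : ℕ) : conjPrimitive ω h (x ^ n) (y ^ n) = n • conjPrimitive ω h x y := by
  induction n with
  | zero => simpa using hω.conjPrimitive_one h
  | succ n ih =>
    rw [pow_succ, pow_succ, hω.conjPrimitive_mul (hxy.pow_right n) hxy, ih, hx, hy, sub_zero,
      add_zero, succ_nsmul]

theorem conjPrimitive_eq_zero [NormedAddCommGroup V] [NormSMulClass ℤ V] {ω : M → M → V}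
    (hω : Is2Cocycle ω) {C : ℝ} (hC : ∀ x y, ‖ω x y‖ ≤ C) {h x y : M} (hxy : SemiconjBy h x y)
    (hx : ∀ n : ℕ, ω (x ^ n) x = 0) (hy : ∀ n : ℕ, ω (y ^ n) y = 0) :
    conjPrimitive ω h x y = 0 :=
  eq_zero_of_forall_norm_nsmul_le fun n =>
    hω.conjPrimitive_pow hxy hx hy n ▸ norm_conjPrimitive_le hC h (x ^ n) (y ^ n)

end Is2Cocycle

theorem IsHomogeneous.apply_pow_self {G : Type*} [Group G] {ω : G → G → ℝ}
    (hω : IsHomogeneous ω) (g : G) (n : ℕ) : ω (g ^ n) g = 0 := by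
  simpa using hω g n 1

theorem semiconjBy_inv_mul_mul {G : Type*} [Group G] (h x : G) :
    SemiconjBy h (h⁻¹ * x * h) x := by
  simp [SemiconjBy, mul_assoc]

theorem homogeneous_cocycle_conj_invariant_general {M V : Type*} [Monoid M]
    [NormedAddCommGroup V] [NormSMulClass ℤ V] {ω : M → M → V} (hω : Is2Cocycle ω)
    {C : ℝ} (hC : ∀ x y, ‖ω x y‖ ≤ C) (hpow : ∀ (x : M) (n : ℕ), ω (x ^ n) x = 0)
    {h x y x' y' : M} (hxy : SemiconjBy h x y) (hxy' : SemiconjBy h x' y') :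
    ω x x' = ω y y' := by
  have primitive_zero {a b : M} (hab : SemiconjBy h a b) : conjPrimitive ω h a b = 0 :=
    hω.conjPrimitive_eq_zero hC hab (hpow a) (hpow b)
  have difference := hω.conjPrimitive_mul hxy hxy'
  rw [primitive_zero (hxy.mul_right hxy'), primitive_zero hxy, primitive_zero hxy', zero_add,
    zero_add] at difference
  exact sub_eq_zero.1 difference.symm

/-- A bounded homogeneous 2-cocycle is conjugation-invariant. -/
theorem homogeneous_cocycle_conj_invariant {G : Type*} [Group G] (ω : G → G → ℝ)
    (hb : IsBounded2Cocycle ω) (hh : IsHomogeneous ω) (f g h : G) :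
    ω (h⁻¹ * f * h) (h⁻¹ * g * h) = ω f g := by
  obtain ⟨⟨C, hC⟩, hω⟩ := hb
  exact homogeneous_cocycle_conj_invariant_general hω hC hh.apply_pow_self
    (semiconjBy_inv_mul_mul h f) (semiconjBy_inv_mul_mul h g)
end
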